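/- For i = 1, …, n−1 let f_i ∈ K[z_{i+1}, …, z_n], and let F ∈ R^{l×m} with l < m and rank r (1 ≤ r ≤ l), and suppose d_r(F) is associated to (z_1 − f_1)(z_2 − f_2)⋯(z_{n−1} − f_{n−1}) h, where h ∈ K[z_n]. Then F is equivalent to its Smith form if and only if J_k(F) = R for every k = 1, …, r. -/

import Mathlib

open MvPolynomial Matrix

section Defs

variable {A : Type*} [CommRing A]

/-- The set of all `k × k` minors of a matrix. -/
def minorsSet {l m : ℕ} (F : Matrix (Fin l) (Fin m) A) (k : ℕ) : Set A :=
  { p | ∃ (r : Fin k ↪ Fin l) (c : Fin k ↪ Fin m), p = (F.submatrix ⇑r ⇑c).det }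

/-- `d` is a greatest common divisor of the `k × k` minors of `F`. -/
def IsGcdMinors {l m : ℕ} (F : Matrix (Fin l) (Fin m) A) (k : ℕ) (d : A) : Prop :=
  (∀ p ∈ minorsSet F k, d ∣ p) ∧ ∀ e : A, (∀ p ∈ minorsSet F k, e ∣ p) → e ∣ d

/-- The ideal generated by the `k × k` reduced minors of `F`, relative to a gcd `d`
of the `k × k` minors (the reduced minors are the `v` with `d * v` a minor). -/
def reducedIdeal {l m : ℕ} (F : Matrix (Fin l) (Fin m) A) (k : ℕ) (d : A) : Ideal A :=
  Ideal.span { v : A | d * v ∈ minorsSet F k }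

/-- `J_k(F) = R`: the `k × k` reduced minors of `F` generate the unit ideal. -/
def JkUnit {l m : ℕ} (F : Matrix (Fin l) (Fin m) A) (k : ℕ) : Prop :=
  ∃ d : A, IsGcdMinors F k d ∧ reducedIdeal F k d = ⊤

/-- `F` has rank `r`: some `r × r` minor is nonzero and all `(r+1) × (r+1)` minors vanish. -/
def HasRank {l m : ℕ} (F : Matrix (Fin l) (Fin m) A) (r : ℕ) : Prop :=
  (∃ p ∈ minorsSet F r, p ≠ 0) ∧ ∀ p ∈ minorsSet F (r + 1), p = 0

/-- Equivalence of matrices: `F₁ = U * F₂ * V` for unimodular `U`, `V`. -/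
def MatEquiv {l m : ℕ} (F₁ F₂ : Matrix (Fin l) (Fin m) A) : Prop :=
  ∃ (U : Matrix (Fin l) (Fin l) A) (V : Matrix (Fin m) (Fin m) A),
    IsUnit U.det ∧ IsUnit V.det ∧ F₁ = U * F₂ * V

/-- The rectangular diagonal matrix with diagonal entries `Φ`. -/
def smithDiag {l m : ℕ} (Φ : Fin l → A) : Matrix (Fin l) (Fin m) A :=
  Matrix.of fun i j => if (i : ℕ) = (j : ℕ) then Φ i else 0

/-- `F` (of rank `r`) is equivalent to its Smith form: there are diagonal entries `Φ` such that
for each `i ≤ r` the product `Φ_1 ⋯ Φ_i` is a gcd of the `i × i` minors of `F`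
(i.e. `Φ_i = d_i(F)/d_{i-1}(F)`), `Φ_i = 0` for `i > r`, and `F` is equivalent to
the diagonal matrix with entries `Φ`. -/
def SmithEquivAt {l m : ℕ} (F : Matrix (Fin l) (Fin m) A) (r : ℕ) : Prop :=
  ∃ Φ : Fin l → A,
    (∀ i : Fin l, (i : ℕ) < r →
      IsGcdMinors F ((i : ℕ) + 1) (∏ j ∈ Finset.Iic i, Φ j)) ∧
    (∀ i : Fin l, r ≤ (i : ℕ) → Φ i = 0) ∧
    MatEquiv F (smithDiag Φ)

/-- `F` is equivalent to its Smith form. -/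
def EquivToSmith {l m : ℕ} (F : Matrix (Fin l) (Fin m) A) : Prop :=
  ∃ r : ℕ, HasRank F r ∧ SmithEquivAt F r

end Defs

/-!
The condition `J_k(F) = R` for all `k` says that the determinantal ideals of `F` are principal. This
is invariant under equivalence and holds for diagonal matrices with `Φ₁ ∣ Φ₂ ∣ ⋯`.

For the converse, the Quillen–Suslin theorem lets one split off kernels and cokernels whose relevant
determinantal ideal is the unit ideal up to a factor, so that `F` may be taken square with
determinant `d_r(F)`. If this determinant is some `h ∈ K[z_n]`, regard `F` over
`K[z_n][z_1, …, z_{n-1}]`. After division by `d_1(F)`, some vector in the image of `F` is unimodular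
modulo each of the finitely many maximal ideals containing `h`, because there `F` has a principal
nonzero ideal of maximal minors. By Suslin's lemma such a vector can be moved to the first basis
vector, and one splits off a diagonal entry.

A factor `p = z_i - f_i` is removed with the substitution `ε : z_i ↦ f_i`, which fixes the
remaining factors `q`. Modulo `p` the matrix `F` has a kernel, so `F` is equivalent to
`diag(1, …, 1, p) * G`, where `G` has a Smith form `D` by induction on the number of factors. Since
`D = ε D`, the transition matrices can be replaced by their images under `ε`, and then `F` has a
Smith form because its first rows have one.
-/

namespace SmithForm

section MinorIdeal

variable {A : Type*} [CommRing A] {ι κ ν : Type*}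

/-- The `k`-th determinantal ideal of `F`, generated by its `k × k` minors. Rows and columns are
selected by arbitrary functions, since a repeated row or column only contributes a zero minor. -/
def minorIdeal (F : Matrix ι κ A) (k : ℕ) : Ideal A :=
  Ideal.span {p | ∃ (f : Fin k → ι) (g : Fin k → κ), (F.submatrix f g).det = p}

lemma det_submatrix_mem_minorIdeal (F : Matrix ι κ A) {k : ℕ} (f : Fin k → ι) (g : Fin k → κ) :
    (F.submatrix f g).det ∈ minorIdeal F k :=
  Ideal.subset_span ⟨f, g, rfl⟩

lemma minorIdeal_le {F : Matrix ι κ A} {k : ℕ} {I : Ideal A}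
    (h : ∀ (f : Fin k → ι) (g : Fin k → κ), (F.submatrix f g).det ∈ I) : minorIdeal F k ≤ I := by
  refine Ideal.span_le.2 ?_
  rintro _ ⟨f, g, rfl⟩
  exact h f g

lemma minorIdeal_submatrix_le {ι' κ' : Type*} (F : Matrix ι κ A) (f : ι' → ι) (g : κ' → κ)
    (k : ℕ) : minorIdeal (F.submatrix f g) k ≤ minorIdeal F k :=
  minorIdeal_le fun _ _ => det_submatrix_mem_minorIdeal F _ _

lemma minorIdeal_submatrix_equiv {ι' κ' : Type*} (F : Matrix ι κ A) (e : ι' ≃ ι) (e' : κ' ≃ κ)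
    (k : ℕ) : minorIdeal (F.submatrix e e') k = minorIdeal F k :=
  le_antisymm (minorIdeal_submatrix_le _ _ _ _) <| by
    simpa using minorIdeal_submatrix_le (F.submatrix e e') e.symm e'.symm k

lemma minorIdeal_transpose_le (F : Matrix ι κ A) (k : ℕ) : minorIdeal Fᵀ k ≤ minorIdeal F k :=
  minorIdeal_le fun f g => by
    rw [← transpose_submatrix, det_transpose]
    exact det_submatrix_mem_minorIdeal F g f

lemma minorIdeal_transpose (F : Matrix ι κ A) (k : ℕ) : minorIdeal Fᵀ k = minorIdeal F k :=
  le_antisymm (minorIdeal_transpose_le F k) (minorIdeal_transpose_le Fᵀ k)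

lemma minorIdeal_mul_le_right [Fintype κ] (M : Matrix ι κ A) (F : Matrix κ ν A) (k : ℕ) :
    minorIdeal (M * F) k ≤ minorIdeal F k := by
  classical
  refine minorIdeal_le fun f g => ?_
  have hrows : ((M * F).submatrix f g).det =
      detRowAlternating.toMultilinearMap fun i => ∑ j, M (f i) j • fun c => F j (g c) := by
    change det _ = det _
    congr 1
    ext i c
    simp [mul_apply]
  rw [hrows, MultilinearMap.map_sum]
  refine Ideal.sum_mem _ fun r _ => ?_
  rw [MultilinearMap.map_smul_univ]
  exact Ideal.mul_mem_left _ _ (det_submatrix_mem_minorIdeal F r g)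

lemma minorIdeal_mul_le_left [Fintype κ] (M : Matrix ι κ A) (F : Matrix κ ν A) (k : ℕ) :
    minorIdeal (M * F) k ≤ minorIdeal M k := by
  rw [← minorIdeal_transpose, transpose_mul, ← minorIdeal_transpose M]
  exact minorIdeal_mul_le_right _ _ _

lemma minorIdeal_map {B : Type*} [CommRing B] (φ : A →+* B) (F : Matrix ι κ A) (k : ℕ) :
    minorIdeal (F.map φ) k = (minorIdeal F k).map φ := by
  have hminor (f : Fin k → ι) (g : Fin k → κ) :
      ((F.map φ).submatrix f g).det = φ (F.submatrix f g).det := by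
    rw [φ.map_det]
    rfl
  refine le_antisymm (minorIdeal_le fun f g => ?_) (Ideal.map_le_iff_le_comap.2 ?_)
  · rw [hminor]
    exact Ideal.mem_map_of_mem φ (det_submatrix_mem_minorIdeal F f g)
  · refine minorIdeal_le fun f g => ?_
    rw [Ideal.mem_comap, ← hminor]
    exact det_submatrix_mem_minorIdeal _ f g

lemma minorIdeal_zero (F : Matrix ι κ A) : minorIdeal F 0 = ⊤ := by
  rw [Ideal.eq_top_iff_one]
  simpa using det_submatrix_mem_minorIdeal F (k := 0) Fin.elim0 Fin.elim0

lemma minorIdeal_succ_le (F : Matrix ι κ A) (k : ℕ) : minorIdeal F (k + 1) ≤ minorIdeal F k :=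
  minorIdeal_le fun f g => by
    rw [det_succ_row_zero]
    exact Ideal.sum_mem _ fun j _ =>
      Ideal.mul_mem_left _ _ (det_submatrix_mem_minorIdeal F (f ∘ Fin.succ) (g ∘ j.succAbove))

lemma minorIdeal_antitone (F : Matrix ι κ A) : Antitone (minorIdeal F) :=
  antitone_nat_of_succ_le (minorIdeal_succ_le F)

lemma minorIdeal_eq_bot_of_card_lt [Fintype ι] (F : Matrix ι κ A) {k : ℕ}
    (h : Fintype.card ι < k) : minorIdeal F k = ⊥ := by
  refine eq_bot_iff.2 (minorIdeal_le fun f g => ?_)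
  obtain ⟨i, j, hij, hf⟩ := Fintype.exists_ne_map_eq_of_card_lt f (by simpa using h)
  exact det_zero_of_row_eq hij (funext fun c => by simp [hf])

lemma minorIdeal_eq_span_det {n : ℕ} (F : Matrix (Fin n) (Fin n) A) :
    minorIdeal F n = Ideal.span {F.det} := by
  refine le_antisymm (minorIdeal_le fun f g => ?_) ?_
  · have hsel : F.submatrix f g = (1 : Matrix (Fin n) (Fin n) A).submatrix f id * F *
        (1 : Matrix (Fin n) (Fin n) A).submatrix id g := by
      ext i j
      simp [mul_apply, one_apply]
    rw [hsel, det_mul, det_mul, Ideal.mem_span_singleton]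
    exact (Dvd.intro_left _ rfl).mul_right _
  · rw [Ideal.span_singleton_le_iff_mem]
    simpa using det_submatrix_mem_minorIdeal F (k := n) id id

lemma minorIdeal_smul (c : A) (F : Matrix ι κ A) (k : ℕ) :
    minorIdeal (c • F) k = Ideal.span {c ^ k} * minorIdeal F k := by
  have hminor (f : Fin k → ι) (g : Fin k → κ) :
      ((c • F).submatrix f g).det = c ^ k * (F.submatrix f g).det :=
    (det_smul (F.submatrix f g) c).trans (by rw [Fintype.card_fin])
  refine le_antisymm (minorIdeal_le fun f g => ?_) ?_
  · rw [hminor]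
    exact Ideal.mul_mem_mul (Ideal.mem_span_singleton_self _) (det_submatrix_mem_minorIdeal F f g)
  · rw [minorIdeal, Ideal.span_mul_span', Ideal.span_le]
    rintro _ ⟨_, rfl, _, ⟨f, g, rfl⟩, rfl⟩
    change c ^ k * _ ∈ _
    rw [← hminor]
    exact det_submatrix_mem_minorIdeal _ f g

lemma minorIdeal_fromRows_zero (F : Matrix ι κ A) (k : ℕ) :
    minorIdeal (fromRows F (0 : Matrix ν κ A)) k = minorIdeal F k := by
  refine le_antisymm (minorIdeal_le fun f g => ?_)
    (minorIdeal_submatrix_le (fromRows F (0 : Matrix ν κ A)) Sum.inl id k)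
  by_cases hf : ∃ i a, f i = Sum.inr a
  · obtain ⟨i, a, hi⟩ := hf
    rw [det_eq_zero_of_row_eq_zero i fun j => by simp [hi]]
    exact zero_mem _
  · have hinl (i) : ∃ a, f i = Sum.inl a := by
      rcases hi : f i with a | a
      · exact ⟨a, rfl⟩
      · exact absurd ⟨i, a, hi⟩ hf
    choose f' hf' using hinl
    obtain rfl : f = Sum.inl ∘ f' := funext hf'
    exact det_submatrix_mem_minorIdeal F f' g

lemma minorIdeal_fromCols_zero (F : Matrix ι κ A) (k : ℕ) :
    minorIdeal (fromCols F (0 : Matrix ι ν A)) k = minorIdeal F k := by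
  rw [← minorIdeal_transpose, transpose_fromCols, transpose_zero, minorIdeal_fromRows_zero,
    minorIdeal_transpose]

lemma det_submatrix_inr_mem_minorIdeal (F : Matrix ι κ A) {k : ℕ} {f : Fin k → Unit ⊕ ι}
    (hf : ∀ i, ∃ a, f i = Sum.inr a) (g : Fin k → Unit ⊕ κ) :
    ((fromBlocks (1 : Matrix Unit Unit A) 0 0 F).submatrix f g).det ∈ minorIdeal F k := by
  choose f' hf' using hf
  by_cases hg : ∃ j, g j = Sum.inl ()
  · obtain ⟨j, hj⟩ := hg
    rw [det_eq_zero_of_column_eq_zero j fun i => by simp [hf', hj]]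
    exact zero_mem _
  · have hg' : ∀ j, ∃ b, g j = Sum.inr b := fun j => by
      rcases hgj : g j with _ | b
      exacts [(hg ⟨j, hgj⟩).elim, ⟨b, rfl⟩]
    choose g' hg' using hg'
    convert det_submatrix_mem_minorIdeal F f' g' using 2
    ext i j
    simp [hf', hg']

lemma minorIdeal_fromBlocks_one_succ (F : Matrix ι κ A) (k : ℕ) :
    minorIdeal (fromBlocks (1 : Matrix Unit Unit A) 0 0 F) (k + 1) = minorIdeal F k := by
  refine le_antisymm (minorIdeal_le fun f g => ?_) (minorIdeal_le fun f g => ?_)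
  · by_cases hf : ∃ i, f i = Sum.inl ()
    · obtain ⟨i, hi⟩ := hf
      by_cases hrep : ∃ j, f (i.succAbove j) = Sum.inl ()
      · obtain ⟨j, hj⟩ := hrep
        rw [det_zero_of_row_eq (i.succAbove_ne j) (funext fun c => by simp [hi, hj])]
        exact zero_mem _
      · rw [det_succ_row _ i]
        refine Ideal.sum_mem _ fun c _ => Ideal.mul_mem_left _ _ ?_
        refine det_submatrix_inr_mem_minorIdeal F (f := f ∘ i.succAbove) (fun j => ?_) _
        rcases hfj : f (i.succAbove j) with _ | a
        exacts [(hrep ⟨j, hfj⟩).elim, ⟨a, hfj⟩]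
    · refine minorIdeal_succ_le F k (det_submatrix_inr_mem_minorIdeal F (fun i => ?_) g)
      rcases hfi : f i with _ | a
      exacts [(hf ⟨i, hfi⟩).elim, ⟨a, rfl⟩]
  · have hborder : ((fromBlocks (1 : Matrix Unit Unit A) 0 0 F).submatrix
        (Fin.cons (Sum.inl ()) (Sum.inr ∘ f) : Fin (k + 1) → _)
        (Fin.cons (Sum.inl ()) (Sum.inr ∘ g) : Fin (k + 1) → _)).det =
          (F.submatrix f g).det := by
      rw [det_succ_row_zero, Fin.sum_univ_succ]
      simp only [Fin.val_zero, pow_zero, submatrix_apply, Fin.cons_zero, fromBlocks_apply₁₁,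
        one_apply_eq, mul_one, Fin.succAbove_zero, submatrix_submatrix, Fin.cons_comp_succ, one_mul,
        Fin.val_succ, Fin.cons_succ, Function.comp_apply, fromBlocks_apply₁₂, Matrix.zero_apply,
        mul_zero, zero_mul, Finset.sum_const_zero, add_zero]
      rfl
    rw [← hborder]
    exact det_submatrix_mem_minorIdeal _ _ _

end MinorIdeal

section UnimodEquiv

variable {A : Type*} [CommRing A] {ι κ : Type*} [Fintype ι] [Fintype κ] [DecidableEq ι]
  [DecidableEq κ]

/-- Equivalence `F = U * G * V` with `U`, `V` unimodular, for arbitrary finite index types, so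
that it applies to block matrices; for `Fin l` and `Fin m` it is `MatEquiv`. -/
def UnimodEquiv (F G : Matrix ι κ A) : Prop :=
  ∃ (U : Matrix ι ι A) (V : Matrix κ κ A), IsUnit U.det ∧ IsUnit V.det ∧ F = U * G * V

namespace UnimodEquiv

lemma refl (F : Matrix ι κ A) : UnimodEquiv F F := ⟨1, 1, by simp, by simp, by simp⟩

lemma symm {F G : Matrix ι κ A} (h : UnimodEquiv F G) : UnimodEquiv G F := by
  obtain ⟨U, V, hU, hV, rfl⟩ := h
  refine ⟨U⁻¹, V⁻¹, isUnit_nonsing_inv_det U hU, isUnit_nonsing_inv_det V hV, ?_⟩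
  rw [Matrix.mul_assoc U G V, nonsing_inv_mul_cancel_left _ _ hU,
    mul_nonsing_inv_cancel_right _ _ hV]

lemma trans {F G H : Matrix ι κ A} (h : UnimodEquiv F G) (h' : UnimodEquiv G H) :
    UnimodEquiv F H := by
  obtain ⟨U, V, hU, hV, rfl⟩ := h
  obtain ⟨U', V', hU', hV', rfl⟩ := h'
  refine ⟨U * U', V' * V, ?_, ?_, by simp only [Matrix.mul_assoc]⟩
  · rw [det_mul]
    exact hU.mul hU'
  · rw [det_mul]
    exact hV'.mul hV

lemma mul_left {U : Matrix ι ι A} (hU : IsUnit U.det) (F : Matrix ι κ A) :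
    UnimodEquiv (U * F) F :=
  ⟨U, 1, hU, by simp, by simp⟩

lemma mul_right {V : Matrix κ κ A} (hV : IsUnit V.det) (F : Matrix ι κ A) :
    UnimodEquiv (F * V) F :=
  ⟨1, V, by simp, hV, by simp⟩

lemma smul {F G : Matrix ι κ A} (c : A) (h : UnimodEquiv F G) : UnimodEquiv (c • F) (c • G) := by
  obtain ⟨U, V, hU, hV, rfl⟩ := h
  exact ⟨U, V, hU, hV, by simp⟩

lemma map {B : Type*} [CommRing B] (φ : A →+* B) {F G : Matrix ι κ A} (h : UnimodEquiv F G) :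
    UnimodEquiv (F.map φ) (G.map φ) := by
  obtain ⟨U, V, hU, hV, rfl⟩ := h
  refine ⟨U.map φ, V.map φ, ?_, ?_, by simp [Matrix.map_mul]⟩
  · simpa [RingHom.map_det] using hU.map φ
  · simpa [RingHom.map_det] using hV.map φ

variable {ι' κ' : Type*} [Fintype ι'] [Fintype κ'] [DecidableEq ι'] [DecidableEq κ']

lemma submatrix {F G : Matrix ι κ A} (h : UnimodEquiv F G) (e : ι' ≃ ι) (e' : κ' ≃ κ) :
    UnimodEquiv (F.submatrix e e') (G.submatrix e e') := by
  obtain ⟨U, V, hU, hV, rfl⟩ := h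
  refine ⟨U.submatrix e e, V.submatrix e' e', by simpa, by simpa, ?_⟩
  rw [submatrix_mul_equiv, submatrix_mul_equiv]

lemma of_submatrix {F : Matrix ι κ A} {G : Matrix ι' κ' A} {e : ι' ≃ ι} {e' : κ' ≃ κ}
    (h : UnimodEquiv (F.submatrix e e') G) :
    UnimodEquiv F (G.submatrix e.symm e'.symm) := by
  simpa using h.submatrix e.symm e'.symm

lemma fromBlocks {F G : Matrix ι κ A} {F' G' : Matrix ι' κ' A} (h : UnimodEquiv F G)
    (h' : UnimodEquiv F' G') :
    UnimodEquiv (fromBlocks F 0 0 F') (fromBlocks G 0 0 G') := by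
  obtain ⟨U, V, hU, hV, rfl⟩ := h
  obtain ⟨U', V', hU', hV', rfl⟩ := h'
  refine ⟨Matrix.fromBlocks U 0 0 U', Matrix.fromBlocks V 0 0 V', ?_, ?_, ?_⟩
  · rw [det_fromBlocks_zero₂₁]
    exact hU.mul hU'
  · rw [det_fromBlocks_zero₂₁]
    exact hV.mul hV'
  · simp [fromBlocks_multiply]

lemma minorIdeal_le {F G : Matrix ι κ A} (h : UnimodEquiv F G) (k : ℕ) :
    minorIdeal F k ≤ minorIdeal G k := by
  obtain ⟨U, V, -, -, rfl⟩ := h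
  exact (minorIdeal_mul_le_left _ _ _).trans (minorIdeal_mul_le_right _ _ _)

lemma minorIdeal_eq {F G : Matrix ι κ A} (h : UnimodEquiv F G) (k : ℕ) :
    minorIdeal F k = minorIdeal G k :=
  le_antisymm (h.minorIdeal_le k) (h.symm.minorIdeal_le k)

end UnimodEquiv

end UnimodEquiv

section Splitting

/-- Every idempotent matrix over `A` factors as `P * Q` with `Q * P = 1`; equivalently, finitely
generated projective `A`-modules are free. -/
def IdempotentsSplit (A : Type*) [CommRing A] : Prop :=
  ∀ (l : ℕ) (E : Matrix (Fin l) (Fin l) A), E * E = E →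
    ∃ (r : ℕ) (P : Matrix (Fin l) (Fin r) A) (Q : Matrix (Fin r) (Fin l) A), P * Q = E ∧ Q * P = 1

lemma IdempotentsSplit.of_ringEquiv {A B : Type*} [CommRing A] [CommRing B] (e : A ≃+* B)
    (hA : IdempotentsSplit A) : IdempotentsSplit B := by
  intro l E hE
  obtain ⟨r, P, Q, hPQ, hQP⟩ := hA l (E.map e.symm) (by rw [← Matrix.map_mul, hE])
  refine ⟨r, P.map e, Q.map e, ?_, ?_⟩
  · rw [← Matrix.map_mul, hPQ]
    ext
    simp
  · rw [← Matrix.map_mul, hQP]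
    simp

/-- `Fin l` cut into its first `r` and its last `s` elements. -/
def blockEquiv {r s l : ℕ} (h : r + s = l) : Fin r ⊕ Fin s ≃ Fin l :=
  finSumFinEquiv.trans (finCongr h)

variable {A : Type*} [CommRing A] {ι κ : Type*}

lemma isUnit_det_submatrix_id_of_mul_eq_one [Fintype ι] [DecidableEq ι] [Fintype κ]
    {P : Matrix ι κ A} {Q : Matrix κ ι A} (h : P * Q = 1) (e : ι ≃ κ) :
    IsUnit (P.submatrix id e).det :=
  isUnit_det_of_right_inverse (B := Q.submatrix e id) <| by
    rw [submatrix_mul_equiv, h, submatrix_id_id]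

lemma IdempotentsSplit.exists_complement [Nontrivial A] (hA : IdempotentsSplit A) {k l : ℕ}
    {P : Matrix (Fin l) (Fin k) A} {Q : Matrix (Fin k) (Fin l) A} (hQP : Q * P = 1) :
    ∃ s, k + s = l ∧ ∃ (P' : Matrix (Fin l) (Fin s) A) (Q' : Matrix (Fin s) (Fin l) A),
      fromCols P P' * fromRows Q Q' = 1 ∧ fromRows Q Q' * fromCols P P' = 1 := by
  have hPQ : P * Q * (P * Q) = P * Q := by
    rw [Matrix.mul_assoc, ← Matrix.mul_assoc Q, hQP, Matrix.one_mul]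
  obtain ⟨s, P', Q', hPQ', hQP'⟩ := hA l (1 - P * Q) (by
    simp [Matrix.mul_sub, Matrix.sub_mul, hPQ])
  have hQP'_zero : Q * P' = 0 := by
    calc Q * P' = Q * (P' * Q') * P' := by rw [Matrix.mul_assoc, Matrix.mul_assoc, hQP',
          Matrix.mul_one]
      _ = 0 := by rw [hPQ', Matrix.mul_sub, ← Matrix.mul_assoc, hQP]; simp
  have hQ'P_zero : Q' * P = 0 := by
    calc Q' * P = Q' * (P' * Q' * P) := by rw [← Matrix.mul_assoc, ← Matrix.mul_assoc, hQP',
          Matrix.one_mul]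
      _ = 0 := by rw [hPQ', Matrix.sub_mul, Matrix.mul_assoc P, hQP]; simp
  have hinv : fromCols P P' * fromRows Q Q' = 1 := by
    rw [fromCols_mul_fromRows, hPQ', add_sub_cancel]
  have hinv' : fromRows Q Q' * fromCols P P' = 1 := by
    rw [fromRows_mul_fromCols, hQP, hQP', hQP'_zero, hQ'P_zero, fromBlocks_one]
  refine ⟨s, ?_, P', Q', hinv, hinv'⟩
  simpa using square_of_invertible _ _ hinv' hinv

lemma IdempotentsSplit.exists_isUnit_det_vecMul_eq_single [Nontrivial A] (hA : IdempotentsSplit A)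
    {r : ℕ} {a v : Fin (r + 1) → A} (hav : a ⬝ᵥ v = 1) :
    ∃ V : Matrix (Fin (r + 1)) (Fin (r + 1)) A,
      IsUnit V.det ∧ V.col 0 = v ∧ a ᵥ* V = Pi.single 0 1 := by
  let P : Matrix (Fin (r + 1)) (Fin 1) A := replicateCol _ v
  let Q : Matrix (Fin 1) (Fin (r + 1)) A := replicateRow _ a
  have hQP : Q * P = 1 := by
    ext i j
    rw [Subsingleton.elim i j, one_apply_eq]
    exact hav
  obtain ⟨s, hs, P', Q', hinv, hinv'⟩ := hA.exists_complement hQP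
  have hQP' : Q * P' = 0 := by
    rw [fromRows_mul_fromCols, ← fromBlocks_one] at hinv'
    exact (fromBlocks_inj.1 hinv').2.1
  have hzero : (blockEquiv hs).symm 0 = Sum.inl 0 := by
    rw [Equiv.symm_apply_eq]
    ext
    simp [blockEquiv]
  refine ⟨(fromCols P P').submatrix id (blockEquiv hs).symm,
    isUnit_det_submatrix_id_of_mul_eq_one hinv _, funext fun i => by simp [hzero, P, col], ?_⟩
  have haV (x : Fin 1 ⊕ Fin s) :
      (a ᵥ* (fromCols P P').submatrix id (blockEquiv hs).symm) (blockEquiv hs x) =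
        fromCols (Q * P) (Q * P') 0 x := by
    rw [← mul_fromCols]
    simp [vecMul, dotProduct, mul_apply, Q]
  ext j
  obtain ⟨x, rfl⟩ := (blockEquiv hs).surjective j
  rw [haV, hQP, hQP', ← (blockEquiv hs).apply_symm_apply 0, hzero]
  rcases x with x | x
  · simp [Subsingleton.elim x 0]
  · simp

lemma mul_adjugate_mul_eq_smul_of_minorIdeal_eq_bot [IsDomain A] {F : Matrix ι κ A} {r : ℕ}
    (hF : minorIdeal F (r + 1) = ⊥) {f : Fin r → ι} {g : Fin r → κ}
    (hdet : (F.submatrix f g).det ≠ 0) :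
    F.submatrix id g * (F.submatrix f g).adjugate * F.submatrix f id =
      (F.submatrix f g).det • F := by
  ext i j
  set M := F.submatrix f g
  let b : Matrix (Fin r) Unit A := F.submatrix f fun _ => j
  let c : Matrix Unit (Fin r) A := F.submatrix (fun _ => i) g
  let d : Matrix Unit Unit A := F.submatrix (fun _ => i) fun _ => j
  have hbordered : (fromBlocks M b c d).det = 0 := by
    let e : Fin (r + 1) ≃ Fin r ⊕ Unit := finSumFinEquiv.symm.trans
      (Equiv.sumCongr (Equiv.refl _) (Equiv.ofUnique _ _))
    have hsub : fromBlocks M b c d =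
        F.submatrix (Sum.elim f fun _ => i) (Sum.elim g fun _ => j) := by
      ext (_ | _) (_ | _) <;> rfl
    have hmem := det_submatrix_mem_minorIdeal F (k := r + 1)
      ((Sum.elim f fun _ => i) ∘ e) ((Sum.elim g fun _ => j) ∘ e)
    rw [hF, ← submatrix_submatrix, ← hsub, det_submatrix_equiv_self] at hmem
    simpa using hmem
  have hclear : fromBlocks M b c d * fromBlocks 1 (-(M.adjugate * b)) 0 (M.det • 1) =
      fromBlocks M 0 c (M.det • d - c * (M.adjugate * b)) := by
    rw [fromBlocks_multiply, Matrix.mul_neg, ← Matrix.mul_assoc M, mul_adjugate, Matrix.mul_neg]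
    simp only [Matrix.mul_one, Matrix.mul_zero, add_zero, smul_mul, Matrix.one_mul,
      Matrix.mul_smul, neg_add_cancel, neg_add_eq_sub]
  have hdet_clear := congrArg det hclear
  rw [det_mul, hbordered, zero_mul, det_fromBlocks_zero₁₂, eq_comm, mul_eq_zero,
    or_iff_right hdet, det_unique, Matrix.sub_apply, sub_eq_zero, ← Matrix.mul_assoc] at hdet_clear
  exact hdet_clear.symm

lemma submatrix_mul_adjugate_apply (F : Matrix ι κ A) {r : ℕ} (f : Fin r → ι) (g : Fin r → κ)
    (i : ι) (t : Fin r) :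
    (F.submatrix id g * (F.submatrix f g).adjugate) i t =
      (F.submatrix (Function.update f t i) g).det := by
  have hupdate : F.submatrix (Function.update f t i) g =
      (F.submatrix f g).updateRow t fun c => F i (g c) := by
    ext a b
    by_cases hat : a = t
    · subst hat
      simp
    · simp [hat, updateRow_ne]
  rw [hupdate, ← cramer_transpose_apply, cramer_eq_adjugate_mulVec, ← adjugate_transpose]
  simp [mul_apply, mulVec, dotProduct, mul_comm]

variable [IsDomain A]

lemma exists_mul_mul_eq_smul_of_mem_minorIdeal [Fintype ι] [Fintype κ] {F : Matrix ι κ A} {r : ℕ}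
    (hF : minorIdeal F (r + 1) = ⊥) {x : A} (hx : x ∈ minorIdeal F r) :
    ∃ G : Matrix κ ι A, F * G * F = x • F ∧ ∀ i j, (F * G) i j ∈ minorIdeal F r := by
  classical
  induction hx using Submodule.span_induction with
  | mem x hx =>
    obtain ⟨f, g, rfl⟩ := hx
    by_cases hdet : (F.submatrix f g).det = 0
    · exact ⟨0, by simp [hdet]⟩
    have hcols : F * (1 : Matrix κ κ A).submatrix id g = F.submatrix id g := by
      ext i j
      simp [mul_apply, one_apply]
    have hrows : (1 : Matrix ι ι A).submatrix f id * F = F.submatrix f id := by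
      ext i j
      simp [mul_apply, one_apply]
    refine ⟨(1 : Matrix κ κ A).submatrix id g * (F.submatrix f g).adjugate *
      (1 : Matrix ι ι A).submatrix f id, ?_, fun i j => ?_⟩
    · rw [← Matrix.mul_assoc, ← Matrix.mul_assoc, hcols, Matrix.mul_assoc _ _ F, hrows,
        mul_adjugate_mul_eq_smul_of_minorIdeal_eq_bot hF hdet]
    · rw [← Matrix.mul_assoc, ← Matrix.mul_assoc, hcols, mul_apply]
      refine Ideal.sum_mem _ fun t _ => Ideal.mul_mem_right _ _ ?_
      rw [submatrix_mul_adjugate_apply]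
      exact det_submatrix_mem_minorIdeal _ _ _
  | zero => exact ⟨0, by simp⟩
  | add x y _ _ ihx ihy =>
    obtain ⟨G, hG, hGmem⟩ := ihx
    obtain ⟨G', hG', hGmem'⟩ := ihy
    refine ⟨G + G', by rw [Matrix.mul_add, Matrix.add_mul, hG, hG', add_smul], fun i j => ?_⟩
    rw [Matrix.mul_add]
    exact add_mem (hGmem i j) (hGmem' i j)
  | smul c x _ ih =>
    obtain ⟨G, hG, hGmem⟩ := ih
    refine ⟨c • G, by rw [Matrix.mul_smul, Matrix.smul_mul, hG, smul_assoc], fun i j => ?_⟩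
    rw [Matrix.mul_smul]
    exact Ideal.mul_mem_left _ c (hGmem i j)

lemma exists_mul_eq_smul_idempotent [Fintype ι] [Fintype κ] {F : Matrix ι κ A} {r : ℕ} {d : A}
    (hFd : minorIdeal F r = Ideal.span {d}) (hd : d ≠ 0) (hF : minorIdeal F (r + 1) = ⊥) :
    ∃ (G : Matrix κ ι A) (E : Matrix ι ι A), F * G = d • E ∧ E * E = E ∧ E * F = F := by
  obtain ⟨G, hGF, hG⟩ :=
    exists_mul_mul_eq_smul_of_mem_minorIdeal hF (hFd ▸ Ideal.mem_span_singleton_self d)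
  simp only [hFd, Ideal.mem_span_singleton] at hG
  choose E hE using hG
  have hFG : F * G = d • of E := by
    ext i j
    simp [hE]
  have hEF : of E * F = F :=
    smul_right_injective _ hd (by simp only [← Matrix.smul_mul, ← hFG, hGF])
  refine ⟨G, of E, hFG, smul_right_injective _ hd ?_, hEF⟩
  simp only [← Matrix.mul_smul, ← hFG]
  rw [← Matrix.mul_assoc, hEF]

lemma IdempotentsSplit.exists_factorization (hA : IdempotentsSplit A) {l m r : ℕ} {d : A}
    {F : Matrix (Fin l) (Fin m) A} (hFd : minorIdeal F r = Ideal.span {d}) (hd : d ≠ 0)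
    (hF : minorIdeal F (r + 1) = ⊥) :
    ∃ (P : Matrix (Fin l) (Fin r) A) (Q : Matrix (Fin r) (Fin l) A) (G : Matrix (Fin m) (Fin r) A),
      Q * P = 1 ∧ P * (Q * F) = F ∧ F * G = d • P := by
  obtain ⟨G, E, hFG, hE, hEF⟩ := exists_mul_eq_smul_idempotent hFd hd hF
  obtain ⟨ρ, P, Q, rfl, hQP⟩ := hA l E hE
  have hFP : F * (G * P) = d • P := by
    rw [← Matrix.mul_assoc, hFG, Matrix.smul_mul, Matrix.mul_assoc, hQP, Matrix.mul_one]
  have hρr : ρ ≤ r := by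
    by_contra! hlt
    have hunit : Ideal.span {d ^ ρ} ≤ minorIdeal F ρ := by
      have hdet : Q * (F * (G * P)) = d • (1 : Matrix (Fin ρ) (Fin ρ) A) := by
        rw [hFP, Matrix.mul_smul, hQP]
      have hspan := minorIdeal_eq_span_det (d • (1 : Matrix (Fin ρ) (Fin ρ) A))
      rw [det_smul, det_one, mul_one, Fintype.card_fin] at hspan
      rw [← hspan, ← hdet]
      exact (minorIdeal_mul_le_right _ _ _).trans (minorIdeal_mul_le_left _ _ _)
    have hbot := hunit.trans (minorIdeal_antitone F hlt)
    rw [hF, le_bot_iff, Ideal.span_singleton_eq_bot] at hbot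
    exact pow_ne_zero _ hd hbot
  have hrρ : r ≤ ρ := by
    by_contra! hlt
    have hbot := minorIdeal_mul_le_right P (Q * F) r
    rw [← Matrix.mul_assoc, hEF, hFd, minorIdeal_eq_bot_of_card_lt (Q * F) (by simpa using hlt),
      le_bot_iff, Ideal.span_singleton_eq_bot] at hbot
    exact hd hbot
  obtain rfl := le_antisymm hρr hrρ
  exact ⟨P, Q, G * P, hQP, by rw [← Matrix.mul_assoc, hEF], hFP⟩

lemma IdempotentsSplit.exists_mul_eq_fromRows_zero (hA : IdempotentsSplit A) {l m r : ℕ} {d : A}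
    {F : Matrix (Fin l) (Fin m) A} (hFd : minorIdeal F r = Ideal.span {d}) (hd : d ≠ 0)
    (hF : minorIdeal F (r + 1) = ⊥) :
    ∃ (s : ℕ) (hs : r + s = l) (U : Matrix (Fin l) (Fin l) A) (G : Matrix (Fin r) (Fin m) A),
      IsUnit U.det ∧ (U * F).submatrix (blockEquiv hs) id = fromRows G 0 := by
  obtain ⟨P, Q, -, hQP, hPQF, -⟩ := hA.exists_factorization hFd hd hF
  obtain ⟨s, hs, P', Q', hinv, hinv'⟩ := hA.exists_complement hQP
  have hQ'P : Q' * P = 0 := by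
    rw [fromRows_mul_fromCols, ← fromBlocks_one] at hinv'
    exact (fromBlocks_inj.1 hinv').2.2.1
  refine ⟨s, hs, (fromRows Q Q').submatrix (blockEquiv hs).symm id, Q * F, ?_, ?_⟩
  · refine isUnit_det_of_left_inverse (B := (fromCols P P').submatrix id (blockEquiv hs).symm) ?_
    rw [submatrix_mul_equiv, hinv, submatrix_id_id]
  · have hrows : fromRows Q Q' * F = fromRows (Q * F) 0 := by
      rw [fromRows_mul, ← hPQF, ← Matrix.mul_assoc Q', hQ'P, Matrix.zero_mul, hPQF]
    rw [← hrows]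
    ext i j
    simp [mul_apply]

lemma IdempotentsSplit.exists_mul_eq_fromCols_zero (hA : IdempotentsSplit A) {l m r : ℕ} {d : A}
    {F : Matrix (Fin l) (Fin m) A} (hFd : minorIdeal F r = Ideal.span {d}) (hd : d ≠ 0)
    (hF : minorIdeal F (r + 1) = ⊥) :
    ∃ (s : ℕ) (hs : r + s = m) (V : Matrix (Fin m) (Fin m) A) (G : Matrix (Fin l) (Fin r) A),
      IsUnit V.det ∧ (F * V).submatrix id (blockEquiv hs) = fromCols G 0 := by
  obtain ⟨s, hs, U, G, hU, hUF⟩ := hA.exists_mul_eq_fromRows_zero (F := Fᵀ)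
    (by rwa [minorIdeal_transpose]) hd (by rwa [minorIdeal_transpose])
  refine ⟨s, hs, Uᵀ, Gᵀ, by rwa [det_transpose], ?_⟩
  simpa [transpose_submatrix, transpose_mul, transpose_fromRows] using congrArg Matrix.transpose hUF

lemma IdempotentsSplit.exists_mulVec_unimodular (hA : IdempotentsSplit A) {l m r : ℕ}
    {F : Matrix (Fin l) (Fin m) A} (hFr : minorIdeal F (r + 1) = ⊤)
    (hF : minorIdeal F (r + 2) = ⊥) :
    ∃ v : Fin m → A, Ideal.span (Set.range (F *ᵥ v)) = ⊤ := by
  obtain ⟨P, Q, G, hQP, -, hFG⟩ := hA.exists_factorization (d := 1)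
    (by rw [hFr, Ideal.span_singleton_one]) one_ne_zero hF
  rw [one_smul] at hFG
  refine ⟨fun i => G i 0, (Ideal.eq_top_iff_one _).2 ?_⟩
  have hone : ∑ i, Q 0 i * P i 0 = 1 := by rw [← mul_apply, hQP, one_apply_eq]
  rw [← hone]
  refine Ideal.sum_mem _ fun i _ => Ideal.mul_mem_left _ _ (Ideal.subset_span ⟨i, ?_⟩)
  rw [← hFG]
  rfl

end Splitting

section SLEquivMod

variable {A : Type*} [CommRing A] {ι : Type*} [Fintype ι]

lemma mulVec_apply_mem {J : Ideal A} (U : Matrix ι ι A) {x : ι → A} (hx : ∀ i, x i ∈ J) (i : ι) :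
    (U *ᵥ x) i ∈ J :=
  Ideal.sum_mem _ fun j _ => Ideal.mul_mem_left _ _ (hx j)

variable [DecidableEq ι]

/-- Some matrix of determinant one carries `v` to `w` modulo `J`. -/
def SLEquivMod (J : Ideal A) (v w : ι → A) : Prop :=
  ∃ U : Matrix ι ι A, U.det = 1 ∧ ∀ i, (U *ᵥ v) i - w i ∈ J

namespace SLEquivMod

variable {J : Ideal A} {u v w : ι → A}

lemma of_sub_mem (h : ∀ i, v i - w i ∈ J) : SLEquivMod J v w :=
  ⟨1, det_one, by simpa using h⟩

lemma refl (J : Ideal A) (v : ι → A) : SLEquivMod J v v := of_sub_mem (by simp)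

lemma trans (h : SLEquivMod J u v) (h' : SLEquivMod J v w) : SLEquivMod J u w := by
  obtain ⟨U, hU, h⟩ := h
  obtain ⟨V, hV, h'⟩ := h'
  refine ⟨V * U, by rw [det_mul, hU, hV, one_mul], fun i => ?_⟩
  have hV := mulVec_apply_mem V (x := U *ᵥ u - v) h i
  rw [mulVec_sub, mulVec_mulVec] at hV
  simpa using J.add_mem hV (h' i)

lemma symm (h : SLEquivMod J v w) : SLEquivMod J w v := by
  obtain ⟨U, hU, h⟩ := h
  refine ⟨U.adjugate, by rw [det_adjugate, hU, one_pow], fun i => ?_⟩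
  have hadj := mulVec_apply_mem U.adjugate (x := U *ᵥ v - w) h i
  rw [mulVec_sub, mulVec_mulVec, adjugate_mul, hU, one_smul, one_mulVec] at hadj
  simpa using J.neg_mem hadj

lemma mono {J' : Ideal A} (hJ : J ≤ J') (h : SLEquivMod J v w) : SLEquivMod J' v w := by
  obtain ⟨U, hU, h⟩ := h
  exact ⟨U, hU, fun i => hJ (h i)⟩

lemma map {B : Type*} [CommRing B] (φ : A →+* B) (h : SLEquivMod J v w) :
    SLEquivMod (J.map φ) (φ ∘ v) (φ ∘ w) := by
  obtain ⟨U, hU, h⟩ := h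
  refine ⟨U.map φ, ?_, fun i => ?_⟩
  · rw [← RingHom.mapMatrix_apply, ← RingHom.map_det, hU, map_one]
  · have hφ := Ideal.mem_map_of_mem φ (h i)
    rwa [map_sub, RingHom.map_mulVec] at hφ

lemma span_le (h : SLEquivMod J v w) :
    Ideal.span (Set.range w) ≤ Ideal.span (Set.range v) ⊔ J := by
  obtain ⟨U, -, h⟩ := h
  rw [Ideal.span_le]
  rintro _ ⟨i, rfl⟩
  rw [← sub_sub_cancel ((U *ᵥ v) i) (w i)]
  refine Ideal.sub_mem _ (Ideal.mem_sup_left ?_) (Ideal.mem_sup_right (h i))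
  exact mulVec_apply_mem (J := Ideal.span (Set.range v)) U (fun j => Ideal.subset_span ⟨j, rfl⟩) i

lemma span_sup_eq_top (h : SLEquivMod J v w) (hv : Ideal.span (Set.range v) ⊔ J = ⊤) :
    Ideal.span (Set.range w) ⊔ J = ⊤ := by
  rw [eq_top_iff, ← hv]
  exact sup_le h.symm.span_le le_sup_right

lemma add_smul (J : Ideal A) (v : ι → A) {c d : ι → A} (hdc : d ⬝ᵥ c = 0) :
    SLEquivMod J v (v + (d ⬝ᵥ v) • c) := by
  refine ⟨1 + vecMulVec c d, ?_, fun i => ?_⟩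
  · rw [vecMulVec_eq Unit, det_one_add_replicateCol_mul_replicateRow, hdc, add_zero]
  · rw [add_mulVec, one_mulVec, vecMulVec_mulVec, op_smul_eq_smul, sub_self]
    exact J.zero_mem

lemma update_add (J : Ideal A) (v : ι → A) {i : ι} {y : A} (hy : y ∈ Ideal.span (v '' {i}ᶜ)) :
    SLEquivMod J v (Function.update v i (v i + y)) := by
  obtain ⟨d, rfl⟩ : ∃ d : ι → A, y = Function.update d i 0 ⬝ᵥ v := by
    induction hy using Submodule.span_induction with
    | mem y hy =>
      obtain ⟨j, hj, rfl⟩ := hy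
      exact ⟨Pi.single j 1, by rw [Function.update_eq_self_iff.2 (Pi.single_eq_of_ne' hj 1).symm,
        single_one_dotProduct]⟩
    | zero => exact ⟨0, by simp [Function.update_eq_self_iff.2]⟩
    | add y z _ _ hy hz =>
      obtain ⟨d, rfl⟩ := hy
      obtain ⟨e, rfl⟩ := hz
      exact ⟨d + e, by rw [← add_dotProduct, ← Function.update_add, add_zero]⟩
    | smul a y _ hy =>
      obtain ⟨d, rfl⟩ := hy
      exact ⟨a • d, by rw [← smul_dotProduct, ← Function.update_smul, smul_zero]⟩
  convert SLEquivMod.add_smul J v (c := Pi.single i 1) (d := Function.update d i 0) (by simp)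
    using 1
  ext j
  by_cases hj : j = i
  · subst hj
    simp
  · simp [hj]

lemma single_of_sub_one_mem {i : ι} (hv : v i - 1 ∈ J) : SLEquivMod J v (Pi.single i 1) := by
  refine (SLEquivMod.add_smul J v (c := Function.update (-v) i 0) (d := Pi.single i 1)
    (by simp)).trans (of_sub_mem fun j => ?_)
  by_cases hj : j = i
  · subst hj
    simpa using hv
  · convert J.mul_mem_left (-v j) hv using 1
    simp [hj]
    ring

lemma single_of_span_sup_eq_top {i j : ι} (hij : i ≠ j) (hv : Ideal.span {v i} ⊔ J = ⊤) :
    SLEquivMod J v (Pi.single j 1) := by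
  obtain ⟨x, y, hy, hxy⟩ := Ideal.mem_span_singleton_sup.1 ((Ideal.eq_top_iff_one _).1 hv)
  have hmem : (1 - v j) * (x * v i) ∈ Ideal.span (v '' {j}ᶜ) :=
    Ideal.mul_mem_left _ _ (Ideal.mul_mem_left _ _ (Ideal.subset_span ⟨i, hij, rfl⟩))
  refine (update_add J v hmem).trans (single_of_sub_one_mem ?_)
  rw [Function.update_self, eq_sub_of_add_eq hxy]
  convert J.mul_mem_left (v j - 1) hy using 1
  ring

lemma reindex {κ : Type*} [Fintype κ] [DecidableEq κ] (e : κ ≃ ι)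
    (h : SLEquivMod J (v ∘ e) (w ∘ e)) : SLEquivMod J v w := by
  obtain ⟨U, hU, h⟩ := h
  refine ⟨U.submatrix e.symm e.symm, by rw [det_submatrix_equiv_self, hU], fun i => ?_⟩
  have hi := h (e.symm i)
  rw [Function.comp_apply, e.apply_symm_apply] at hi
  rwa [submatrix_mulVec_equiv]

lemma of_algEquiv {R B : Type*} [CommRing R] [CommRing B] [Algebra R A] [Algebra R B]
    (e : A ≃ₐ[R] B) {H : Ideal R}
    (h : SLEquivMod (H.map (algebraMap R B)) (e ∘ v) (e ∘ w)) :
    SLEquivMod (H.map (algebraMap R A)) v w := by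
  have hcomp : (e.symm : B →+* A).comp (algebraMap R B) = algebraMap R A :=
    RingHom.ext e.symm.commutes
  have hmap := h.map (e.symm : B →+* A)
  rw [Ideal.map_map, hcomp] at hmap
  convert hmap using 1 <;> ext <;> simp

/-- The invertible matrix `N = !![v₀, -h; v₁, g]` of determinant `c` is congruent modulo `c` to its
primed analogue `N'`, so that `N' * N⁻¹` has entries in `A`. -/
lemma of_dvd_sub [IsDomain A] {σ : Type*} [Fintype σ] [DecidableEq σ] (J : Ideal A)
    {v v' : Fin 2 ⊕ σ → A} {g g' h h' c : A} (hc : c ≠ 0)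
    (hv : g * v (.inl 0) + h * v (.inl 1) = c) (hv' : g' * v' (.inl 0) + h' * v' (.inl 1) = c)
    (hg : c ∣ g' - g) (hh : c ∣ h' - h) (hvv' : ∀ i, c ∣ v' i - v i) : SLEquivMod J v v' := by
  obtain ⟨qg, hqg⟩ := hg
  obtain ⟨qh, hqh⟩ := hh
  choose q hq using hvv'
  let N : Matrix (Fin 2) (Fin 2) A := !![v (.inl 0), -h; v (.inl 1), g]
  let N' : Matrix (Fin 2) (Fin 2) A := !![v' (.inl 0), -h'; v' (.inl 1), g']
  let Q : Matrix (Fin 2) (Fin 2) A := !![q (.inl 0), -qh; q (.inl 1), qg]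
  have hN : N.det = c := by rw [← hv, det_fin_two_of]; ring
  have hN' : N'.det = c := by rw [← hv', det_fin_two_of]; ring
  have hNN' : N' = N + c • Q := by
    ext i j
    fin_cases i <;> fin_cases j <;> simp [N, N', Q] <;> grind
  have hmul : (1 + Q * N.adjugate) * N = N' := by
    rw [Matrix.add_mul, Matrix.one_mul, Matrix.mul_assoc, adjugate_mul, hN, Matrix.mul_smul,
      Matrix.mul_one, hNN']
  have hdet : (1 + Q * N.adjugate).det = 1 := by
    have hmul_det := congrArg Matrix.det hmul
    rw [det_mul, hN, hN'] at hmul_det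
    exact mul_right_cancel₀ hc (hmul_det.trans (one_mul c).symm)
  refine ⟨fromBlocks (1 + Q * N.adjugate) 0 (of fun i => q (.inr i) • ![g, h]) 1, ?_, fun i => ?_⟩
  · rw [det_fromBlocks_zero₁₂, hdet, det_one, one_mul]
  convert J.zero_mem
  rw [sub_eq_zero, fromBlocks_mulVec]
  rcases i with i | i
  · have hcol : v ∘ Sum.inl = N.col 0 := by
      ext j
      fin_cases j <;> rfl
    rw [Sum.elim_inl, zero_mulVec, add_zero, hcol]
    calc ((1 + Q * N.adjugate) *ᵥ N.col 0) i = N' i 0 := congrFun (congrFun hmul i) 0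
      _ = v' (.inl i) := by fin_cases i <;> rfl
  · have hlast := hq (.inr i)
    rw [← hv] at hlast
    simp [mulVec, dotProduct, Fin.sum_univ_two]
    linear_combination -hlast

end SLEquivMod

end SLEquivMod

section StableRange

variable {A : Type*} [CommRing A]

lemma exists_mem_add_notMem {τ : Type*} [Finite τ] {M : τ → Ideal A}
    (hM : Pairwise fun i j => IsCoprime (M i) (M j)) {I : Ideal A} {a : A}
    (h : ∀ j, a ∈ M j → ¬ I ≤ M j) : ∃ y ∈ I, ∀ j, a + y ∉ M j := by
  classical
  cases nonempty_fintype τ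
  have hlocal (j : τ) : ∃ y ∈ I, a + y ∉ M j := by
    by_cases ha : a ∈ M j
    · obtain ⟨y, hyI, hy⟩ := SetLike.not_le_iff_exists.1 (h j ha)
      exact ⟨y, hyI, fun hay => hy ((add_mem_cancel_left ha).1 hay)⟩
    · exact ⟨0, I.zero_mem, by rwa [add_zero]⟩
  choose y hyI hy using hlocal
  choose x hx using fun j => Ideal.exists_forall_sub_mem_ideal hM (Pi.single j (1 : A))
  refine ⟨∑ j, x j * y j, I.sum_mem fun j _ => I.mul_mem_left _ (hyI j), fun i hi => hy i ?_⟩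
  have hsum : ∑ j, x j * y j - y i ∈ M i := by
    have hterm (j : τ) : (x j - (Pi.single j (1 : A) : τ → A) i) * y j ∈ M i :=
      (M i).mul_mem_right _ (hx j i)
    convert (M i).sum_mem fun j (_ : j ∈ Finset.univ) => hterm j using 1
    simp [sub_mul, Pi.single_apply]
  convert (M i).sub_mem hi hsum using 1
  ring

lemma exists_mem_isUnit_add [Finite (MaximalSpectrum A)] {I : Ideal A} {a : A}
    (h : Ideal.span {a} ⊔ I = ⊤) : ∃ y ∈ I, IsUnit (a + y) := by
  have hcoprime : Pairwise fun P Q : MaximalSpectrum A => IsCoprime P.asIdeal Q.asIdeal :=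
    fun P Q hPQ => Ideal.isCoprime_iff_sup_eq.2 <|
      P.isMaximal.coprime_of_ne Q.isMaximal fun h => hPQ (MaximalSpectrum.ext h)
  obtain ⟨y, hyI, hy⟩ := exists_mem_add_notMem (I := I) (a := a) hcoprime fun P ha hI =>
    P.isMaximal.ne_top <| top_le_iff.1 <|
      h.ge.trans (sup_le ((Ideal.span_singleton_le_iff_mem _).2 ha) hI)
  refine ⟨y, hyI, not_not.1 fun hunit => ?_⟩
  obtain ⟨P, hP, hmem⟩ := exists_max_ideal_of_mem_nonunits hunit
  exact hy ⟨P, hP⟩ hmem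

lemma exists_mem_span_add_sup_eq_top {I J : Ideal A} [Finite (MaximalSpectrum (A ⧸ J))] {a : A}
    (h : Ideal.span {a} ⊔ I ⊔ J = ⊤) : ∃ y ∈ I, Ideal.span {a + y} ⊔ J = ⊤ := by
  have hmk {L : Ideal A} : L.map (Ideal.Quotient.mk J) = ⊤ ↔ L ⊔ J = ⊤ := by
    rw [← Ideal.comap_eq_top_iff (f := Ideal.Quotient.mk J),
      Ideal.comap_map_of_surjective _ Ideal.Quotient.mk_surjective, ← RingHom.ker_eq_comap_bot,
      Ideal.mk_ker]
  rw [← hmk, Ideal.map_sup, Ideal.map_span, Set.image_singleton] at h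
  obtain ⟨_, hyI, hunit⟩ := exists_mem_isUnit_add h
  obtain ⟨y, hy, rfl⟩ := (Ideal.mem_map_iff_of_surjective _ Ideal.Quotient.mk_surjective).1 hyI
  refine ⟨y, hy, ?_⟩
  rwa [← hmk, Ideal.map_span, Set.image_singleton, map_add, Ideal.span_singleton_eq_top]

end StableRange

section Suslin

open scoped Polynomial

variable {A : Type*} [CommRing A]

lemma sub_dvd_comp_sub_comp (p a b : A[X]) : a - b ∣ p.comp a - p.comp b := by
  have h := Polynomial.sub_dvd_eval_sub a b (p.map Polynomial.C)
  rwa [Polynomial.eval_map, Polynomial.eval_map] at h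

lemma isArtinianRing_quotient_of_monic {p : A[X]} (hp : p.Monic) {m : Ideal A}
    [m.IsMaximal] : IsArtinianRing (A[X] ⧸ (m.map Polynomial.C ⊔ Ideal.span {p})) := by
  set J := m.map Polynomial.C ⊔ Ideal.span {p}
  let _ := Ideal.Quotient.field m
  have hker : ∀ a ∈ m, algebraMap A (A[X] ⧸ J) a = 0 := fun a ha =>
    Ideal.Quotient.eq_zero_iff_mem.2 (Ideal.mem_sup_left (Ideal.mem_map_of_mem Polynomial.C ha))
  have := hp.finite_quotient
  have hfin : Module.Finite A (A[X] ⧸ J) :=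
    .of_surjective (Ideal.Quotient.factorₐ A (le_sup_right : Ideal.span {p} ≤ J)).toLinearMap
      (Ideal.Quotient.factor_surjective le_sup_right)
  let φ : A ⧸ m →+* A[X] ⧸ J :=
    Ideal.Quotient.lift m (algebraMap A (A[X] ⧸ J)) hker
  have hφ : φ.Finite := RingHom.Finite.of_comp_finite (f := Ideal.Quotient.mk m) <| by
    rw [Ideal.Quotient.lift_comp_mk]
    exact RingHom.finite_algebraMap.2 hfin
  algebraize [φ]
  exact IsArtinianRing.of_finite (A ⧸ m) _

-- Nakayama's lemma for the finite `A`-module `A[X] ⧸ (p, w)`.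
lemma exists_C_mem_span_of_monic {p w : A[X]} (hp : p.Monic) {m : Ideal A}
    (hm : Ideal.span {p, w} ⊔ m.map Polynomial.C = ⊤) :
    ∃ c : A, c - 1 ∈ m ∧ Polynomial.C c ∈ Ideal.span {p, w} := by
  set I := Ideal.span {p, w}
  have hle : Ideal.span {p} ≤ I := Ideal.span_mono (by simp)
  have := hp.finite_quotient
  have hfin : Module.Finite A (A[X] ⧸ I) :=
    .of_surjective (Ideal.Quotient.factorₐ A hle).toLinearMap
      (Ideal.Quotient.factor_surjective hle)
  have htop : m.map (algebraMap A (A[X] ⧸ I)) = ⊤ := by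
    rw [IsScalarTower.algebraMap_eq A A[X], ← Ideal.map_map, Ideal.Quotient.algebraMap_eq,
      Polynomial.algebraMap_eq, ← Ideal.comap_eq_top_iff (f := Ideal.Quotient.mk I),
      Ideal.comap_map_of_surjective _ Ideal.Quotient.mk_surjective, ← RingHom.ker_eq_comap_bot,
      Ideal.mk_ker, sup_comm, hm]
  obtain ⟨c, hcm, hc⟩ := Submodule.exists_sub_one_mem_and_smul_eq_zero_of_fg_of_le_smul m
    (⊤ : Submodule A (A[X] ⧸ I)) hfin.1 (by
      rw [Ideal.smul_top_eq_map, htop, Submodule.restrictScalars_top])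
  refine ⟨c, hcm, ?_⟩
  rw [← Ideal.Quotient.eq_zero_iff_mem, ← hc 1 trivial]
  exact Algebra.algebraMap_eq_smul_one (A := A[X] ⧸ I) c

variable {σ : Type*} [Fintype σ] [DecidableEq σ]

/-- The constants `c` such that the values of `v` at any two points differing by a multiple of `c`
are related by a matrix of determinant one. -/
def translationIdeal (v : Fin 2 ⊕ σ → A[X]) : Ideal A where
  carrier := {c | ∀ b z : A[X],
    SLEquivMod ⊥ (fun i => (v i).comp b) fun i => (v i).comp (b + Polynomial.C c * z)}
  add_mem' {c c'} hc hc' b z := by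
    have h := (hc b z).trans (hc' (b + Polynomial.C c * z) z)
    rwa [add_assoc, ← add_mul, ← map_add] at h
  zero_mem' b z := by
    simpa using SLEquivMod.refl _ _
  smul_mem' a c hc b z := by
    have h := hc b (Polynomial.C a * z)
    rwa [← mul_assoc, ← map_mul, mul_comm c a] at h

variable [IsDomain A]

lemma mem_translationIdeal {v : Fin 2 ⊕ σ → A[X]} {y : A[X]} {c : A}
    (hy : y ∈ Ideal.span (v '' {.inl 1}ᶜ))
    (hc : Polynomial.C c ∈ Ideal.span {v (.inl 0), v (.inl 1) + y}) : c ∈ translationIdeal v := by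
  intro b z
  by_cases hc0 : c = 0
  · simpa [hc0] using SLEquivMod.refl _ _
  obtain ⟨g, h, hgh⟩ := Ideal.mem_span_pair.1 hc
  have hupdate (x : A[X]) : SLEquivMod ⊥ (fun i => (v i).comp x)
      (Function.update (fun i => (v i).comp x) (.inl 1) ((v (.inl 1) + y).comp x)) := by
    rw [Polynomial.add_comp]
    refine SLEquivMod.update_add _ (fun i => (v i).comp x) ?_
    have hmap := Ideal.mem_map_of_mem (Polynomial.compRingHom x) hy
    rwa [Ideal.map_span, ← Set.image_comp] at hmap
  have hdvd (p : A[X]) : Polynomial.C c ∣ p.comp (b + Polynomial.C c * z) - p.comp b := by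
    refine dvd_trans ⟨z, ?_⟩ (sub_dvd_comp_sub_comp p _ b)
    ring
  refine (hupdate b).trans (SLEquivMod.trans ?_ (hupdate _).symm)
  refine SLEquivMod.of_dvd_sub _ (Polynomial.C_ne_zero.2 hc0) (g := g.comp b) (h := h.comp b)
    (g' := g.comp (b + Polynomial.C c * z)) (h' := h.comp (b + Polynomial.C c * z))
    ?_ ?_ (hdvd g) (hdvd h) fun i => ?_
  · simpa using congrArg (fun p => p.comp b) hgh
  · simpa using congrArg (fun p => p.comp (b + Polynomial.C c * z)) hgh
  · by_cases hi : i = .inl 1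
    · subst hi
      simpa using hdvd (v (.inl 1) + y)
    · simpa [hi] using hdvd (v i)

lemma exists_notMem_mem_translationIdeal {v : Fin 2 ⊕ σ → A[X]}
    (hv0 : (v (.inl 0)).Monic)
    {m : Ideal A} [hm : m.IsMaximal]
    (hv : Ideal.span (Set.range v) ⊔ m.map Polynomial.C = ⊤) :
    ∃ c ∈ translationIdeal v, c ∉ m := by
  have := isArtinianRing_quotient_of_monic hv0 (m := m)
  have hspan : Ideal.span {v (.inl 1)} ⊔ Ideal.span (Set.range (v ∘ .inr)) ⊔
      (m.map Polynomial.C ⊔ Ideal.span {v (.inl 0)}) = ⊤ := by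
    rw [eq_top_iff, ← hv]
    refine sup_le (Ideal.span_le.2 ?_) (le_sup_left.trans le_sup_right)
    rintro _ ⟨i | i, rfl⟩
    · fin_cases i
      · exact Ideal.mem_sup_right (Ideal.mem_sup_right (Ideal.mem_span_singleton_self _))
      · exact Ideal.mem_sup_left (Ideal.mem_sup_left (Ideal.mem_span_singleton_self _))
    · exact Ideal.mem_sup_left (Ideal.mem_sup_right (Ideal.subset_span ⟨i, rfl⟩))
  obtain ⟨y, hy, htop⟩ := exists_mem_span_add_sup_eq_top hspan
  obtain ⟨c, hcm, hc⟩ := exists_C_mem_span_of_monic hv0 (m := m) (w := v (.inl 1) + y) (by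
    rw [Ideal.span_insert, ← htop]
    rw [sup_assoc, sup_comm, sup_assoc])
  refine ⟨c, mem_translationIdeal (Ideal.span_mono ?_ hy) hc, fun hmem => ?_⟩
  · rintro _ ⟨i, rfl⟩
    exact ⟨.inr i, by simp, rfl⟩
  · exact hm.ne_top ((Ideal.eq_top_iff_one _).2 (by simpa using m.sub_mem hmem hcm))

/-- The translation ideal is comaximal with `H`, and `X` moves to `0` modulo `H` along it. -/
theorem slEquivMod_C_eval_zero {H : Ideal A} {v : Fin 2 ⊕ σ → A[X]}
    (hv0 : (v (.inl 0)).Monic)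
    (hv : Ideal.span (Set.range v) ⊔ H.map Polynomial.C = ⊤) :
    SLEquivMod (H.map Polynomial.C) v fun i => Polynomial.C ((v i).eval 0) := by
  have htop : translationIdeal v ⊔ H = ⊤ := by
    by_contra hne
    obtain ⟨m, hm, hle⟩ := Ideal.exists_le_maximal _ hne
    obtain ⟨c, hc, hcm⟩ := exists_notMem_mem_translationIdeal hv0 (m := m) <| top_le_iff.1 <|
      hv.ge.trans (sup_le_sup_left (Ideal.map_mono (le_sup_right.trans hle)) _)
    exact hcm (hle (Ideal.mem_sup_left hc))
  obtain ⟨c, hc, h, hh, hch⟩ := Submodule.mem_sup.1 ((Ideal.eq_top_iff_one _).1 htop)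
  have htranslate := hc Polynomial.X (-Polynomial.X)
  have hX : Polynomial.X + Polynomial.C c * -Polynomial.X = Polynomial.C h * Polynomial.X := by
    rw [eq_sub_of_add_eq hch, map_sub, map_one]
    ring
  simp only [Polynomial.comp_X, hX] at htranslate
  refine (htranslate.mono bot_le).trans (SLEquivMod.of_sub_mem fun i => ?_)
  have hdvd := sub_dvd_comp_sub_comp (v i) (Polynomial.C h * Polynomial.X) 0
  rw [sub_zero, Polynomial.comp_zero] at hdvd
  exact Ideal.mem_of_dvd _ hdvd (Ideal.mul_mem_right _ _ (Ideal.mem_map_of_mem _ hh))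

end Suslin

section NagataEquiv

variable (N k : ℕ) (B : Type*) [CommRing B]

/-- Nagata's substitution `Xᵢ ↦ Xᵢ + c X₀ ^ (N ^ i)` for `i ≠ 0`. -/
noncomputable def nagataSubst (c : B) :
    MvPolynomial (Fin (k + 1)) B →ₐ[B] MvPolynomial (Fin (k + 1)) B :=
  aeval fun i => if i = 0 then X 0 else X i + c • X 0 ^ N ^ (i : ℕ)

lemma nagataSubst_comp_neg (c : B) :
    (nagataSubst N k B c).comp (nagataSubst N k B (-c)) = AlgHom.id B _ := by
  unfold nagataSubst
  rw [comp_aeval, ← MvPolynomial.aeval_X_left]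
  ext i v
  cases i using Fin.cases <;> simp

/-- Nagata's change of variables, followed by singling out the first variable. For large `N` it
separates the monomials of a given polynomial by their degree in that variable. -/
noncomputable def nagataEquiv :
    MvPolynomial (Fin (k + 1)) B ≃ₐ[B] Polynomial (MvPolynomial (Fin k) B) :=
  (AlgEquiv.ofAlgHom (nagataSubst N k B 1) (nagataSubst N k B (-1)) (nagataSubst_comp_neg N k B 1)
    (by simpa using nagataSubst_comp_neg N k B (-1))).trans (finSuccEquiv B k)

variable {B}

lemma nagataEquiv_X_zero : nagataEquiv N k B (X 0) = Polynomial.X := by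
  simp [nagataEquiv, nagataSubst, finSuccEquiv_X_zero]

lemma nagataEquiv_X_succ (i : Fin k) :
    nagataEquiv N k B (X i.succ) = Polynomial.X ^ N ^ (i.succ : ℕ) + Polynomial.C (X i) := by
  simp [nagataEquiv, nagataSubst, finSuccEquiv_X_zero, finSuccEquiv_X_succ, add_comm]

lemma nagataEquiv_C (b : B) : nagataEquiv N k B (C b) = Polynomial.C (C b) :=
  (nagataEquiv N k B).commutes b

lemma nagataEquiv_map {B' : Type*} [CommRing B'] (φ : B →+* B')
    (f : MvPolynomial (Fin (k + 1)) B) :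
    nagataEquiv N k B' (MvPolynomial.map φ f) =
      (nagataEquiv N k B f).map (MvPolynomial.map φ) := by
  induction f using MvPolynomial.induction_on with
  | C b => simp only [map_C, nagataEquiv_C, Polynomial.map_C]
  | add p q hp hq => simp only [map_add, hp, hq, Polynomial.map_add]
  | mul_X p i hp =>
    simp only [map_mul, hp, map_X, Polynomial.map_mul]
    cases i using Fin.cases <;> simp [nagataEquiv_X_zero, nagataEquiv_X_succ]

lemma nagataEquiv_monomial [Nontrivial B] (hN : 0 < N) (v : Fin (k + 1) →₀ ℕ) :
    ∃ P : Polynomial (MvPolynomial (Fin k) B), P.Monic ∧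
      P.natDegree = ∑ i : Fin (k + 1), N ^ (i : ℕ) * v i ∧
      ∀ b, nagataEquiv N k B (monomial v b) = Polynomial.C (C b) * P := by
  have hmonic (i : Fin k) :
      ((Polynomial.X : Polynomial (MvPolynomial (Fin k) B)) ^ N ^ (i.succ : ℕ) +
        Polynomial.C (X i)).Monic :=
    Polynomial.monic_X_pow_add_C _ (by positivity)
  have hprod := Polynomial.monic_prod_of_monic Finset.univ _ fun i _ => (hmonic i).pow (v i.succ)
  refine ⟨_, (Polynomial.monic_X_pow (v 0)).mul hprod, ?_, fun b => ?_⟩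
  · rw [(Polynomial.monic_X_pow _).natDegree_mul hprod,
      Polynomial.natDegree_prod_of_monic _ _ fun i _ => (hmonic i).pow _, Fin.sum_univ_succ,
      Polynomial.natDegree_X_pow, Fin.val_zero, pow_zero, one_mul]
    refine congrArg (v 0 + ·) (Finset.sum_congr rfl fun i _ => ?_)
    rw [(hmonic i).natDegree_pow, Polynomial.natDegree_X_pow_add_C, mul_comm]
  · rw [monomial_eq, Finsupp.prod_pow v fun i => X i, Fin.prod_univ_succ]
    simp only [map_mul, map_prod, map_pow, nagataEquiv_C, nagataEquiv_X_zero, nagataEquiv_X_succ]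

lemma sum_pow_mul_injOn {N n : ℕ} (hN : 1 < N) :
    Set.InjOn (fun v : Fin n →₀ ℕ => ∑ i : Fin n, N ^ (i : ℕ) * v i) {v | ∀ i, v i < N} := by
  intro v hv w hw h
  refine Finsupp.ext (congrFun (List.ofFn_inj.1 ?_))
  have hlt (u : Fin n →₀ ℕ) (hu : ∀ i, u i < N) : ∀ x ∈ List.ofFn u, x < N :=
    List.forall_mem_ofFn_iff.2 hu
  refine Nat.ofDigits_inj_of_len_eq hN (by simp) (hlt v hv) (hlt w hw) ?_
  simpa only [Nat.ofDigits_eq_sum_mapIdx, List.mapIdx_eq_ofFn, List.get_ofFn, List.length_ofFn,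
    Fin.val_cast, mul_comm, List.sum_ofFn] using! h

lemma exists_leadingCoeff_sum_C_mul {R ι : Type*} [CommRing R] [Nontrivial R] {S : Finset ι}
    (hS : S.Nonempty) {P : ι → Polynomial R} (hP : ∀ i ∈ S, (P i).Monic)
    (hinj : Set.InjOn (fun i => (P i).natDegree) S) {a : ι → R} (ha : ∀ i ∈ S, a i ≠ 0) :
    ∃ i ∈ S, (∑ j ∈ S, Polynomial.C (a j) * P j).leadingCoeff = a i := by
  classical
  obtain ⟨i, hi, hmax⟩ := S.exists_max_image (fun i => (P i).natDegree) hS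
  have hdegree {j : ι} (hj : j ∈ S) :
      (Polynomial.C (a j) * P j).degree = ((P j).natDegree : WithBot ℕ) := by
    rw [(hP j hj).degree_mul, Polynomial.degree_C (ha j hj), zero_add,
      Polynomial.degree_eq_natDegree (hP j hj).ne_zero]
  refine ⟨i, hi, ?_⟩
  rw [← Finset.add_sum_erase _ _ hi, Polynomial.leadingCoeff_add_of_degree_lt',
    Polynomial.leadingCoeff_mul_monic (hP i hi), Polynomial.leadingCoeff_C]
  rw [hdegree hi]
  refine (Polynomial.degree_sum_le _ _).trans_lt ((Finset.sup_lt_iff (WithBot.bot_lt_coe _)).2 ?_)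
  intro j hj
  obtain ⟨hji, hj⟩ := Finset.mem_erase.1 hj
  rw [hdegree hj, Nat.cast_lt]
  exact lt_of_le_of_ne (hmax j hj) fun h => hji (hinj hj hi h)

lemma exists_monic_C_mul_nagataEquiv {F : Type*} [CommRing F] (hF : IsField F)
    {f : MvPolynomial (Fin (k + 1)) F} (hf : f ≠ 0) (hN : 1 < N) (hfN : f.totalDegree < N) :
    ∃ c : F, (Polynomial.C (C c) * nagataEquiv N k F f).Monic := by
  have := hF.nontrivial
  choose P hP hdegree hmonomial using nagataEquiv_monomial N k (B := F) (by lia)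
  have hlt {v : Fin (k + 1) →₀ ℕ} (hv : v ∈ f.support) (i : Fin (k + 1)) : v i < N :=
    ((monomial_le_degreeOf i hv).trans (degreeOf_le_totalDegree f i)).trans_lt hfN
  obtain ⟨v, hv, hlead⟩ := exists_leadingCoeff_sum_C_mul (S := f.support) (P := P)
    (a := fun v => C (f.coeff v)) (support_nonempty.2 hf) (fun v _ => hP v)
    (fun v hv w hw h => sum_pow_mul_injOn hN (hlt hv) (hlt hw) (by simpa only [hdegree] using h))
    fun v hv => C_ne_zero.2 (mem_support_iff.1 hv)
  have hsum : nagataEquiv N k F f = ∑ v ∈ f.support, Polynomial.C (C (f.coeff v)) * P v := by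
    conv_lhs => rw [f.as_sum, map_sum]
    simp only [hmonomial]
  obtain ⟨c, hc⟩ := hF.mul_inv_cancel (mem_support_iff.1 hv)
  refine ⟨c, Polynomial.monic_C_mul_of_mul_leadingCoeff_eq_one ?_⟩
  rw [hsum, hlead, ← C_mul, mul_comm, hc, C_1]

end NagataEquiv

section Monic

variable {R : Type*} [CommRing R]

lemma exists_monic_sub_mem_map_C {J : Ideal R} {p : Polynomial R} {D : ℕ}
    (hD : p.coeff D - 1 ∈ J) (hlt : ∀ d, D < d → p.coeff d ∈ J) :
    ∃ m : Polynomial R, m.Monic ∧ p - m ∈ J.map Polynomial.C := by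
  have htail : (∑ i ∈ Finset.range D, Polynomial.monomial i (p.coeff i)).degree < D := by
    refine (Polynomial.degree_lt_iff_coeff_zero _ _).2 fun d hd => ?_
    simp [Polynomial.finsetSum_coeff, Polynomial.coeff_monomial, hd]
  refine ⟨_, Polynomial.monic_X_pow_add htail, Ideal.mem_map_C_iff.2 fun d => ?_⟩
  rcases lt_trichotomy d D with h | rfl | h
  · simp [Polynomial.finsetSum_coeff, Polynomial.coeff_monomial, Polynomial.coeff_X_pow, h, h.ne]
  · simpa [Polynomial.finsetSum_coeff, Polynomial.coeff_monomial] using hD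
  · simpa [Polynomial.finsetSum_coeff, Polynomial.coeff_monomial, Polynomial.coeff_X_pow, h.ne',
      h.not_gt] using hlt d h

/-- The Chinese remainder theorem turns multipliers that work modulo each kernel separately into
one that works modulo their intersection, after equalizing the degrees. -/
lemma exists_monic_add_mul_sub_mem {τ : Type*} [Finite τ] {S : τ → Type*} [∀ j, CommRing (S j)]
    {φ : ∀ j, R →+* S j}
    (hφ : Pairwise fun i j => IsCoprime (RingHom.ker (φ i)) (RingHom.ker (φ j)))
    {f : Polynomial R} (hf : ∀ j, ∃ b, ((Polynomial.C b * f).map (φ j)).Monic)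
    (q : Polynomial R) :
    ∃ g m : Polynomial R, m.Monic ∧
      q + g * f - m ∈ (⨅ j, RingHom.ker (φ j)).map Polynomial.C := by
  cases nonempty_fintype τ
  choose b hb using hf
  let deg (j : τ) : ℕ := ((Polynomial.C (b j) * f).map (φ j)).natDegree
  let D := ∑ j, deg j + q.natDegree + 1
  have hdeg (j : τ) : deg j ≤ D := by
    have := Finset.single_le_sum (f := deg) (fun _ _ => Nat.zero_le _) (Finset.mem_univ j)
    lia
  have hcoprime : Pairwise fun i j => IsCoprime ((RingHom.ker (φ i)).map Polynomial.C)
      ((RingHom.ker (φ j)).map Polynomial.C) := fun i j hij => (hφ hij).map (Ideal.mapHom _)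
  obtain ⟨g, hg⟩ := Ideal.exists_forall_sub_mem_ideal hcoprime fun j =>
    Polynomial.X ^ (D - deg j) * Polynomial.C (b j)
  have hmap (j : τ) : (q + g * f).map (φ j) = q.map (φ j) +
      Polynomial.X ^ (D - deg j) * (Polynomial.C (b j) * f).map (φ j) := by
    have hgj := hg j
    rw [← Polynomial.ker_mapRingHom, RingHom.mem_ker, map_sub, sub_eq_zero,
      Polynomial.coe_mapRingHom] at hgj
    rw [Polynomial.map_add, Polynomial.map_mul, hgj]
    simp only [Polynomial.map_mul, Polynomial.map_pow, Polynomial.map_X, mul_assoc]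
  have hcoeff (j : τ) {d : ℕ} (hd : D ≤ d) : φ j ((q + g * f).coeff d) =
      ((Polynomial.C (b j) * f).map (φ j)).coeff (d - (D - deg j)) := by
    rw [← Polynomial.coeff_map, hmap, Polynomial.coeff_add, Polynomial.coeff_map,
      Polynomial.coeff_eq_zero_of_natDegree_lt (by lia), map_zero, zero_add,
      Polynomial.coeff_X_pow_mul', if_pos (by lia)]
  refine ⟨g, exists_monic_sub_mem_map_C (D := D) ?_ fun d hd => ?_⟩ <;>
    refine (Submodule.mem_iInf _).2 fun j => ?_
  · rw [RingHom.mem_ker, map_sub, map_one, hcoeff j le_rfl, Nat.sub_sub_self (hdeg j), sub_eq_zero]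
    exact hb j
  · rw [RingHom.mem_ker, hcoeff j hd.le]
    have := hdeg j
    exact Polynomial.coeff_eq_zero_of_natDegree_lt (by lia)

end Monic

section Unimodular

variable {B : Type*} [CommRing B] {σ τ : Type*} {M : τ → Ideal B}

lemma map_C_iInf : (⨅ j, M j).map (C : B →+* MvPolynomial σ B) = ⨅ j, (M j).map C := by
  ext f
  simp only [MvPolynomial.mem_map_C_iff, Ideal.mem_iInf]
  exact forall_comm

lemma map_C_ne_top {I : Ideal B} (hI : I ≠ ⊤) : I.map (C : B →+* MvPolynomial σ B) ≠ ⊤ := by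
  rw [Ne, Ideal.eq_top_iff_one, MvPolynomial.mem_map_C_iff]
  exact fun h => hI ((Ideal.eq_top_iff_one _).2 (by simpa using h 0))

lemma span_comp_sup_map_eq_top {A A' ι : Type*} [CommRing A] [CommRing A'] (φ : A →+* A')
    {v : ι → A} {J : Ideal A} (h : Ideal.span (Set.range v) ⊔ J = ⊤) :
    Ideal.span (Set.range (φ ∘ v)) ⊔ J.map φ = ⊤ := by
  rw [Set.range_comp, ← Ideal.map_span, ← Ideal.map_sup, h, Ideal.map_top]

lemma map_algebraMap_algEquiv {A A' : Type*} [CommRing A] [CommRing A'] [Algebra B A]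
    [Algebra B A'] (e : A ≃ₐ[B] A') (H : Ideal B) :
    (H.map (algebraMap B A)).map (e : A →+* A') = H.map (algebraMap B A') := by
  rw [Ideal.map_map]
  exact congrArg (H.map ·) (RingHom.ext e.commutes)

lemma ker_map_mk {I : Ideal B} :
    RingHom.ker (MvPolynomial.map (σ := σ) (Ideal.Quotient.mk I)) = I.map C := by
  rw [MvPolynomial.ker_map, Ideal.mk_ker]

lemma exists_monic_map_C_mul_nagataEquiv {L : Type*} [CommRing L] (hL : IsField L) {φ : B →+* L}
    (hφ : Function.Surjective φ) {k N : ℕ} {f : MvPolynomial (Fin (k + 1)) B}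
    (hf : MvPolynomial.map φ f ≠ 0) (hN : 1 < N) (hfN : f.totalDegree < N) :
    ∃ b, ((Polynomial.C b * nagataEquiv N k B f).map (MvPolynomial.map φ)).Monic := by
  have hdegree : (MvPolynomial.map φ f).totalDegree ≤ f.totalDegree :=
    Finset.sup_mono (support_map_subset φ f)
  obtain ⟨c, hc⟩ := exists_monic_C_mul_nagataEquiv N k hL hf hN (hdegree.trans_lt hfN)
  obtain ⟨b, rfl⟩ := hφ c
  refine ⟨C b, ?_⟩
  rwa [Polynomial.map_mul, Polynomial.map_C, map_C, ← nagataEquiv_map]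

lemma isCoprime_map_C (hM : Pairwise fun i j => IsCoprime (M i) (M j)) :
    Pairwise fun i j => IsCoprime ((M i).map (C : B →+* MvPolynomial σ B)) ((M j).map C) :=
  fun _ _ hij => (hM hij).map (Ideal.mapHom _)

lemma exists_algEquiv_monic_sub_mem [Finite τ] (hmax : ∀ j, (M j).IsMaximal)
    (hM : Pairwise fun i j => IsCoprime (M i) (M j)) {k : ℕ}
    {f : MvPolynomial (Fin (k + 1)) B} (hf : ∀ j, f ∉ (M j).map C) :
    ∃ e : MvPolynomial (Fin (k + 1)) B ≃ₐ[B] Polynomial (MvPolynomial (Fin k) B),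
      ∀ q, ∃ g m, m.Monic ∧ q + g * e f - m ∈ ((⨅ j, M j).map C).map Polynomial.C := by
  let N := f.totalDegree + 2
  refine ⟨nagataEquiv N k B, fun q => ?_⟩
  obtain ⟨g, m, hm, hgm⟩ := exists_monic_add_mul_sub_mem (R := MvPolynomial (Fin k) B)
    (φ := fun j => MvPolynomial.map (Ideal.Quotient.mk (M j)))
    (by simpa only [ker_map_mk] using isCoprime_map_C hM)
    (fun j => exists_monic_map_C_mul_nagataEquiv (N := N)
      ((Ideal.Quotient.maximal_ideal_iff_isField_quotient (M j)).1 (hmax j))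
      Ideal.Quotient.mk_surjective (by rw [Ne, ← RingHom.mem_ker, ker_map_mk]; exact hf j)
      (by lia) (by lia)) q
  simp only [ker_map_mk, ← map_C_iInf] at hgm
  exact ⟨g, m, hm, hgm⟩

lemma not_span_image_compl_le {A ι : Type*} [CommRing A] {v : ι → A} (i : ι) {J : Ideal A}
    (hv : Ideal.span (Set.range v) ⊔ J = ⊤) (hi : v i ∈ J) (hJ : J ≠ ⊤) :
    ¬ Ideal.span (v '' {i}ᶜ) ≤ J := by
  intro hle
  refine hJ (top_le_iff.1 (hv.ge.trans (sup_le (Ideal.span_le.2 ?_) le_rfl)))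
  rintro _ ⟨j, rfl⟩
  by_cases hj : j = i
  · exact hj ▸ hi
  · exact hle (Ideal.subset_span ⟨j, hj, rfl⟩)

lemma comp_single_one {A A' ι F : Type*} [DecidableEq ι] [CommRing A] [CommRing A']
    [FunLike F A A'] [RingHomClass F A A'] (φ : F) (i : ι) :
    φ ∘ (Pi.single i 1 : ι → A) = Pi.single i 1 := by
  ext j
  by_cases hj : j = i
  · subst hj
    simp
  · simp [hj]

variable [Fintype σ] [DecidableEq σ]

lemma SLEquivMod.exists_forall_notMem [Finite τ] {A : Type*} [CommRing A] {J : τ → Ideal A}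
    (hJ : Pairwise fun i j => IsCoprime (J i) (J j)) (hne : ∀ j, J j ≠ ⊤) {v : σ → A}
    (hv : Ideal.span (Set.range v) ⊔ ⨅ j, J j = ⊤) (i : σ) :
    ∃ w, SLEquivMod (⨅ j, J j) v w ∧ ∀ j, w i ∉ J j := by
  obtain ⟨y, hy, hmem⟩ := exists_mem_add_notMem hJ (a := v i) fun j hj =>
    not_span_image_compl_le i
      (top_le_iff.1 (hv.ge.trans (sup_le_sup_left (iInf_le _ j) _))) hj (hne j)
  refine ⟨_, .update_add _ v hy, fun j => ?_⟩
  rw [Function.update_self]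
  exact hmem j

lemma SLEquivMod.exists_C_comp {R : Type*} [CommRing R] [IsDomain R] {H : Ideal R}
    {v : Fin 2 ⊕ σ → Polynomial R} (hv : Ideal.span (Set.range v) ⊔ H.map Polynomial.C = ⊤)
    {g m : Polynomial R} (hm : m.Monic)
    (hgm : v (.inl 0) + g * v (.inl 1) - m ∈ H.map Polynomial.C) :
    ∃ w : Fin 2 ⊕ σ → R, SLEquivMod (H.map Polynomial.C) v (Polynomial.C ∘ w) ∧
      Ideal.span (Set.range w) ⊔ H = ⊤ := by
  have hmem : g * v (.inl 1) ∈ Ideal.span (v '' {.inl 0}ᶜ) :=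
    Ideal.mul_mem_left _ _ (Ideal.subset_span ⟨.inl 1, by simp, rfl⟩)
  have hmonic : SLEquivMod (H.map Polynomial.C) v (Function.update v (.inl 0) m) := by
    refine (update_add _ v hmem).trans (of_sub_mem fun i => ?_)
    by_cases hi : i = .inl 0
    · subst hi
      simpa using hgm
    · simp [hi]
  have heval := hmonic.trans (slEquivMod_C_eval_zero (by simpa using hm)
    (hmonic.span_sup_eq_top hv))
  refine ⟨_, heval, ?_⟩
  have htop := span_comp_sup_map_eq_top (Polynomial.evalRingHom 0) (heval.span_sup_eq_top hv)
  have hid : (Polynomial.evalRingHom 0).comp Polynomial.C = RingHom.id R := by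
    ext
    simp
  rw [Ideal.map_map, hid, Ideal.map_id] at htop
  simpa [Function.comp_def] using htop

variable [Finite τ]

lemma SLEquivMod.single_of_isMaximal (hmax : ∀ j, (M j).IsMaximal)
    (hM : Pairwise fun i j => IsCoprime (M i) (M j)) {v : Fin 2 ⊕ σ → B}
    (hv : Ideal.span (Set.range v) ⊔ ⨅ j, M j = ⊤) :
    SLEquivMod (⨅ j, M j) v (Pi.single (.inl 0) 1) := by
  obtain ⟨w, hvw, hw⟩ := exists_forall_notMem hM (fun j => (hmax j).ne_top) hv (.inl 1)
  have hunit (j : τ) : Ideal.span {w (.inl 1)} ⊔ M j = ⊤ :=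
    (hmax j).1.2 _ (right_lt_sup.2 fun h => hw j (h (Ideal.mem_span_singleton_self _)))
  have hne : (.inl 1 : Fin 2 ⊕ σ) ≠ .inl 0 := Sum.inl_injective.ne one_ne_zero
  have htop : Ideal.span {w (.inl 1)} ⊔ ⨅ j, M j = ⊤ := by
    cases nonempty_fintype τ
    simpa using Ideal.sup_iInf_eq_top (s := Finset.univ) fun j _ => hunit j
  exact hvw.trans (single_of_span_sup_eq_top hne htop)

variable [IsDomain B]

theorem SLEquivMod.single_of_span_sup_map_C_eq_top (hmax : ∀ j, (M j).IsMaximal)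
    (hM : Pairwise fun i j => IsCoprime (M i) (M j)) {k : ℕ}
    {v : Fin 2 ⊕ σ → MvPolynomial (Fin k) B}
    (hv : Ideal.span (Set.range v) ⊔ (⨅ j, M j).map C = ⊤) :
    SLEquivMod ((⨅ j, M j).map C) v (Pi.single (.inl 0) 1) := by
  induction k with
  | zero =>
    let e := isEmptyAlgEquiv B (Fin 0)
    have he := span_comp_sup_map_eq_top (e : MvPolynomial (Fin 0) B →+* B) hv
    rw [← algebraMap_eq, map_algebraMap_algEquiv, Algebra.algebraMap_self, Ideal.map_id] at he
    refine of_algEquiv e ?_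
    rw [comp_single_one, Algebra.algebraMap_self, Ideal.map_id]
    exact single_of_isMaximal hmax hM he
  | succ k ih =>
    obtain ⟨u, hvu, hu⟩ : ∃ u, SLEquivMod ((⨅ j, M j).map C) v u ∧
        ∀ j, u (.inl 1) ∉ (M j).map C := by
      rw [map_C_iInf] at hv ⊢
      exact exists_forall_notMem (isCoprime_map_C hM) (fun j => map_C_ne_top (hmax j).ne_top) hv _
    obtain ⟨e, he⟩ := exists_algEquiv_monic_sub_mem hmax hM hu
    obtain ⟨g, m, hm, hgm⟩ := he (e (u (.inl 0)))
    have hH : (⨅ j, M j).map (algebraMap B (Polynomial (MvPolynomial (Fin k) B))) =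
        ((⨅ j, M j).map C).map Polynomial.C := by
      rw [Ideal.map_map]
      rfl
    have hspan := span_comp_sup_map_eq_top (e : _ →+* Polynomial (MvPolynomial (Fin k) B))
      (hvu.span_sup_eq_top hv)
    rw [← algebraMap_eq, map_algebraMap_algEquiv, hH] at hspan
    obtain ⟨w, huw, hw⟩ := exists_C_comp hspan hm hgm
    refine hvu.trans (of_algEquiv e ?_)
    rw [comp_single_one, hH]
    have hC := (ih hw).map Polynomial.C
    rw [comp_single_one] at hC
    exact huw.trans hC

end Unimodular

section Flat

variable {A : Type*} [CommRing A]

lemma exists_eq_sum_smul_of_mem_span_smul {ι P : Type*} [Fintype ι] [AddCommGroup P] [Module A P]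
    {a : ι → A} {N : Submodule A P} {x : P} (hx : x ∈ Ideal.span (Set.range a) • N) :
    ∃ y : ι → P, (∀ i, y i ∈ N) ∧ x = ∑ i, a i • y i := by
  induction hx using Submodule.smul_induction_on' with
  | smul b hb y hy =>
    obtain ⟨c, rfl⟩ := Ideal.mem_span_range_iff_exists_fun.1 hb
    refine ⟨fun i => c i • y, fun i => N.smul_mem _ hy, ?_⟩
    simp only [Finset.sum_smul, smul_smul, mul_comm]
  | add x _ x' _ hx hx' =>
    obtain ⟨y, hy, rfl⟩ := hx
    obtain ⟨y', hy', rfl⟩ := hx'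
    refine ⟨y + y', fun i => N.add_mem (hy i) (hy' i), ?_⟩
    simp only [Pi.add_apply, smul_add, Finset.sum_add_distrib]

lemma flat_of_inf_smul_le {P Q : Type*} [AddCommGroup P] [Module A P] [AddCommGroup Q] [Module A Q]
    [Module.Flat A P] {g : P →ₗ[A] Q} (hg : Function.Surjective g)
    (hpure : ∀ I : Ideal A, LinearMap.ker g ⊓ I • ⊤ ≤ I • LinearMap.ker g) : Module.Flat A Q := by
  refine Module.Flat.of_forall_isTrivialRelation fun {l a x} hx => ?_
  choose y hy using fun i => hg (x i)
  have hker : ∑ i, a i • y i ∈ LinearMap.ker g := by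
    simpa only [LinearMap.mem_ker, map_sum, map_smul, hy] using hx
  have hmem : ∑ i, a i • y i ∈ Ideal.span (Set.range a) • (⊤ : Submodule A P) :=
    Submodule.sum_mem _ fun i _ =>
      Submodule.smul_mem_smul (Ideal.subset_span ⟨i, rfl⟩) Submodule.mem_top
  obtain ⟨z, hz, hsum⟩ := exists_eq_sum_smul_of_mem_span_smul (hpure _ ⟨hker, hmem⟩)
  have hrel : ∑ i, a i • (y i - z i) = 0 := by
    simp only [smul_sub, Finset.sum_sub_distrib, hsum, sub_self]
  obtain ⟨k, b, w, hw, hb⟩ := Module.Flat.isTrivialRelation_of_sum_smul_eq_zero hrel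
  refine ⟨k, b, g ∘ w, fun i => ?_, hb⟩
  have hi := congrArg g (hw i)
  rw [map_sub, LinearMap.mem_ker.1 (hz i), sub_zero, hy] at hi
  simpa only [map_sum, map_smul, Function.comp_apply] using hi

open scoped Polynomial

lemma mem_map_C_of_monic_mul_mem {I : Ideal A} {f p : A[X]} (hf : f.Monic)
    (h : f * p ∈ I.map Polynomial.C) : p ∈ I.map Polynomial.C := by
  rw [← Ideal.mk_ker (I := I), ← Polynomial.ker_mapRingHom, RingHom.mem_ker] at h ⊢
  rw [map_mul] at h
  exact (hf.map (Ideal.Quotient.mk I)).mul_right_eq_zero_iff.1 h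

section Tower

variable {P : Type*} [AddCommGroup P] [Module A[X] P] [Module A P] [IsScalarTower A A[X] P]

lemma smul_mem_smul_top_of_mem_map_C {I : Ideal A} {p : A[X]} (hp : p ∈ I.map Polynomial.C)
    (x : P) : p • x ∈ I • (⊤ : Submodule A P) := by
  induction hp using Submodule.span_induction generalizing x with
  | mem p hp =>
    obtain ⟨a, ha, rfl⟩ := hp
    rw [Polynomial.C_eq_algebraMap, algebraMap_smul]
    exact Submodule.smul_mem_smul ha Submodule.mem_top
  | zero => rw [zero_smul]; exact Submodule.zero_mem _
  | add p q _ _ hp hq => rw [add_smul]; exact Submodule.add_mem _ (hp x) (hq x)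
  | smul r p _ hp => rw [smul_eq_mul, mul_comm, mul_smul]; exact hp (r • x)

lemma mem_smul_top_of_monic_smul_mem [Module.Free A[X] P] {I : Ideal A} {f : A[X]}
    (hf : f.Monic) {x : P} (hx : f • x ∈ I • (⊤ : Submodule A P)) :
    x ∈ I • (⊤ : Submodule A P) := by
  let b := Module.Free.chooseBasis A[X] P
  have hcoord (s) : ∀ y ∈ I • (⊤ : Submodule A P), b.repr y s ∈ I.map Polynomial.C := by
    intro y hy
    induction hy using Submodule.smul_induction_on' with
    | smul a ha y _ =>
      rw [← algebraMap_smul A[X] a y, map_smul, Finsupp.smul_apply, smul_eq_mul]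
      exact Ideal.mul_mem_right _ _ (Ideal.mem_map_of_mem _ ha)
    | add y _ z _ hy hz =>
      rw [map_add, Finsupp.add_apply]
      exact Ideal.add_mem _ hy hz
  rw [← b.linearCombination_repr x, Finsupp.linearCombination_apply]
  refine Submodule.sum_mem _ fun s _ => smul_mem_smul_top_of_mem_map_C ?_ _
  have hs := hcoord s _ hx
  rw [map_smul, Finsupp.smul_apply, smul_eq_mul] at hs
  exact mem_map_C_of_monic_mul_mem hf hs

lemma flat_quotient_of_monic_smul_mem [Module.Flat A P] {N : Submodule A[X] P}
    [Module.Free A[X] N] {f : A[X]} (hf : f.Monic) (hfN : ∀ x : P, f • x ∈ N) :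
    Module.Flat A (P ⧸ N) := by
  refine flat_of_inf_smul_le (g := N.mkQ.restrictScalars A) N.mkQ_surjective fun I => ?_
  have hker : LinearMap.ker (N.mkQ.restrictScalars A) = N.restrictScalars A := by
    ext x
    simp
  rw [hker]
  rintro x ⟨hxN, hx⟩
  have hfx : ∀ y ∈ I • (⊤ : Submodule A P), f • y ∈ I • N.restrictScalars A := by
    intro y hy
    induction hy using Submodule.smul_induction_on' with
    | smul a ha y _ =>
      rw [smul_comm]
      exact Submodule.smul_mem_smul ha (hfN y)
    | add y _ z _ hy hz => rw [smul_add]; exact Submodule.add_mem _ hy hz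
  refine (Submodule.mem_smul_top_iff I (N.restrictScalars A) ⟨x, hxN⟩).1 ?_
  refine mem_smul_top_of_monic_smul_mem (P := N) hf (x := ⟨x, hxN⟩) ?_
  exact (Submodule.mem_smul_top_iff I (N.restrictScalars A) ⟨f • x, N.smul_mem f hxN⟩).2 (hfx x hx)

lemma finite_of_monic_smul_eq_zero [Module.Finite A[X] P] {f : A[X]} (hf : f.Monic)
    (hfP : ∀ x : P, f • x = 0) : Module.Finite A P := by
  let _ : Module (A[X] ⧸ Ideal.span {f}) P := Module.IsTorsionBySet.module
    ((Module.isTorsionBySet_span_singleton_iff f).2 hfP)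
  have : IsScalarTower A[X] (A[X] ⧸ Ideal.span {f}) P := Module.IsTorsionBySet.isScalarTower _
  have : IsScalarTower A (A[X] ⧸ Ideal.span {f}) P := Module.IsTorsionBySet.isScalarTower _
  have := hf.finite_quotient
  have : Module.Finite (A[X] ⧸ Ideal.span {f}) P := .of_restrictScalars_finite A[X] _ _
  exact .trans (A[X] ⧸ Ideal.span {f}) P

end Tower

end Flat

section CharacteristicSequence

open scoped Polynomial

variable {A : Type*} [CommRing A] {Q : Type*} [AddCommGroup Q] [Module A[X] Q] [Module A Q]
  [IsScalarTower A A[X] Q] {ι : Type*} [Fintype ι] (b : Module.Basis ι A Q)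

lemma linearCombination_C_repr (y : Q) :
    Fintype.linearCombination A[X] b (fun i => Polynomial.C (b.repr y i)) = y := by
  simp only [Fintype.linearCombination_apply, Polynomial.C_eq_algebraMap, algebraMap_smul,
    b.sum_repr]

section MulXMatrix

variable [DecidableEq ι]

/-- The matrix of multiplication by `X` on a module over `A[X]` that has a basis over `A`. -/
noncomputable def mulXMatrix : Matrix ι ι A :=
  LinearMap.toMatrix b b (Algebra.lsmul A A Q (Polynomial.X : A[X]))

lemma charmatrix_mulVec_C_repr (y : Q) :
    (mulXMatrix b).charmatrix *ᵥ (fun i => Polynomial.C (b.repr y i)) =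
      (Polynomial.X : A[X]) • (fun i => Polynomial.C (b.repr y i)) -
        fun i => Polynomial.C (b.repr ((Polynomial.X : A[X]) • y) i) := by
  have hC : (Polynomial.C.mapMatrix (mulXMatrix b)) *ᵥ (fun i => Polynomial.C (b.repr y i)) =
      fun i => Polynomial.C (b.repr ((Polynomial.X : A[X]) • y) i) := by
    ext1 i
    rw [RingHom.mapMatrix_apply]
    refine (RingHom.map_mulVec Polynomial.C (mulXMatrix b) (b.repr y) i).symm.trans ?_
    rw [mulXMatrix, LinearMap.toMatrix_mulVec_repr, Algebra.lsmul_coe]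
  rw [charmatrix, sub_mulVec, hC]
  congr 1
  ext1 i
  simp [scalar_apply, mulVec_diagonal]

lemma sub_C_repr_mem_range (g : ι → A[X]) :
    g - (fun i => Polynomial.C (b.repr (Fintype.linearCombination A[X] b g) i)) ∈
      LinearMap.range (mulXMatrix b).charmatrix.mulVecLin := by
  let φ := Fintype.linearCombination A[X] b
  let s : Q →ₗ[A] ι → A[X] := LinearMap.pi fun i =>
    Polynomial.CAlgHom.toLinearMap ∘ₗ b.coord i
  let N := (LinearMap.range (mulXMatrix b).charmatrix.mulVecLin).restrictScalars A
  let T : Submodule A (ι → A[X]) := N.comap (LinearMap.id - s ∘ₗ φ.restrictScalars A)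
  have hX {g : ι → A[X]} (hg : g ∈ T) : (Polynomial.X : A[X]) • g ∈ T := by
    have hs : (Polynomial.X : A[X]) • s (φ g) - s ((Polynomial.X : A[X]) • φ g) ∈ N :=
      ⟨_, charmatrix_mulVec_C_repr b (φ g)⟩
    have hXg : (Polynomial.X : A[X]) • (g - s (φ g)) ∈ N :=
      (LinearMap.range (mulXMatrix b).charmatrix.mulVecLin).smul_mem Polynomial.X hg
    have hadd := N.add_mem hXg hs
    rw [smul_sub, sub_add_sub_cancel, ← map_smul φ] at hadd
    exact hadd
  have hsingle (i : ι) : (Pi.single i 1 : ι → A[X]) ∈ T := by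
    have hsφ : s (φ (Pi.single i 1)) = Pi.single i 1 := by
      ext1 j
      simp [s, φ, Fintype.linearCombination_apply_single, Finsupp.single_apply, Pi.single_apply,
        eq_comm (a := i)]
    change Pi.single i 1 - s (φ (Pi.single i 1)) ∈ N
    rw [hsφ, sub_self]
    exact N.zero_mem
  have hsmul (p : A[X]) (i : ι) : p • (Pi.single i 1 : ι → A[X]) ∈ T := by
    induction p using Polynomial.induction_on with
    | C a =>
      rw [Polynomial.C_eq_algebraMap, algebraMap_smul]
      exact T.smul_mem a (hsingle i)
    | add p q hp hq => rw [add_smul]; exact T.add_mem hp hq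
    | monomial n a hn =>
      rw [pow_succ, ← mul_assoc, mul_comm _ Polynomial.X, mul_smul]
      exact hX hn
  suffices hT : g ∈ T from hT
  rw [pi_eq_sum_univ' g]
  exact T.sum_mem fun i _ => hsmul (g i) i

lemma linearCombination_comp_charmatrix_mulVecLin :
    Fintype.linearCombination A[X] b ∘ₗ (mulXMatrix b).charmatrix.mulVecLin = 0 := by
  refine LinearMap.pi_ext' fun i => LinearMap.ext_ring ?_
  have hi : (Pi.single i 1 : ι → A[X]) = fun j => Polynomial.C (b.repr (b i) j) := by
    ext1 j
    simp [Finsupp.single_apply, Pi.single_apply, eq_comm (a := i)]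
  simp only [LinearMap.comp_apply, LinearMap.single_apply, hi, mulVecLin_apply,
    charmatrix_mulVec_C_repr, map_sub, map_smul, linearCombination_C_repr, sub_self,
    LinearMap.zero_apply]

lemma ker_linearCombination_eq_range :
    LinearMap.ker (Fintype.linearCombination A[X] b) =
      LinearMap.range (mulXMatrix b).charmatrix.mulVecLin := by
  refine le_antisymm (fun g hg => ?_)
    (LinearMap.range_le_ker_iff.2 (linearCombination_comp_charmatrix_mulVecLin b))
  have hmem := sub_C_repr_mem_range b g
  simp only [LinearMap.mem_ker.1 hg, map_zero, Finsupp.coe_zero, Pi.zero_apply] at hmem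
  exact (sub_zero g) ▸ hmem

end MulXMatrix

lemma free_ker_linearCombination [IsDomain A] :
    Module.Free A[X] (LinearMap.ker (Fintype.linearCombination A[X] b)) := by
  classical
  rw [ker_linearCombination_eq_range]
  refine .of_equiv (LinearEquiv.ofInjective (mulXMatrix b).charmatrix.mulVecLin ?_)
  rw [← LinearMap.ker_eq_bot, LinearMap.ker_eq_bot']
  exact fun g hg => eq_zero_of_mulVec_eq_zero (charpoly_monic (mulXMatrix b)).ne_zero hg

end CharacteristicSequence

section Schanuel

variable {S : Type*} [Ring S] {P P' Q : Type*} [AddCommGroup P] [Module S P] [AddCommGroup P']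
  [Module S P'] [AddCommGroup Q] [Module S Q]

lemma nonempty_linearEquiv_ker_prod [Module.Projective S P'] {g : P →ₗ[S] P'}
    (hg : Function.Surjective g) : Nonempty (P ≃ₗ[S] LinearMap.ker g × P') := by
  obtain ⟨s, hs⟩ := Module.projective_lifting_property g LinearMap.id hg
  exact ⟨((LinearMap.exact_subtype_ker_map g).splitSurjectiveEquiv
    (LinearMap.ker g).subtype_injective ⟨s, hs⟩).1⟩

/-- Schanuel's lemma: a lift `t` of `f` through `f'` exhibits the right-hand side as an extension
of `P'` by `ker f`. -/
lemma nonempty_ker_prod_linearEquiv [Module.Projective S P] [Module.Projective S P']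
    {f : P →ₗ[S] Q} {f' : P' →ₗ[S] Q} (hf : Function.Surjective f) (hf' : Function.Surjective f') :
    Nonempty ((LinearMap.ker f' × P) ≃ₗ[S] LinearMap.ker f × P') := by
  obtain ⟨t, ht⟩ := Module.projective_lifting_property f' f hf'
  have hft (x) : f' (t x) = f x := LinearMap.congr_fun ht x
  let h : LinearMap.ker f' × P →ₗ[S] P' := (LinearMap.ker f').subtype.coprod t
  have hh (z) : h z = z.1 + t z.2 := rfl
  have hsurj : Function.Surjective h := fun y => by
    obtain ⟨x, hx⟩ := hf (f' y)
    exact ⟨(⟨y - t x, by simp [hft, hx]⟩, x), by simp [hh]⟩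
  let q := LinearMap.snd S _ P ∘ₗ (LinearMap.ker h).subtype
  have hq : Function.Injective q := by
    refine (injective_iff_map_eq_zero q).2 fun ⟨⟨k, x⟩, hz⟩ hx => ?_
    obtain rfl : x = 0 := hx
    have hk : (k : P') = 0 := by simpa [hh] using hz
    exact Subtype.ext (Prod.ext (Subtype.ext hk) rfl)
  have hrange : LinearMap.range q = LinearMap.ker f := by
    ext x
    refine ⟨?_, fun hx => ⟨⟨(⟨-t x, ?_⟩, x), ?_⟩, rfl⟩⟩
    · rintro ⟨⟨⟨k, x⟩, hz⟩, rfl⟩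
      have hfz := congrArg f' (LinearMap.mem_ker.1 hz)
      rw [hh, map_add, LinearMap.mem_ker.1 k.2, zero_add, hft, map_zero] at hfz
      exact hfz
    · simpa [hft] using hx
    · simp [hh]
  obtain ⟨e⟩ := nonempty_linearEquiv_ker_prod hsurj
  exact ⟨e.trans (((LinearEquiv.ofInjective q hq).trans (LinearEquiv.ofEq _ _ hrange)).prodCongr
    (.refl S P'))⟩

end Schanuel

section StablyFree

variable {A : Type*} [CommRing A]

lemma IdempotentsSplit.free (hA : IdempotentsSplit A) (Q : Type*) [AddCommGroup Q] [Module A Q]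
    [Module.Finite A Q] [Module.Projective A Q] : Module.Free A Q := by
  obtain ⟨l, g, hg⟩ := Module.Finite.exists_fin' A Q
  obtain ⟨s, hs⟩ := Module.projective_lifting_property g LinearMap.id hg
  have hidem : LinearMap.toMatrix' (s ∘ₗ g) * LinearMap.toMatrix' (s ∘ₗ g) =
      LinearMap.toMatrix' (s ∘ₗ g) := by
    rw [← LinearMap.toMatrix'_comp, LinearMap.comp_assoc, ← LinearMap.comp_assoc g s g, hs,
      LinearMap.id_comp]
  obtain ⟨r, C, D, hCD, hDC⟩ := hA l _ hidem
  have hCD' : C.mulVecLin ∘ₗ D.mulVecLin = s ∘ₗ g := by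
    rw [← mulVecLin_mul, hCD, ← toLin'_apply', toLin'_toMatrix']
  have hDC' : D.mulVecLin ∘ₗ C.mulVecLin = LinearMap.id := by
    rw [← mulVecLin_mul, hDC, mulVecLin_one]
  refine .of_equiv (LinearEquiv.ofLinearMap (g ∘ₗ C.mulVecLin) (D.mulVecLin ∘ₗ s) ?_ ?_)
  · rw [LinearMap.comp_assoc, ← LinearMap.comp_assoc s, hCD', LinearMap.comp_assoc, hs,
      LinearMap.comp_id, hs]
  · rw [LinearMap.comp_assoc, ← LinearMap.comp_assoc C.mulVecLin, ← hCD', LinearMap.comp_assoc,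
      hDC', LinearMap.comp_id, hDC']

open scoped Polynomial

/-- The quotient `P ⧸ N` is free over `A`, so it has a characteristic sequence, and Schanuel's lemma
compares this free resolution with `N → P`. -/
lemma isStablyFree_of_monic_smul_mem [IsDomain A] [IsNoetherianRing A] (hA : IdempotentsSplit A)
    {P : Type*} [AddCommGroup P] [Module A[X] P] [Module.Finite A[X] P] [Module.Projective A[X] P]
    (N : Submodule A[X] P) [Module.Free A[X] N] {f : A[X]} (hf : f.Monic)
    (hfN : ∀ x : P, f • x ∈ N) : Module.IsStablyFree A[X] P := by
  let _ : Module A P := Module.compHom P (algebraMap A A[X])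
  have : IsScalarTower A A[X] P := .of_algebraMap_smul fun _ _ => rfl
  have : Module.Flat A P := .trans A A[X] P
  have := flat_quotient_of_monic_smul_mem hf hfN
  have : Module.Finite A (P ⧸ N) := finite_of_monic_smul_eq_zero hf fun x => by
    obtain ⟨x, rfl⟩ := N.mkQ_surjective x
    rw [← map_smul, Submodule.mkQ_apply, Submodule.Quotient.mk_eq_zero]
    exact hfN x
  have : Module.FinitePresentation A (P ⧸ N) :=
    Module.finitePresentation_of_finite A (P ⧸ N)
  have : Module.Projective A (P ⧸ N) := Module.Flat.projective_of_finitePresentation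
  have := hA.free (P ⧸ N)
  classical
  let b := Module.Free.chooseBasis A (P ⧸ N)
  have := free_ker_linearCombination b
  have : Module.Free A[X] (LinearMap.ker N.mkQ) := by rwa [N.ker_mkQ]
  obtain ⟨e⟩ := nonempty_ker_prod_linearEquiv N.mkQ_surjective
    (f' := Fintype.linearCombination A[X] b) fun y => ⟨_, linearCombination_C_repr b y⟩
  have := Module.Free.of_equiv e.symm
  exact Module.IsStablyFree.of_free_prod' A[X] P (LinearMap.ker (Fintype.linearCombination A[X] b))

end StablyFree

section UnimodularCompletable

/-- Every unimodular vector over `S` is the first column of an invertible matrix. The condition is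
stated in the equivalent form that some invertible matrix maps the vector to the first unit vector.
-/
def UnimodularCompletable (S : Type*) [CommRing S] : Prop :=
  ∀ (m : ℕ) (v : Fin (m + 1) → S), Ideal.span (Set.range v) = ⊤ →
    ∃ U : Matrix (Fin (m + 1)) (Fin (m + 1)) S, IsUnit U.det ∧ U *ᵥ v = Pi.single 0 1

variable {S : Type*} [CommRing S]

lemma UnimodularCompletable.of_ringEquiv {T : Type*} [CommRing T] (hS : UnimodularCompletable S)
    (e : S ≃+* T) : UnimodularCompletable T := by
  intro m v hv
  obtain ⟨U, hU, hUv⟩ := hS m (e.symm ∘ v) (by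
    rw [Set.range_comp, ← Ideal.map_span e.symm, hv, Ideal.map_top])
  refine ⟨U.map e, ?_, ?_⟩
  · exact (RingHom.map_det (e : S →+* T) U) ▸ hU.map (e : S →+* T)
  · rw [← comp_single_one (e : S →+* T) 0, ← hUv]
    ext1 i
    rw [Function.comp_apply, RingHom.map_mulVec]
    congr 2
    ext1 j
    exact (e.apply_symm_apply _).symm

lemma exists_linearEquiv_apply_eq_single (hS : UnimodularCompletable S) {M : Type*}
    [AddCommGroup M] [Module S M] {m : ℕ} (e : (M × S) ≃ₗ[S] (Fin (m + 1) → S)) :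
    ∃ e' : (M × S) ≃ₗ[S] (Fin (m + 1) → S), e' (0, 1) = Pi.single 0 1 := by
  have hspan : Ideal.span (Set.range (e (0, 1))) = ⊤ := by
    refine Ideal.eq_top_iff_one _ |>.2 <| Ideal.mem_span_range_iff_exists_fun.2
      ⟨fun i => (e.symm (Pi.single i 1)).2, ?_⟩
    calc ∑ i, (e.symm (Pi.single i 1)).2 * e (0, 1) i
        = (e.symm (∑ i, e (0, 1) i • Pi.single i 1)).2 := by
          simp only [map_sum, map_smul, Prod.snd_sum, Prod.smul_snd, smul_eq_mul, mul_comm]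
      _ = 1 := by rw [← pi_eq_sum_univ', e.symm_apply_apply]
  obtain ⟨U, hU, hUe⟩ := hS m _ hspan
  exact ⟨e.trans (toLinearEquiv' U ((isUnit_iff_isUnit_det U).2 hU).invertible), hUe⟩

lemma UnimodularCompletable.free_of_free_prod [Nontrivial S] (hS : UnimodularCompletable S)
    (M : Type*) [AddCommGroup M] [Module S M] [Module.Finite S M] [Module.Free S (M × S)] :
    Module.Free S M := by
  obtain ⟨m, ⟨e₀⟩⟩ : ∃ m : ℕ, Nonempty ((M × S) ≃ₗ[S] (Fin m → S)) :=
    ⟨_, ⟨(Module.finBasis S (M × S)).equivFun⟩⟩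
  obtain _ | m := m
  · have h01 : ((0, 1) : M × S) = 0 := e₀.injective (Subsingleton.elim _ _)
    exact absurd (congrArg Prod.snd h01) one_ne_zero
  obtain ⟨e, he⟩ := exists_linearEquiv_apply_eq_single hS e₀
  have hsmul (s : S) : e (0, s) = s • Pi.single 0 1 := by
    rw [← he, ← map_smul, Prod.smul_mk, smul_zero, smul_eq_mul, mul_one]
  let tail : (M × S) →ₗ[S] (Fin m → S) := LinearMap.funLeft S S Fin.succ ∘ₗ e
  have htail : Function.Surjective tail :=
    (LinearMap.funLeft_surjective_of_injective S S _ (Fin.succ_injective m)).comp e.surjective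
  have hker : LinearMap.ker (LinearMap.fst S M S) = LinearMap.ker tail := by
    refine le_antisymm ?_ fun x hx => ?_
    · rintro ⟨x, s⟩ rfl
      ext1 i
      simp [tail, hsmul]
    · have hx0 : e x = e (0, e x 0) := by
        rw [hsmul]
        ext1 i
        cases i using Fin.cases with
        | zero => simp
        | succ i => simpa [tail] using congrFun hx i
      rw [e.injective hx0]
      exact rfl
  exact .of_equiv <| ((LinearMap.quotKerEquivOfSurjective _ LinearMap.fst_surjective).symm.trans <|
    (Submodule.quotEquivOfEq _ _ hker).trans <| tail.quotKerEquivOfSurjective htail).symm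

lemma UnimodularCompletable.free_of_isStablyFree [Nontrivial S] (hS : UnimodularCompletable S)
    (M : Type*) [AddCommGroup M] [Module S M] [Module.Finite S M] [Module.IsStablyFree S M] :
    Module.Free S M := by
  obtain ⟨N, _, _, _, _, hMN⟩ := Module.IsStablyFree.exist_free_prod S M
  have hcancel (q : ℕ) (hq : Module.Free S (M × (Fin q → S))) : Module.Free S M := by
    induction q with
    | zero => exact .of_equiv (LinearEquiv.prodUnique (R := S) (M := M) (M₂ := Fin 0 → S))
    | succ q ih =>
      have : Module.Free S ((M × (Fin q → S)) × S) := .of_equiv <|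
        ((LinearEquiv.refl S M).prodCongr <| (Fin.consLinearEquiv S fun _ => S).symm.trans <|
          LinearEquiv.prodComm S S (Fin q → S)).trans (LinearEquiv.prodAssoc S M _ S).symm
      exact ih (hS.free_of_free_prod (M × (Fin q → S)))
  exact hcancel _ (.of_equiv ((LinearEquiv.refl S M).prodCongr (Module.finBasis S N).equivFun))

end UnimodularCompletable

section QuillenSuslin

variable {S : Type*} [CommRing S]

lemma SLEquivMod.single_zero_of_span_sup_map_C_eq_top {B : Type*} [CommRing B] [IsDomain B]
    {τ : Type*} [Finite τ] {M : τ → Ideal B} (hmax : ∀ j, (M j).IsMaximal)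
    (hM : Pairwise fun i j => IsCoprime (M i) (M j)) {k s : ℕ}
    {v : Fin (s + 2) → MvPolynomial (Fin k) B}
    (hv : Ideal.span (Set.range v) ⊔ (⨅ j, M j).map C = ⊤) :
    SLEquivMod ((⨅ j, M j).map C) v (Pi.single 0 1) := by
  let e : Fin 2 ⊕ Fin s ≃ Fin (s + 2) := blockEquiv (add_comm 2 s)
  refine reindex e ?_
  have hsingle : (Pi.single 0 1 : Fin (s + 2) → MvPolynomial (Fin k) B) ∘ e =
      Pi.single (.inl 0) 1 := Pi.single_comp_equiv e 0 1
  rw [hsingle]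
  refine single_of_span_sup_map_C_eq_top hmax hM ?_
  rwa [e.surjective.range_comp]

theorem unimodularCompletable_mvPolynomial (K : Type*) [Field K] (n : ℕ) :
    UnimodularCompletable (MvPolynomial (Fin n) K) := by
  intro m v hv
  obtain _ | s := m
  · have hu : IsUnit (v 0) := by
      have hrange : Set.range v = {v 0} := Set.range_unique (ι := Fin 1)
      rwa [hrange, Ideal.span_singleton_eq_top] at hv
    obtain ⟨u, hu⟩ := hu
    refine ⟨diagonal fun _ => ↑u⁻¹, ?_, ?_⟩
    · simp
    · ext1 i
      rw [Fin.fin_one_eq_zero i, mulVec_diagonal, ← hu]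
      simp
  · obtain ⟨U, hU, hUv⟩ := SLEquivMod.single_zero_of_span_sup_map_C_eq_top (τ := Unit)
      (M := fun _ => (⊥ : Ideal K)) (fun _ => Ideal.bot_isMaximal) (Subsingleton.pairwise)
      (v := v) (by rw [hv, top_sup_eq])
    refine ⟨U, by simp [hU], funext fun i => sub_eq_zero.1 ?_⟩
    simpa using hUv i

lemma rangeRestrict_comp_subtype_of_mul_self {ι : Type*} [Fintype ι] {E : Matrix ι ι S}
    (hE : E * E = E) : E.mulVecLin.rangeRestrict ∘ₗ (LinearMap.range E.mulVecLin).subtype =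
      LinearMap.id := by
  ext ⟨_, x, rfl⟩ : 2
  simp [hE]

lemma exists_mul_eq_of_free_range [Nontrivial S] {l : ℕ} {E : Matrix (Fin l) (Fin l) S}
    (hE : E * E = E) [Module.Free S (LinearMap.range E.mulVecLin)] :
    ∃ (r : ℕ) (P : Matrix (Fin l) (Fin r) S) (Q : Matrix (Fin r) (Fin l) S),
      P * Q = E ∧ Q * P = 1 := by
  let e := (Module.finBasis S (LinearMap.range E.mulVecLin)).equivFun
  refine ⟨_, LinearMap.toMatrix' ((LinearMap.range E.mulVecLin).subtype ∘ₗ e.symm.toLinearMap),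
    LinearMap.toMatrix' (e.toLinearMap ∘ₗ E.mulVecLin.rangeRestrict), ?_, ?_⟩
  · rw [← LinearMap.toMatrix'_comp]
    conv_rhs => rw [← LinearMap.toMatrix'_toLin' E, toLin'_apply']
    congr 1
    exact LinearMap.ext fun x => by simp
  · rw [← LinearMap.toMatrix'_comp, LinearMap.comp_assoc,
      ← LinearMap.comp_assoc e.symm.toLinearMap (LinearMap.range E.mulVecLin).subtype,
      rangeRestrict_comp_subtype_of_mul_self hE, LinearMap.id_comp, LinearEquiv.comp_symm,
      LinearMap.toMatrix'_id]

lemma idempotentsSplit_of_field (K : Type*) [Field K] : IdempotentsSplit K :=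
  fun _ _ hE => exists_mul_eq_of_free_range hE

lemma exists_det_submatrix_ne_zero_minorIdeal_succ_eq_bot [Nontrivial S] {ι κ : Type*} [Finite ι]
    (F : Matrix ι κ S) : ∃ (r : ℕ) (f : Fin r → ι) (g : Fin r → κ),
      (F.submatrix f g).det ≠ 0 ∧ minorIdeal F (r + 1) = ⊥ := by
  classical
  cases nonempty_fintype ι
  have hex : ∃ k, minorIdeal F (k + 1) = ⊥ :=
    ⟨Fintype.card ι, minorIdeal_eq_bot_of_card_lt F (Nat.lt_succ_self _)⟩
  have hne : minorIdeal F (Nat.find hex) ≠ ⊥ := by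
    intro hbot
    cases hr : Nat.find hex with
    | zero =>
      rw [hr, minorIdeal_zero] at hbot
      exact top_ne_bot hbot
    | succ r => exact Nat.find_min hex (m := r) (by omega) (hr ▸ hbot)
  by_contra! hdet
  exact hne (eq_bot_iff.2 (minorIdeal_le fun f g => by
    by_contra hfg
    exact hdet _ f g (by simpa using hfg) (Nat.find_spec hex)))

open scoped Polynomial

lemma isStablyFree_range_of_monic {A : Type*} [CommRing A] [IsDomain A] [IsNoetherianRing A]
    (hA : IdempotentsSplit A) {l r : ℕ} {E : Matrix (Fin l) (Fin l) A[X]} (hE : E * E = E)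
    (hbot : minorIdeal E (r + 1) = ⊥) {f g : Fin r → Fin l} {c : A[X]}
    (hc : (c * (E.submatrix f g).det).Monic) :
    Module.IsStablyFree A[X] (LinearMap.range E.mulVecLin) := by
  have hEg : E * E.submatrix id g = E.submatrix id g := congrArg (·.submatrix id g) hE
  have hdet : (E.submatrix f g).det ≠ 0 := right_ne_zero_of_mul hc.ne_zero
  let N := (LinearMap.range (E.submatrix id g).mulVecLin).comap
    (LinearMap.range E.mulVecLin).subtype
  have hinj : Function.Injective (E.submatrix id g).mulVecLin := by
    refine (injective_iff_map_eq_zero _).2 fun x hx => eq_zero_of_mulVec_eq_zero hdet ?_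
    exact funext fun i => congrFun hx (f i)
  have hle : LinearMap.range (E.submatrix id g).mulVecLin ≤ LinearMap.range E.mulVecLin := by
    rintro _ ⟨x, rfl⟩
    exact ⟨E.submatrix id g *ᵥ x, by rw [mulVecLin_apply, mulVec_mulVec, hEg, mulVecLin_apply]⟩
  have : Module.Free A[X] N := .of_equiv <|
    (LinearEquiv.ofInjective _ hinj).trans (Submodule.comapSubtypeEquivOfLe hle).symm
  have : Module.Projective A[X] (LinearMap.range E.mulVecLin) :=
    .of_split _ _ (rangeRestrict_comp_subtype_of_mul_self hE)
  refine isStablyFree_of_monic_smul_mem hA N hc fun ⟨_, x, rfl⟩ =>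
    ⟨c • ((E.submatrix f g).adjugate * E.submatrix f id) *ᵥ x, ?_⟩
  simp only [mulVecLin_apply, mulVec_smul, mulVec_mulVec, ← Matrix.mul_assoc,
    mul_adjugate_mul_eq_smul_of_minorIdeal_eq_bot hbot hdet, smul_mulVec, mul_smul,
    Submodule.subtype_apply, Submodule.coe_smul]

theorem idempotentsSplit_mvPolynomial (K : Type*) [Field K] (n : ℕ) :
    IdempotentsSplit (MvPolynomial (Fin n) K) := by
  induction n with
  | zero =>
    exact (idempotentsSplit_of_field K).of_ringEquiv (isEmptyAlgEquiv K (Fin 0)).symm.toRingEquiv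
  | succ n ih =>
    intro l E hE
    obtain ⟨r, f, g, hdet, hbot⟩ := exists_det_submatrix_ne_zero_minorIdeal_succ_eq_bot E
    obtain ⟨N, hN, hdegree⟩ : ∃ N, 1 < N ∧ (E.submatrix f g).det.totalDegree < N :=
      ⟨(E.submatrix f g).det.totalDegree + 2, by omega, by omega⟩
    obtain ⟨θ, c, hc⟩ : ∃ (θ : MvPolynomial (Fin (n + 1)) K ≃+* (MvPolynomial (Fin n) K)[X])
        (c : K), (Polynomial.C (C c) * θ (E.submatrix f g).det).Monic :=
      ⟨(nagataEquiv N n K).toRingEquiv,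
        exists_monic_C_mul_nagataEquiv N n (Field.toIsField K) hdet hN hdegree⟩
    have hEθ : E.map θ * E.map θ = E.map θ := by rw [← Matrix.map_mul, hE]
    have hbotθ : minorIdeal (E.map θ) (r + 1) = ⊥ :=
      by
      have hmap := minorIdeal_map θ.toRingHom E (r + 1)
      rwa [hbot, Ideal.map_bot] at hmap
    have hcθ : (Polynomial.C (C c) * ((E.map θ).submatrix f g).det).Monic := by
      rwa [θ.map_det (E.submatrix f g)] at hc
    have := isStablyFree_range_of_monic ih hEθ hbotθ hcθ
    have := ((unimodularCompletable_mvPolynomial K (n + 1)).of_ringEquiv θ).free_of_isStablyFree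
      (LinearMap.range (E.map θ).mulVecLin)
    obtain ⟨s, P, Q, hPQ, hQP⟩ := exists_mul_eq_of_free_range hEθ
    refine ⟨s, P.map θ.symm, Q.map θ.symm, ?_, ?_⟩
    · rw [← Matrix.map_mul, hPQ]
      ext1
      simp
    · rw [← Matrix.map_mul, hQP]
      simp

end QuillenSuslin

section HasSmithForm

variable {A : Type*} [CommRing A]

/-- All determinantal ideals of `F` are principal. Over a unique factorisation domain this says
that the reduced minors of each size generate the unit ideal. -/
def PrincipalMinorIdeals {ι κ : Type*} (F : Matrix ι κ A) : Prop :=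
  ∀ k, ∃ d, minorIdeal F k = Ideal.span {d}

/-- `F` is equivalent to a diagonal matrix whose successive products of diagonal entries generate
the determinantal ideals of `F`. Only the entries `Φ i` with `i < r` matter. -/
def HasSmithForm {r : ℕ} (F : Matrix (Fin r) (Fin r) A) : Prop :=
  ∃ Φ : ℕ → A, UnimodEquiv F (diagonal fun i : Fin r => Φ i) ∧
    ∀ k ≤ r, minorIdeal F k = Ideal.span {∏ i ∈ Finset.range k, Φ i}

/-- Square matrices with principal determinantal ideals and determinant dividing `q` have a Smith
form. This is the property of `q` that is extended one linear factor at a time. -/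
def SmithReducible (q : A) : Prop :=
  ∀ ⦃r : ℕ⦄ ⦃F : Matrix (Fin r) (Fin r) A⦄, PrincipalMinorIdeals F → F.det ∣ q → HasSmithForm F

/-- The identification of `Unit ⊕ Fin s` with `Fin (s + 1)` splitting off the index `0`. -/
def unitSumFinEquiv (s : ℕ) : Unit ⊕ Fin s ≃ Fin (s + 1) where
  toFun := Sum.elim (fun _ => 0) Fin.succ
  invFun := Fin.cases (Sum.inl ()) Sum.inr
  left_inv := by rintro (_ | i) <;> simp
  right_inv i := by cases i using Fin.cases <;> simp

lemma hasSmithForm_of_isEmpty (F : Matrix (Fin 0) (Fin 0) A) : HasSmithForm F := by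
  refine ⟨1, ?_, fun k hk => ?_⟩
  · rw [Subsingleton.elim F (diagonal _)]
    exact .refl _
  · rw [Nat.le_zero.1 hk, minorIdeal_zero, Finset.range_zero, Finset.prod_empty,
      Ideal.span_singleton_one]

lemma HasSmithForm.of_unimodEquiv {r : ℕ} {F G : Matrix (Fin r) (Fin r) A}
    (h : UnimodEquiv F G) (hG : HasSmithForm G) : HasSmithForm F := by
  obtain ⟨Φ, hGΦ, hΦ⟩ := hG
  exact ⟨Φ, h.trans hGΦ, fun k hk => by rw [h.minorIdeal_eq, hΦ k hk]⟩

lemma principalMinorIdeals_of_lt {r : ℕ} {F : Matrix (Fin r) (Fin r) A}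
    (hF : ∀ k < r, ∃ d, minorIdeal F k = Ideal.span {d}) : PrincipalMinorIdeals F := fun k => by
  rcases lt_trichotomy k r with hk | rfl | hk
  · exact hF k hk
  · exact ⟨F.det, minorIdeal_eq_span_det F⟩
  · exact ⟨0, by rw [minorIdeal_eq_bot_of_card_lt F (by simpa), Ideal.span_singleton_zero]⟩

lemma HasSmithForm.smul {r : ℕ} {F : Matrix (Fin r) (Fin r) A} (c : A) (hF : HasSmithForm F) :
    HasSmithForm (c • F) := by
  obtain ⟨Φ, hFΦ, hΦ⟩ := hF
  refine ⟨fun i => c * Φ i, ?_, fun k hk => ?_⟩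
  · have hsmul := hFΦ.smul c
    rwa [← diagonal_smul] at hsmul
  · rw [minorIdeal_smul, hΦ k hk, Ideal.span_singleton_mul_span_singleton,
      Finset.prod_mul_distrib, Finset.prod_const, Finset.card_range]

lemma diagonal_submatrix_unitSumFinEquiv {s : ℕ} (Φ : ℕ → A) :
    (diagonal fun i : Fin (s + 1) => Nat.casesOn (motive := fun _ => A) i 1 Φ).submatrix
      (unitSumFinEquiv s) (unitSumFinEquiv s) =
        fromBlocks (1 : Matrix Unit Unit A) 0 0 (diagonal fun i : Fin s => Φ i) := by
  rw [submatrix_diagonal_equiv, ← diagonal_one, fromBlocks_diagonal]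
  congr 1
  ext (_ | i) <;> rfl

section

variable {s : ℕ} {F : Matrix (Fin (s + 1)) (Fin (s + 1)) A} {G : Matrix (Fin s) (Fin s) A}

lemma minorIdeal_succ_of_unimodEquiv_fromBlocks_one
    (h : UnimodEquiv (F.submatrix (unitSumFinEquiv s) (unitSumFinEquiv s)) (fromBlocks 1 0 0 G))
    (k : ℕ) : minorIdeal F (k + 1) = minorIdeal G k := by
  rw [← minorIdeal_submatrix_equiv F (unitSumFinEquiv s) (unitSumFinEquiv s), h.minorIdeal_eq,
    minorIdeal_fromBlocks_one_succ]

lemma HasSmithForm.of_unimodEquiv_fromBlocks_one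
    (h : UnimodEquiv (F.submatrix (unitSumFinEquiv s) (unitSumFinEquiv s)) (fromBlocks 1 0 0 G))
    (hG : HasSmithForm G) : HasSmithForm F := by
  obtain ⟨Φ, hGΦ, hΦ⟩ := hG
  refine ⟨fun i => Nat.casesOn i 1 Φ, ?_, fun k hk => ?_⟩
  · have hblock := h.trans ((UnimodEquiv.refl 1).fromBlocks hGΦ)
    rw [← diagonal_submatrix_unitSumFinEquiv] at hblock
    simpa only [submatrix_submatrix, Equiv.self_comp_symm, submatrix_id_id] using
      hblock.of_submatrix
  · cases k with
    | zero => simp [minorIdeal_zero]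
    | succ k =>
      rw [minorIdeal_succ_of_unimodEquiv_fromBlocks_one h, hΦ k (by omega),
        Finset.prod_range_succ']
      exact congrArg _ (congrArg _ (mul_one _).symm)

lemma PrincipalMinorIdeals.of_unimodEquiv_fromBlocks_one
    (h : UnimodEquiv (F.submatrix (unitSumFinEquiv s) (unitSumFinEquiv s)) (fromBlocks 1 0 0 G))
    (hF : PrincipalMinorIdeals F) : PrincipalMinorIdeals G := fun k => by
  rw [← minorIdeal_succ_of_unimodEquiv_fromBlocks_one h]
  exact hF (k + 1)

end

lemma apply_mem_minorIdeal_one {ι κ : Type*} (F : Matrix ι κ A) (i : ι) (j : κ) :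
    F i j ∈ minorIdeal F 1 := by
  simpa using det_submatrix_mem_minorIdeal F (k := 1) (fun _ => i) fun _ => j

lemma PrincipalMinorIdeals.of_smul [IsDomain A] {ι κ : Type*} {F : Matrix ι κ A} {c : A}
    (hc : c ≠ 0) (hF : PrincipalMinorIdeals (c • F)) : PrincipalMinorIdeals F := fun k => by
  obtain ⟨e, he⟩ := hF k
  rw [minorIdeal_smul] at he
  obtain ⟨d, rfl⟩ : c ^ k ∣ e := by
    rw [← Ideal.mem_span_singleton]
    exact Ideal.mul_le_left (he ▸ Ideal.mem_span_singleton_self e)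
  rw [← Ideal.span_singleton_mul_span_singleton] at he
  exact ⟨d, (Ideal.span_singleton_mul_right_inj (pow_ne_zero k hc)).1 he⟩

lemma PrincipalMinorIdeals.exists_eq_smul [IsDomain A] {ι κ : Type*} {F : Matrix ι κ A}
    (hF : PrincipalMinorIdeals F) (hF0 : F ≠ 0) :
    ∃ (c : A) (G : Matrix ι κ A),
      F = c • G ∧ PrincipalMinorIdeals G ∧ minorIdeal G 1 = ⊤ := by
  obtain ⟨c, hc⟩ := hF 1
  have hdvd (i j) : c ∣ F i j := by
    rw [← Ideal.mem_span_singleton, ← hc]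
    exact apply_mem_minorIdeal_one F i j
  choose G hG using hdvd
  obtain rfl : F = c • of G := by
    ext i j
    exact hG i j
  have hc0 : c ≠ 0 := by
    rintro rfl
    exact hF0 (zero_smul _ _)
  refine ⟨c, of G, rfl, hF.of_smul hc0, ?_⟩
  rw [minorIdeal_smul, pow_one] at hc
  exact (Ideal.span_singleton_mul_right_inj hc0).1 (by rw [hc, Ideal.mul_top])

lemma IdempotentsSplit.exists_unimodEquiv_fromBlocks_one [Nontrivial A] (hA : IdempotentsSplit A)
    {s : ℕ} {F U : Matrix (Fin (s + 1)) (Fin (s + 1)) A} (hU : IsUnit U.det)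
    {v : Fin (s + 1) → A} (hv : U *ᵥ (F *ᵥ v) = Pi.single 0 1) :
    ∃ G : Matrix (Fin s) (Fin s) A,
      UnimodEquiv (F.submatrix (unitSumFinEquiv s) (unitSumFinEquiv s)) (fromBlocks 1 0 0 G) := by
  rw [mulVec_mulVec] at hv
  obtain ⟨V, hV, rfl, hrow⟩ := hA.exists_isUnit_det_vecMul_eq_single (congrFun hv 0)
  have hcol (i) : (U * F * V) i 0 = (Pi.single 0 1 : Fin (s + 1) → A) i := congrFun hv i
  replace hrow (j) : (U * F * V) 0 j = (Pi.single 0 1 : Fin (s + 1) → A) j := congrFun hrow j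
  refine ⟨(U * F * V).submatrix Fin.succ Fin.succ, ?_⟩
  have hblock : (U * F * V).submatrix (unitSumFinEquiv s) (unitSumFinEquiv s) =
      fromBlocks 1 0 0 ((U * F * V).submatrix Fin.succ Fin.succ) := by
    ext (i | i) (j | j)
    · exact (hcol 0).trans (by simp)
    · exact (hrow j.succ).trans (by simp)
    · exact (hcol i.succ).trans (by simp)
    · rfl
  rw [← hblock]
  exact (((UnimodEquiv.mul_right hV _).trans (UnimodEquiv.mul_left hU F)).symm).submatrix _ _

end HasSmithForm

section UnimodularImage

lemma span_mulVec_sup_ker_eq_top {A L : Type*} [CommRing A] [CommRing L] {ι κ : Type*}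
    [Fintype κ] {φ : A →+* L} (hφ : Function.Surjective φ) {F : Matrix ι κ A} {v : κ → A}
    (hv : Ideal.span (Set.range (F.map φ *ᵥ (φ ∘ v))) = ⊤) :
    Ideal.span (Set.range (F *ᵥ v)) ⊔ RingHom.ker φ = ⊤ := by
  have hrange : Set.range (F.map φ *ᵥ (φ ∘ v)) = φ '' Set.range (F *ᵥ v) := by
    rw [← Set.range_comp]
    congr 1
    ext i
    exact (RingHom.map_mulVec φ F v i).symm
  rw [hrange, ← Ideal.map_span] at hv
  rw [← Ideal.comap_map_of_surjective' φ hφ, hv, Ideal.comap_top]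

lemma isCoprime_of_sub_one_mem_radical {A : Type*} [CommRing A] {d x : A}
    (hx : x - 1 ∈ (Ideal.span {d}).radical) : IsCoprime d x := by
  obtain ⟨N, hN⟩ := hx
  have hcop : IsCoprime (x - 1) x := ⟨-1, 1, by ring⟩
  exact hcop.pow_left.of_isCoprime_of_dvd_left (Ideal.mem_span_singleton.1 hN)

lemma exists_finite_isMaximal_sInf_eq_radical {B : Type*} [CommRing B] [IsNoetherianRing B]
    [Ring.DimensionLEOne B] {h : B} (hh : h ≠ 0) :
    ∃ T : Set (Ideal B), T.Finite ∧ (∀ p ∈ T, p.IsMaximal) ∧ sInf T = (Ideal.span {h}).radical := by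
  refine ⟨(Ideal.span {h}).minimalPrimes, Ideal.finite_minimalPrimes_of_isNoetherianRing B _,
    fun p hp => hp.1.1.isMaximal ?_, Ideal.sInf_minimalPrimes⟩
  rintro rfl
  exact hh (hp.1.2 (Ideal.mem_span_singleton_self h))

lemma exists_isUnit_det_mulVec_mulVec_eq_single {A : Type*} [CommRing A] {s : ℕ}
    {F Y : Matrix (Fin (s + 1)) (Fin (s + 1)) A} (hY : Y.det = 1) {v : Fin (s + 1) → A}
    (hv : IsCoprime F.det ((Y *ᵥ (F *ᵥ v)) 0)) :
    ∃ (U : Matrix (Fin (s + 1)) (Fin (s + 1)) A) (v' : Fin (s + 1) → A),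
      IsUnit U.det ∧ U *ᵥ (F *ᵥ v') = Pi.single 0 1 := by
  obtain ⟨a, b, hab⟩ := hv
  -- By Cramer's rule the image of `Y * F` contains `det F • e₀`.
  let z : Fin (s + 1) → A := F.adjugate *ᵥ (Y.adjugate *ᵥ Pi.single 0 1)
  have hz : Y *ᵥ (F *ᵥ z) = F.det • Pi.single 0 1 := by
    rw [mulVec_mulVec _ F, mul_adjugate, smul_mulVec, one_mulVec, mulVec_smul, mulVec_mulVec,
      mul_adjugate, hY, one_smul, one_mulVec]
  have hone : (Y *ᵥ (F *ᵥ (a • z + b • v))) 0 = 1 := by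
    simp only [mulVec_add, mulVec_smul, hz, Pi.add_apply, Pi.smul_apply, Pi.single_eq_same,
      smul_eq_mul, mul_one, hab]
  obtain ⟨U, hU, hUY⟩ := SLEquivMod.single_of_sub_one_mem (J := ⊥)
    (v := Y *ᵥ (F *ᵥ (a • z + b • v))) (i := 0) (by simp [hone])
  refine ⟨U * Y, a • z + b • v, by simp [hU, hY], ?_⟩
  rw [← mulVec_mulVec]
  ext i
  exact sub_eq_zero.1 (hUY i)

variable {B : Type*} [CommRing B] [IsDomain B] {k r : ℕ}

lemma PrincipalMinorIdeals.exists_span_map_mulVec_eq_top {L : Type*} [Field L] (φ : B →+* L)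
    {F : Matrix (Fin r) (Fin r) (MvPolynomial (Fin k) B)} (hF : PrincipalMinorIdeals F)
    (hF1 : minorIdeal F 1 = ⊤) {h : B} (hh : h ≠ 0) (hdet : F.det ∣ C h) :
    ∃ v, Ideal.span (Set.range (F.map (MvPolynomial.map φ) *ᵥ v)) = ⊤ := by
  obtain ⟨ρ, f, g, hρ, hρ1⟩ :=
    exists_det_submatrix_ne_zero_minorIdeal_succ_eq_bot (F.map (MvPolynomial.map φ))
  have hρ0 : minorIdeal (F.map (MvPolynomial.map φ)) ρ ≠ ⊥ := fun hbot =>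
    hρ <| by simpa [hbot] using det_submatrix_mem_minorIdeal (F.map (MvPolynomial.map φ)) f g
  have hρr : ρ ≤ r := by
    by_contra! hlt
    exact hρ0 (minorIdeal_eq_bot_of_card_lt _ (by simpa using hlt))
  cases ρ with
  | zero =>
    rw [zero_add, minorIdeal_map, hF1, Ideal.map_top] at hρ1
    exact absurd hρ1 top_ne_bot
  | succ ρ =>
    refine (idempotentsSplit_mvPolynomial L k).exists_mulVec_unimodular ?_ hρ1
    obtain ⟨d, hd⟩ := hF (ρ + 1)
    have hdC : d ∣ C h := by
      refine dvd_trans ?_ hdet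
      rw [← Ideal.mem_span_singleton, ← hd]
      exact minorIdeal_antitone F hρr
        (minorIdeal_eq_span_det F ▸ Ideal.mem_span_singleton_self _)
    obtain ⟨δ, -, rfl⟩ := (MvPolynomial.dvd_C_iff_exists hh).1 hdC
    rw [minorIdeal_map, hd, Ideal.map_span, Set.image_singleton, MvPolynomial.map_C] at hρ0 ⊢
    rw [Ideal.span_singleton_eq_top]
    refine (isUnit_iff_ne_zero.2 fun h0 => hρ0 ?_).map C
    rw [h0, map_zero, Ideal.span_singleton_eq_bot]

lemma PrincipalMinorIdeals.exists_span_mulVec_sup_map_C_eq_top {τ : Type*} [Finite τ]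
    {M : τ → Ideal B} (hmax : ∀ j, (M j).IsMaximal) (hM : Pairwise fun i j => IsCoprime (M i) (M j))
    {F : Matrix (Fin r) (Fin r) (MvPolynomial (Fin k) B)} (hF : PrincipalMinorIdeals F)
    (hF1 : minorIdeal F 1 = ⊤) {h : B} (hh : h ≠ 0) (hdet : F.det ∣ C h) :
    ∃ v, Ideal.span (Set.range (F *ᵥ v)) ⊔ (⨅ j, M j).map C = ⊤ := by
  let φ j : MvPolynomial (Fin k) B →+* MvPolynomial (Fin k) (B ⧸ M j) :=
    MvPolynomial.map (Ideal.Quotient.mk (M j))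
  have hφ j : Function.Surjective (φ j) :=
    MvPolynomial.map_surjective _ Ideal.Quotient.mk_surjective
  have hker j : RingHom.ker (φ j) = (M j).map C := ker_map_mk
  have hlocal j : ∃ v, Ideal.span (Set.range (F.map (φ j) *ᵥ (φ j ∘ v))) = ⊤ := by
    let := Ideal.Quotient.field (M j)
    obtain ⟨v, hv⟩ := hF.exists_span_map_mulVec_eq_top (Ideal.Quotient.mk (M j)) hF1 hh hdet
    obtain ⟨v, rfl⟩ := (hφ j).comp_left v
    exact ⟨v, hv⟩
  choose w hw using hlocal
  choose v hv using fun i =>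
    Ideal.exists_forall_sub_mem_ideal (isCoprime_map_C (σ := Fin k) hM) fun j => w j i
  refine ⟨v, ?_⟩
  have hφv j : φ j ∘ v = φ j ∘ w j := funext fun i => by
    have hmem := hv i j
    rwa [← hker, RingHom.mem_ker, map_sub, sub_eq_zero] at hmem
  rw [map_C_iInf]
  cases nonempty_fintype τ
  simpa using Ideal.sup_iInf_eq_top (s := Finset.univ) fun j _ => by
    rw [← hker]
    exact span_mulVec_sup_ker_eq_top (hφ j) (by rw [hφv, hw])

variable [IsNoetherianRing B] [Ring.DimensionLEOne B]

lemma PrincipalMinorIdeals.exists_mulVec_mulVec_eq_single {s : ℕ}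
    {F : Matrix (Fin (s + 1)) (Fin (s + 1)) (MvPolynomial (Fin k) B)}
    (hF : PrincipalMinorIdeals F) (hF1 : minorIdeal F 1 = ⊤) {h : B} (hh : h ≠ 0)
    (hdet : F.det ∣ C h) :
    ∃ (U : Matrix (Fin (s + 1)) (Fin (s + 1)) (MvPolynomial (Fin k) B))
      (v : Fin (s + 1) → MvPolynomial (Fin k) B),
      IsUnit U.det ∧ U *ᵥ (F *ᵥ v) = Pi.single 0 1 := by
  cases s with
  | zero =>
    have hunit : IsUnit F.det := by
      rwa [← Ideal.span_singleton_eq_top, ← minorIdeal_eq_span_det]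
    refine ⟨1, F⁻¹ *ᵥ Pi.single 0 1, by simp, ?_⟩
    rw [one_mulVec, mulVec_mulVec, mul_nonsing_inv _ hunit, one_mulVec]
  | succ s =>
    obtain ⟨T, hTfin, hT, hTh⟩ := exists_finite_isMaximal_sInf_eq_radical hh
    have := hTfin.to_subtype
    have hmax (p : T) : p.1.IsMaximal := hT p p.2
    have hcop : Pairwise fun p q : T => IsCoprime p.1 q.1 := fun p q hpq =>
      Ideal.isCoprime_iff_sup_eq.2
        ((hmax p).coprime_of_ne (hmax q) fun heq => hpq (Subtype.ext heq))
    obtain ⟨v, hv⟩ := hF.exists_span_mulVec_sup_map_C_eq_top hmax hcop hF1 hh hdet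
    obtain ⟨Y, hY, hYv⟩ := SLEquivMod.single_zero_of_span_sup_map_C_eq_top hmax hcop hv
    refine exists_isUnit_det_mulVec_mulVec_eq_single hY (v := v) ?_
    refine (isCoprime_of_sub_one_mem_radical ?_).of_isCoprime_of_dvd_left hdet
    have hmem := hYv 0
    rw [← sInf_eq_iInf', hTh] at hmem
    simpa [Ideal.map_span] using Ideal.map_radical_le _ hmem

theorem smithReducible_C (hQ : IdempotentsSplit (MvPolynomial (Fin k) B)) {h : B} (hh : h ≠ 0) :
    SmithReducible (C h : MvPolynomial (Fin k) B) := by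
  intro r F hF hdet
  induction r with
  | zero => exact hasSmithForm_of_isEmpty F
  | succ s ih =>
    have hF0 : F ≠ 0 := by
      rintro rfl
      rw [det_zero, zero_dvd_iff, C_eq_zero] at hdet
      exact hh hdet
    obtain ⟨c, G, rfl, hG, hG1⟩ := hF.exists_eq_smul hF0
    have hdetG : G.det ∣ C h := by
      rw [det_smul] at hdet
      exact dvd_of_mul_left_dvd hdet
    obtain ⟨U, v, hU, hv⟩ := hG.exists_mulVec_mulVec_eq_single hG1 hh hdetG
    obtain ⟨G', hG'⟩ := hQ.exists_unimodEquiv_fromBlocks_one hU hv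
    have hdetG' : G'.det ∣ G.det := by
      rw [← Ideal.mem_span_singleton, ← minorIdeal_eq_span_det,
        ← minorIdeal_succ_of_unimodEquiv_fromBlocks_one hG', minorIdeal_eq_span_det]
      exact Ideal.mem_span_singleton_self _
    refine HasSmithForm.smul c (.of_unimodEquiv_fromBlocks_one hG' ?_)
    exact ih (hG.of_unimodEquiv_fromBlocks_one hG') (hdetG'.trans hdetG)

end UnimodularImage

section LastDiagonalEntry

variable {R : Type*} [CommRing R] {s : ℕ}

lemma prod_mul_mem_minorIdeal_fromBlocks {ι κ : Type*} (Φ : ℕ → R) (g : Matrix ι (Fin s) R)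
    (c : Matrix ι κ R) (a : ι) (j : Fin s) :
    (∏ i ∈ Finset.range j, Φ i) * g a j ∈
      minorIdeal (fromBlocks (diagonal fun i : Fin s => Φ i) 0 g c) (j + 1) := by
  let f : Fin (j + 1) → Fin s ⊕ ι :=
    Fin.snoc (fun i : Fin j => Sum.inl (i.castLE j.2.le)) (Sum.inr a)
  let f' : Fin (j + 1) → Fin s ⊕ κ := fun i => Sum.inl (i.castLE j.2)
  have hmem := det_submatrix_mem_minorIdeal (fromBlocks (diagonal fun i : Fin s => Φ i) 0 g c) f f'
  rw [det_of_isLowerTriangular, Fin.prod_univ_castSucc] at hmem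
  · convert hmem
    · rw [← Fin.prod_univ_eq_prod_range]
      refine Finset.prod_congr rfl fun i _ => ?_
      simp [f, f']
    · simp only [f, f', submatrix_apply, Fin.snoc_last, fromBlocks_apply₂₁]
      rfl
  · intro i i' (hii' : i < i')
    cases i using Fin.lastCases with
    | last => exact absurd hii' (Fin.le_last i').not_gt
    | cast i =>
      have hne : i.castLE j.2.le ≠ i'.castLE j.2 := fun h =>
        hii'.ne (Fin.ext (by simpa using congrArg Fin.val h))
      simp [f, f', diagonal_apply_ne _ hne]

lemma unimodEquiv_fromBlocks_diagonal_of_dvd {ι κ σ : Type*} [Fintype ι] [Fintype κ] [Fintype σ]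
    [DecidableEq ι] [DecidableEq κ] [DecidableEq σ] {Φ : σ → R} {g : Matrix ι σ R}
    (hg : ∀ i j, Φ j ∣ g i j) (c : Matrix ι κ R) :
    UnimodEquiv (fromBlocks (diagonal Φ) 0 g c) (fromBlocks (diagonal Φ) 0 0 c) := by
  choose x hx using hg
  have hg : g = of x * diagonal Φ := by
    ext i j
    rw [mul_diagonal, of_apply, mul_comm, hx]
  have hclear : fromBlocks (diagonal Φ) 0 g c =
      (fromBlocks 1 0 (of x) 1 : Matrix (σ ⊕ ι) (σ ⊕ ι) R) * fromBlocks (diagonal Φ) 0 0 c := by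
    rw [hg, Matrix.fromBlocks_multiply]
    simp
  rw [hclear]
  exact .mul_left (by simp) _

lemma UnimodEquiv.exists_fromBlocks_zero {ι κ ι' κ' : Type*} [Fintype ι] [Fintype κ] [Fintype ι']
    [Fintype κ'] [DecidableEq ι] [DecidableEq κ] [DecidableEq ι'] [DecidableEq κ']
    {F G : Matrix ι κ R} (h : UnimodEquiv F G) (a : Matrix ι' κ R) (c : Matrix ι' κ' R) :
    ∃ a', UnimodEquiv (Matrix.fromBlocks F 0 a c) (Matrix.fromBlocks G 0 a' c) := by
  obtain ⟨U, V, hU, hV, rfl⟩ := h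
  refine ⟨a * V⁻¹, Matrix.fromBlocks U 0 0 1, Matrix.fromBlocks V 0 0 1, by simpa, by simpa, ?_⟩
  simp [fromBlocks_multiply, Matrix.mul_assoc, nonsing_inv_mul _ hV]

lemma diagonal_update_submatrix_finSumFinEquiv (Φ : ℕ → R) (c : Matrix (Fin 1) (Fin 1) R) :
    (diagonal fun i : Fin (s + 1) => Function.update Φ s (c 0 0) i).submatrix finSumFinEquiv
      finSumFinEquiv = fromBlocks (diagonal fun i : Fin s => Φ i) 0 0 c := by
  have hc : c = diagonal fun _ => c 0 0 := by
    ext i j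
    rw [Subsingleton.elim i 0, Subsingleton.elim j 0, diagonal_apply_eq]
  rw [submatrix_diagonal_equiv, hc, fromBlocks_diagonal]
  congr 1
  ext (i | i)
  · simp [Function.update_of_ne i.2.ne]
  · simp [Subsingleton.elim i 0]

variable [IsDomain R] {F : Matrix (Fin (s + 1)) (Fin (s + 1)) R}

lemma hasSmithForm_of_unimodEquiv_fromBlocks_diagonal {Φ : ℕ → R} {g : Matrix (Fin 1) (Fin s) R}
    {c : Matrix (Fin 1) (Fin 1) R}
    (hF : UnimodEquiv (F.submatrix finSumFinEquiv finSumFinEquiv)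
      (fromBlocks (diagonal fun i : Fin s => Φ i) 0 g c))
    (hΦ : ∀ k ≤ s, minorIdeal F k = Ideal.span {∏ i ∈ Finset.range k, Φ i})
    (hne : ∏ i ∈ Finset.range s, Φ i ≠ 0) : HasSmithForm F := by
  have hdvd (a : Fin 1) (j : Fin s) : Φ j ∣ g a j := by
    have hmem := prod_mul_mem_minorIdeal_fromBlocks Φ g c a j
    rw [← hF.minorIdeal_eq, minorIdeal_submatrix_equiv, hΦ _ j.2, Ideal.mem_span_singleton,
      Finset.prod_range_succ] at hmem
    refine (mul_dvd_mul_iff_left ?_).1 hmem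
    exact ne_zero_of_dvd_ne_zero hne (Finset.prod_dvd_prod_of_subset _ _ _
      (Finset.range_subset_range.2 j.2.le))
  have hdiag := hF.trans (unimodEquiv_fromBlocks_diagonal_of_dvd hdvd c)
  rw [← diagonal_update_submatrix_finSumFinEquiv] at hdiag
  replace hdiag := hdiag.of_submatrix
  simp only [submatrix_submatrix, Equiv.self_comp_symm, submatrix_id_id] at hdiag
  refine ⟨_, hdiag, fun k hk => ?_⟩
  rcases hk.lt_or_eq with hk | rfl
  · rw [hΦ k (by omega), Finset.prod_update_of_notMem (by simp; omega)]
  · rw [hdiag.minorIdeal_eq, minorIdeal_eq_span_det, det_diagonal,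
      Fin.prod_univ_eq_prod_range (Function.update Φ s (c 0 0))]

lemma hasSmithForm_of_submatrix_castSucc_mul {V : Matrix (Fin (s + 1)) (Fin (s + 1)) R}
    (hV : IsUnit V.det) {G : Matrix (Fin s) (Fin s) R}
    (hFV : (F.submatrix Fin.castSucc id * V).submatrix id finSumFinEquiv = fromCols G 0)
    (hG : HasSmithForm G) (hFG : ∀ k ≤ s, minorIdeal F k = minorIdeal G k) (hdet : G.det ≠ 0) :
    HasSmithForm F := by
  obtain ⟨Φ, hGΦ, hΦ⟩ := hG
  let M := (F * V).submatrix (finSumFinEquiv (m := s) (n := 1)) (finSumFinEquiv (m := s) (n := 1))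
  have hM : M = fromBlocks G 0 M.toBlocks₂₁ M.toBlocks₂₂ := by
    rw [← M.fromBlocks_toBlocks, toBlocks_fromBlocks₂₁, toBlocks_fromBlocks₂₂]
    congr 1
    · ext i j
      exact congrFun (congrFun hFV i) (Sum.inl j)
    · ext i j
      exact congrFun (congrFun hFV i) (Sum.inr j)
  obtain ⟨g, hg⟩ := hGΦ.exists_fromBlocks_zero M.toBlocks₂₁ M.toBlocks₂₂
  rw [← hM] at hg
  refine hasSmithForm_of_unimodEquiv_fromBlocks_diagonal
    (((UnimodEquiv.mul_right hV F).submatrix _ _).symm.trans hg)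
    (fun k hk => (hFG k hk).trans (hΦ k hk)) fun h0 => hdet ?_
  simpa [minorIdeal_eq_span_det, h0] using hΦ s le_rfl

end LastDiagonalEntry

section ScaleLast

variable {R : Type*} [CommRing R] {s : ℕ} {p : R}

/-- The diagonal matrix `diag(1, …, 1, p)`. -/
def scaleLast (s : ℕ) (p : R) : Matrix (Fin (s + 1)) (Fin (s + 1)) R :=
  diagonal fun i => if i = Fin.last s then p else 1

lemma det_scaleLast (s : ℕ) (p : R) : (scaleLast s p).det = p := by
  simp [scaleLast, det_diagonal]

lemma exists_eq_scaleLast_mul {κ : Type*} {F : Matrix (Fin (s + 1)) κ R}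
    (hF : ∀ j, p ∣ F (Fin.last s) j) : ∃ G : Matrix (Fin (s + 1)) κ R, F = scaleLast s p * G := by
  choose w hw using hF
  refine ⟨F.updateRow (Fin.last s) w, ?_⟩
  ext i j
  rw [scaleLast, diagonal_mul]
  by_cases hi : i = Fin.last s
  · subst hi
    simp [hw]
  · simp [hi]

lemma exists_eq_mul_scaleLast {ι : Type*} {F : Matrix ι (Fin (s + 1)) R}
    (hF : ∀ i, p ∣ F i (Fin.last s)) : ∃ G : Matrix ι (Fin (s + 1)) R, F = G * scaleLast s p := by
  obtain ⟨G, hG⟩ := exists_eq_scaleLast_mul (F := Fᵀ) hF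
  refine ⟨Gᵀ, ?_⟩
  rw [← transpose_transpose F, hG, transpose_mul, scaleLast, diagonal_transpose]

lemma exists_scaleLast_mul_eq [IsDomain R] (hp : p ≠ 0)
    {N : Matrix (Fin (s + 1)) (Fin (s + 1)) R} (hN : ∀ i j, p ∣ (N - 1) i j) :
    ∃ Y : Matrix (Fin (s + 1)) (Fin (s + 1)) R,
      Y.det = N.det ∧ scaleLast s p * N = Y * scaleLast s p := by
  obtain ⟨Y, hY⟩ := exists_eq_mul_scaleLast (F := scaleLast s p * N) (p := p) fun i => by
    rw [scaleLast, diagonal_mul]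
    by_cases hi : i = Fin.last s
    · rw [if_pos hi]
      exact dvd_mul_right _ _
    · simpa [hi, one_apply] using hN i (Fin.last s)
  refine ⟨Y, ?_, hY⟩
  have hdet := congrArg det hY
  rw [det_mul, det_mul, det_scaleLast, mul_comm] at hdet
  exact (mul_right_cancel₀ hp hdet).symm

lemma dvd_of_dvd_pow_mul [IsDomain R] (hp : Prime p) {d x : R} (hd : ¬p ∣ d) :
    ∀ a : ℕ, d ∣ p ^ a * x → d ∣ x
  | 0, h => by simpa using h
  | a + 1, h => by
    rw [pow_succ', mul_assoc] at h
    exact dvd_of_dvd_pow_mul hp hd a ((hp.left_dvd_or_dvd_right_of_dvd_mul h).resolve_left hd)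

lemma exists_det_scaleLast_mul_submatrix {κ : Type*} (F : Matrix (Fin (s + 1)) κ R) (p : R)
    {k : ℕ} (f : Fin k → Fin (s + 1)) (g : Fin k → κ) :
    ∃ a, ((scaleLast s p * F).submatrix f g).det = p ^ a * (F.submatrix f g).det := by
  have hmul : (scaleLast s p * F).submatrix f g =
      diagonal (fun i => if f i = Fin.last s then p else 1) * F.submatrix f g := by
    ext i j
    rw [scaleLast, submatrix_apply, diagonal_mul, diagonal_mul, submatrix_apply]
  rw [hmul, det_mul, det_diagonal, Finset.prod_ite, Finset.prod_const, Finset.prod_const, one_pow,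
    mul_one]
  exact ⟨_, rfl⟩

lemma minorIdeal_eq_of_scaleLast_mul [IsDomain R] (hp : Prime p) {κ : Type*}
    {F : Matrix (Fin (s + 1)) κ R} {k : ℕ} {d : R}
    (hd : minorIdeal (scaleLast s p * F) k = Ideal.span {d}) (hpd : ¬p ∣ d) :
    minorIdeal F k = Ideal.span {d} := by
  refine le_antisymm (minorIdeal_le fun f g => ?_) (hd ▸ minorIdeal_mul_le_right _ _ _)
  obtain ⟨a, ha⟩ := exists_det_scaleLast_mul_submatrix F p f g
  have hmem := det_submatrix_mem_minorIdeal (scaleLast s p * F) f g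
  rw [hd, Ideal.mem_span_singleton, ha] at hmem
  exact Ideal.mem_span_singleton.2 (dvd_of_dvd_pow_mul hp hpd a hmem)

lemma minorIdeal_submatrix_castSucc {κ : Type*} {F : Matrix (Fin (s + 1)) κ R}
    (hF : ∀ j, F (Fin.last s) j = 0) (k : ℕ) :
    minorIdeal (F.submatrix Fin.castSucc id) k = minorIdeal F k := by
  have hrows : F.submatrix (finSumFinEquiv (m := s) (n := 1)) (Equiv.refl κ) =
      fromRows (F.submatrix Fin.castSucc id) 0 := by
    ext (i | i) j
    · rfl
    · rw [Subsingleton.elim i 0]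
      exact hF j
  rw [← minorIdeal_fromRows_zero (ν := Fin 1), ← hrows, minorIdeal_submatrix_equiv]

lemma not_dvd_of_minorIdeal_eq_span [IsDomain R] (hp : Prime p)
    {F : Matrix (Fin (s + 1)) (Fin (s + 1)) R} {d δ : R} (hdet : F.det = p * δ) (hδ : ¬p ∣ δ)
    (hd : minorIdeal F s = Ideal.span {d}) : ¬p ∣ d := by
  intro hpd
  have hadj (i j) : p ∣ F.adjugate i j := by
    rw [adjugate_fin_succ_eq_det_submatrix]
    refine (hpd.trans ?_).mul_left _
    rw [← Ideal.mem_span_singleton, ← hd]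
    exact det_submatrix_mem_minorIdeal _ _ _
  choose A hA using hadj
  have hAadj : F.adjugate = p • of A := by
    ext i j
    exact hA i j
  have hpow := det_adjugate F
  rw [hAadj, det_smul, hdet, Fintype.card_fin, Nat.add_sub_cancel, mul_pow, pow_succ,
    mul_assoc] at hpow
  exact hδ (hp.dvd_of_dvd_pow ⟨_, (mul_left_cancel₀ (pow_ne_zero s hp.ne_zero) hpow).symm⟩)

end ScaleLast

section LinearFactor

variable {R : Type*} [CommRing R] {ε : R →+* R} {p q : R} {s : ℕ}

/-- `ε` is a retraction of `R` onto a subring, with kernel generated by `p`, which fixes every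
divisor of `q`. For `p = z_i - f_i` in a polynomial ring it is the substitution `z_i ↦ f_i`. -/
structure IsLinearFactorRetraction (ε : R →+* R) (p q : R) : Prop where
  map_self : ε p = 0
  dvd_sub : ∀ x, p ∣ x - ε x
  map_eq_of_dvd : ∀ d, d ∣ q → ε d = d
  ne_zero_left : p ≠ 0
  ne_zero_right : q ≠ 0

namespace IsLinearFactorRetraction

lemma dvd_iff (h : IsLinearFactorRetraction ε p q) {x : R} : p ∣ x ↔ ε x = 0 := by
  constructor
  · rintro ⟨y, rfl⟩
    rw [map_mul, h.map_self, zero_mul]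
  · intro hx
    simpa [hx] using h.dvd_sub x

lemma map_map (h : IsLinearFactorRetraction ε p q) (x : R) : ε (ε x) = ε x := by
  rw [← sub_eq_zero, ← neg_eq_zero, ← map_sub, ← map_neg, neg_sub]
  exact h.dvd_iff.1 (h.dvd_sub x)

lemma not_dvd_of_dvd (h : IsLinearFactorRetraction ε p q) {d : R} (hd : d ∣ q) : ¬p ∣ d := by
  rw [h.dvd_iff, h.map_eq_of_dvd d hd]
  exact ne_zero_of_dvd_ne_zero h.ne_zero_right hd

lemma prime [IsDomain R] (h : IsLinearFactorRetraction ε p q) : Prime p := by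
  refine ⟨h.ne_zero_left, fun hp => h.not_dvd_of_dvd (one_dvd q) hp.dvd, fun x y hxy => ?_⟩
  rwa [h.dvd_iff, map_mul, mul_eq_zero, ← h.dvd_iff, ← h.dvd_iff] at hxy

lemma minorIdeal_map_eq (h : IsLinearFactorRetraction ε p q) {ι κ : Type*} {F : Matrix ι κ R}
    {k : ℕ} {d : R} (hd : minorIdeal F k = Ideal.span {d}) (hdq : d ∣ q) :
    minorIdeal (F.map ε) k = Ideal.span {d} := by
  rw [minorIdeal_map, hd, Ideal.map_span, Set.image_singleton, h.map_eq_of_dvd d hdq]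

variable [IsDomain R]

/-- Over `R / (p)` the last row vanishes, so the first `s` rows carry all the minors of size at
most `s` and the induction hypothesis applies to them. -/
lemma hasSmithForm_scaleLast_mul_of_map_eq (hR : IdempotentsSplit R)
    (h : IsLinearFactorRetraction ε p q) (hq : SmithReducible q)
    {G : Matrix (Fin (s + 1)) (Fin (s + 1)) R} (hG : G.map ε = G) {d : ℕ → R}
    (hd : ∀ k ≤ s, minorIdeal (scaleLast s p * G) k = Ideal.span {d k}) (hdq : ∀ k ≤ s, d k ∣ q) :
    HasSmithForm (scaleLast s p * G) := by
  have hrows : (scaleLast s p * G).submatrix Fin.castSucc id = G.submatrix Fin.castSucc id := by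
    ext i j
    simp [scaleLast, diagonal_mul]
  have hT (k : ℕ) (hk : k ≤ s) :
      minorIdeal (G.submatrix Fin.castSucc id) k = Ideal.span {d k} := by
    rw [← h.minorIdeal_map_eq (hd k hk) (hdq k hk), ← minorIdeal_submatrix_castSucc]
    · rw [submatrix_map, hrows, ← submatrix_map, hG]
    · intro j
      simp [scaleLast, diagonal_mul, h.map_self]
  have hds : d s ≠ 0 := ne_zero_of_dvd_ne_zero h.ne_zero_right (hdq s le_rfl)
  obtain ⟨s', hs', V, H, hV, hVH⟩ := hR.exists_mul_eq_fromCols_zero (hT s le_rfl) hds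
    (minorIdeal_eq_bot_of_card_lt _ (by simp))
  obtain rfl : s' = 1 := by omega
  have hH (k : ℕ) : minorIdeal H k = minorIdeal (G.submatrix Fin.castSucc id) k := by
    rw [← (UnimodEquiv.mul_right hV _).minorIdeal_eq, ← minorIdeal_fromCols_zero (ν := Fin 1),
      ← hVH]
    exact minorIdeal_submatrix_equiv _ (Equiv.refl _) _ k
  have hspan : Ideal.span {H.det} = Ideal.span {d s} := by
    rw [← minorIdeal_eq_span_det, hH, hT s le_rfl]
  have hdet : H.det ∣ q := (Ideal.span_singleton_le_span_singleton.1 hspan.ge).trans (hdq s le_rfl)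
  refine hasSmithForm_of_submatrix_castSucc_mul hV (by rw [hrows]; exact hVH)
    (hq (principalMinorIdeals_of_lt fun k hk => ⟨d k, by rw [hH, hT k hk.le]⟩) hdet)
    (fun k hk => by rw [hH, hT k hk, hd k hk]) (ne_zero_of_dvd_ne_zero h.ne_zero_right hdet)

/-- Factoring `W = N * ε W` with `N ≡ 1` modulo `p`, the factor `N` can be moved to the left of
`diag(1, …, 1, p)`. -/
lemma exists_unimodEquiv_scaleLast_mul (h : IsLinearFactorRetraction ε p q)
    {F : Matrix (Fin (s + 1)) (Fin (s + 1)) R} {D : Matrix (Fin (s + 1)) (Fin (s + 1)) R}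
    (hFD : UnimodEquiv F D) (hD : D.map ε = D) :
    ∃ G : Matrix (Fin (s + 1)) (Fin (s + 1)) R,
      G.map ε = G ∧ UnimodEquiv (scaleLast s p * F) (scaleLast s p * G) := by
  obtain ⟨W, V, hW, hV, rfl⟩ := hFD
  have hWε : IsUnit (W.map ε).det := by
    simpa [RingHom.map_det] using hW.map ε
  obtain ⟨Y, hY, hYN⟩ := exists_scaleLast_mul_eq h.ne_zero_left (s := s)
    (N := W * (W.map ε)⁻¹) fun i j => by
      have hsub : W * (W.map ε)⁻¹ - 1 = (W - W.map ε) * (W.map ε)⁻¹ := by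
        rw [Matrix.sub_mul, mul_nonsing_inv _ hWε]
      rw [hsub, Matrix.mul_apply]
      exact Finset.dvd_sum fun x _ => (h.dvd_sub _).mul_right _
  refine ⟨W.map ε * D, ?_, Y, V, ?_, hV, ?_⟩
  · rw [Matrix.map_mul, hD]
    congr 1
    ext i j
    exact h.map_map _
  · rw [hY, det_mul]
    exact hW.mul (isUnit_nonsing_inv_det _ hWε)
  · rw [← Matrix.mul_assoc Y, ← hYN]
    simp only [Matrix.mul_assoc]
    rw [nonsing_inv_mul_cancel_left _ _ hWε]

lemma hasSmithForm_scaleLast_mul (hR : IdempotentsSplit R)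
    (h : IsLinearFactorRetraction ε p q) (hq : SmithReducible q)
    {F : Matrix (Fin (s + 1)) (Fin (s + 1)) R} {d : ℕ → R}
    (hd : ∀ k ≤ s, minorIdeal (scaleLast s p * F) k = Ideal.span {d k}) (hdq : ∀ k ≤ s, d k ∣ q)
    (hdet : F.det ∣ q) : HasSmithForm (scaleLast s p * F) := by
  have hF : PrincipalMinorIdeals F := principalMinorIdeals_of_lt fun k hk =>
    ⟨d k, minorIdeal_eq_of_scaleLast_mul h.prime (hd k (by omega))
      (h.not_dvd_of_dvd (hdq k (by omega)))⟩
  obtain ⟨Φ, hFΦ, hΦ⟩ := hq hF hdet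
  have hΦq (i : Fin (s + 1)) : Φ i ∣ q := by
    have hspan := hΦ (s + 1) le_rfl
    rw [minorIdeal_eq_span_det, ← Fin.prod_univ_eq_prod_range] at hspan
    exact ((Finset.dvd_prod_of_mem _ (Finset.mem_univ i)).trans
      (Ideal.span_singleton_le_span_singleton.1 hspan.le)).trans hdet
  obtain ⟨G, hG, hFG⟩ := h.exists_unimodEquiv_scaleLast_mul hFΦ (by
    ext i j
    rcases eq_or_ne i j with rfl | hij
    · simp [h.map_eq_of_dvd _ (hΦq i)]
    · simp [hij])
  exact .of_unimodEquiv hFG (h.hasSmithForm_scaleLast_mul_of_map_eq hR hq hG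
    (fun k hk => by rw [← hFG.minorIdeal_eq, hd k hk]) hdq)

lemma exists_unimodEquiv_eq_scaleLast_mul (hR : IdempotentsSplit R)
    (h : IsLinearFactorRetraction ε p q) {F : Matrix (Fin (s + 1)) (Fin (s + 1)) R} {d : R}
    (hd : minorIdeal F s = Ideal.span {d}) (hdq : d ∣ q) (hdet : p ∣ F.det) :
    ∃ G : Matrix (Fin (s + 1)) (Fin (s + 1)) R,
      UnimodEquiv F (scaleLast s p * G) ∧ Associated F.det (p * G.det) := by
  have hbot : minorIdeal (F.map ε) (s + 1) = ⊥ := by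
    rw [minorIdeal_eq_span_det, ← RingHom.mapMatrix_apply, ← RingHom.map_det, h.dvd_iff.1 hdet,
      Ideal.span_singleton_eq_bot]
  obtain ⟨s', hs', U, H, hU, hUH⟩ := hR.exists_mul_eq_fromRows_zero (h.minorIdeal_map_eq hd hdq)
    (ne_zero_of_dvd_ne_zero h.ne_zero_right hdq) hbot
  obtain rfl : s' = 1 := by omega
  have hUε : IsUnit (U.map ε).det := by
    simpa [RingHom.map_det] using hU.map ε
  have hmap : (U.map ε * F).map ε = (U * F.map ε).map ε := by
    ext i j
    simp [Matrix.mul_apply, h.map_map]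
  obtain ⟨G, hG⟩ := exists_eq_scaleLast_mul (F := U.map ε * F) (p := p) fun j => by
    have hlast : (U * F.map ε) (Fin.last s) j = 0 := congrFun (congrFun hUH (Sum.inr 0)) j
    rw [h.dvd_iff, ← map_apply (f := ε), hmap, map_apply, hlast, map_zero]
  refine ⟨G, hG ▸ (UnimodEquiv.mul_left hUε F).symm, ?_⟩
  rw [← det_scaleLast s p, ← det_mul, ← hG, det_mul]
  exact (associated_unit_mul_right _ _ hUε)

end IsLinearFactorRetraction

theorem SmithReducible.mul [IsDomain R] (hR : IdempotentsSplit R)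
    (h : IsLinearFactorRetraction ε p q) (hq : SmithReducible q) : SmithReducible (p * q) := by
  intro r F hF hdet
  by_cases hp : p ∣ F.det
  swap
  · exact hq hF ((h.prime.left_dvd_or_dvd_right_of_dvd_mul hdet).resolve_left hp)
  obtain ⟨δ, hδ⟩ := hp
  have hδq : δ ∣ q := by rwa [hδ, mul_dvd_mul_iff_left h.ne_zero_left] at hdet
  obtain _ | s := r
  · exact absurd ⟨δ, by rw [← hδ, det_fin_zero]⟩ (h.not_dvd_of_dvd (one_dvd q))
  choose d hd using hF
  have hdle (k : ℕ) (hk : k ≤ s) : d k ∣ d s := by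
    simpa only [hd, Ideal.span_singleton_le_span_singleton] using minorIdeal_antitone F hk
  have hds : d s ∣ q := by
    have hdvd : d s ∣ F.det := by
      rw [← Ideal.span_singleton_le_span_singleton, ← minorIdeal_eq_span_det, ← hd]
      exact minorIdeal_succ_le F s
    rw [hδ] at hdvd
    exact ((h.prime.left_dvd_or_dvd_right_of_dvd_mul hdvd).resolve_left
      (not_dvd_of_minorIdeal_eq_span h.prime hδ (h.not_dvd_of_dvd hδq) (hd s))).trans hδq
  obtain ⟨G, hFG, hG⟩ := h.exists_unimodEquiv_eq_scaleLast_mul hR (hd s) hds ⟨δ, hδ⟩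
  rw [hδ] at hG
  exact .of_unimodEquiv hFG (h.hasSmithForm_scaleLast_mul hR hq
    (fun k _ => by rw [← hFG.minorIdeal_eq, hd]) (fun k hk => (hdle k hk).trans hds)
    (((mul_dvd_mul_iff_left h.ne_zero_left).1 hG.symm.dvd).trans hδq))

end LinearFactor

section BaseChange

variable {A B : Type*} [CommRing A] [CommRing B]

lemma PrincipalMinorIdeals.map (φ : A →+* B) {ι κ : Type*} {F : Matrix ι κ A}
    (hF : PrincipalMinorIdeals F) : PrincipalMinorIdeals (F.map φ) := fun k => by
  obtain ⟨d, hd⟩ := hF k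
  exact ⟨φ d, by rw [minorIdeal_map, hd, Ideal.map_span, Set.image_singleton]⟩

lemma HasSmithForm.map (φ : A →+* B) {r : ℕ} {F : Matrix (Fin r) (Fin r) A}
    (hF : HasSmithForm F) : HasSmithForm (F.map φ) := by
  obtain ⟨Φ, hFΦ, hΦ⟩ := hF
  refine ⟨fun i => φ (Φ i), ?_, fun k hk => ?_⟩
  · have hmap := hFΦ.map φ
    rwa [diagonal_map (map_zero φ)] at hmap
  · rw [minorIdeal_map, hΦ k hk, Ideal.map_span, Set.image_singleton, map_prod]

lemma SmithReducible.of_ringEquiv (e : A ≃+* B) {q : A}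
    (hq : SmithReducible (e q)) : SmithReducible q := by
  intro r F hF hdet
  have hFe := hq (hF.map (e : A →+* B)) (by
    rw [← RingHom.mapMatrix_apply, ← RingHom.map_det]
    exact map_dvd e hdet)
  have hFF : (F.map (e : A →+* B)).map (e.symm : B →+* A) = F := by
    ext i j
    simp
  exact hFF ▸ hFe.map (e.symm : B →+* A)

end BaseChange

section PolynomialRing

variable {K σ : Type*} [CommRing K]

lemma aeval_update_of_notMem_vars [DecidableEq σ] {a : σ} {x : MvPolynomial σ K} (ha : a ∉ x.vars)
    (g : MvPolynomial σ K) : aeval (Function.update X a g) x = x := by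
  refine (hom_congr_vars
    (f₁ := (aeval (Function.update X a g) : MvPolynomial σ K →ₐ[K] _).toRingHom)
    (f₂ := RingHom.id _) (by ext; simp) (fun i hi _ => ?_) rfl).trans rfl
  have hia : i ≠ a := fun h => ha (h ▸ hi)
  simp [hia]

lemma X_sub_dvd_sub_aeval_update [DecidableEq σ] (a : σ) (g x : MvPolynomial σ K) :
    X a - g ∣ x - aeval (Function.update X a g) x := by
  rw [← Ideal.mem_span_singleton, ← Ideal.Quotient.eq]
  have hcomp : Ideal.Quotient.mkₐ K (Ideal.span {X a - g}) =
      (Ideal.Quotient.mkₐ K (Ideal.span {X a - g})).comp (aeval (Function.update X a g)) := by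
    refine MvPolynomial.algHom_ext fun i => ?_
    rw [AlgHom.comp_apply, aeval_X]
    rcases eq_or_ne i a with rfl | hi
    · rw [Function.update_self]
      exact Ideal.Quotient.eq.2 (Ideal.mem_span_singleton_self _)
    · rw [Function.update_of_ne hi]
  exact DFunLike.congr_fun hcomp x

lemma notMem_vars_of_dvd [IsDomain K] {a : σ} {x y : MvPolynomial σ K} (hxy : x ∣ y) (hy : y ≠ 0)
    (ha : a ∉ y.vars) : a ∉ x.vars := by
  obtain ⟨z, rfl⟩ := hxy
  rw [mem_vars_iff_degreeOf_ne_zero, not_not] at ha ⊢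
  rw [degreeOf_mul_eq (left_ne_zero_of_mul hy) (right_ne_zero_of_mul hy)] at ha
  omega

lemma X_sub_ne_zero [Nontrivial K] {a : σ} {g : MvPolynomial σ K} (hg : a ∉ g.vars) :
    X a - g ≠ 0 := by
  intro h0
  rw [← sub_eq_zero.1 h0] at hg
  simp at hg

lemma isLinearFactorRetraction_aeval_update [IsDomain K] [DecidableEq σ] {a : σ}
    {g q : MvPolynomial σ K} (hg : a ∉ g.vars) (hq : a ∉ q.vars) (hq0 : q ≠ 0) :
    IsLinearFactorRetraction (aeval (Function.update X a g) : MvPolynomial σ K →ₐ[K] _).toRingHom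
      (X a - g) q where
  map_self := by
    change aeval (Function.update X a g) (X a - g) = 0
    rw [map_sub, aeval_X, Function.update_self, aeval_update_of_notMem_vars hg, sub_self]
  dvd_sub := X_sub_dvd_sub_aeval_update a g
  map_eq_of_dvd _ hd := aeval_update_of_notMem_vars (notMem_vars_of_dvd hd hq0 hq) g
  ne_zero_left := X_sub_ne_zero hg
  ne_zero_right := hq0

end PolynomialRing

section TriangularProduct

variable {K : Type*} [Field K] {k : ℕ}

/-- With the last variable moved into the coefficients, `h` becomes a constant over the principal
ideal domain `K[z_n]`. -/
lemma smithReducible_of_mem_supported_last {h : MvPolynomial (Fin (k + 1)) K}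
    (hh : h ∈ supported K {Fin.last k}) (h0 : h ≠ 0) : SmithReducible h := by
  obtain ⟨e, he⟩ : ∃ e : MvPolynomial (Fin (k + 1)) K ≃ₐ[K] MvPolynomial (Fin k) (Polynomial K),
      e (X (Fin.last k)) = C Polynomial.X :=
    ⟨(renameEquiv K finSuccEquivLast).trans (optionEquivRight K (Fin k)), by
      simp⟩
  rw [supported, Set.image_singleton, Algebra.adjoin_singleton_eq_range_aeval] at hh
  obtain ⟨p, rfl : Polynomial.aeval (X (Fin.last k)) p = h⟩ := hh
  have hep : e (Polynomial.aeval (X (Fin.last k)) p) = C p := by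
    rw [← AlgEquiv.coe_toAlgHom, ← Polynomial.aeval_algHom_apply, AlgEquiv.coe_toAlgHom, he]
    have hC := Polynomial.aeval_algebraMap_apply (MvPolynomial (Fin k) (Polynomial K))
      (Polynomial.X : Polynomial K) p
    rwa [Polynomial.aeval_X_left_apply] at hC
  have hp : p ≠ 0 := by
    rintro rfl
    simp at h0
  refine .of_ringEquiv e.toRingEquiv ?_
  have hC : SmithReducible (C p : MvPolynomial (Fin k) (Polynomial K)) :=
    smithReducible_C ((idempotentsSplit_mvPolynomial K (k + 1)).of_ringEquiv e.toRingEquiv) hp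
  exact hep ▸ hC

lemma prod_X_sub_mul_mem_supported {f : Fin (k + 1) → MvPolynomial (Fin (k + 1)) K}
    {h : MvPolynomial (Fin (k + 1)) K} (hh : h ∈ supported K {Fin.last k})
    {T : Finset (Fin (k + 1))} (hf : ∀ t ∈ T, f t ∈ supported K (Set.Ioi t)) {a : Fin (k + 1)}
    (ha : a ≠ Fin.last k) (haT : ∀ t ∈ T, a < t) :
    (∏ t ∈ T, (X t - f t)) * h ∈ supported K (Set.Ioi a) := by
  refine mul_mem (prod_mem fun t ht => sub_mem (X_mem_supported.2 (haT t ht)) ?_) ?_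
  · exact supported_mono (Set.Ioi_subset_Ioi (haT t ht).le) (hf t ht)
  · refine supported_mono (Set.singleton_subset_iff.2 (Set.mem_Ioi.2 ?_)) hh
    exact Fin.lt_last_iff_ne_last.2 ha

theorem smithReducible_prod_X_sub_mul {f : Fin (k + 1) → MvPolynomial (Fin (k + 1)) K}
    {h : MvPolynomial (Fin (k + 1)) K} (hh : h ∈ supported K {Fin.last k}) (h0 : h ≠ 0)
    {T : Finset (Fin (k + 1))} (hT : Fin.last k ∉ T)
    (hf : ∀ t ∈ T, f t ∈ supported K (Set.Ioi t)) :
    SmithReducible ((∏ t ∈ T, (X t - f t)) * h) := by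
  have hvars {a : Fin (k + 1)} {x : MvPolynomial (Fin (k + 1)) K}
      (hx : x ∈ supported K (Set.Ioi a)) : a ∉ x.vars :=
    fun hax => lt_irrefl a (mem_supported.1 hx hax)
  induction T using Finset.induction_on_min with
  | empty => simpa using smithReducible_of_mem_supported_last hh h0
  | insert a T haT ih =>
    rw [Finset.mem_insert, not_or] at hT
    rw [Finset.forall_mem_insert] at hf
    rw [Finset.prod_insert fun ha => lt_irrefl a (haT a ha), mul_assoc]
    refine .mul (idempotentsSplit_mvPolynomial K (k + 1))
      (isLinearFactorRetraction_aeval_update (hvars hf.1)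
        (hvars (prod_X_sub_mul_mem_supported hh hf.2 (Ne.symm hT.1) haT)) ?_) (ih hT.2 hf.2)
    exact mul_ne_zero
      (Finset.prod_ne_zero_iff.2 fun t ht => X_sub_ne_zero (hvars (hf.2 t ht))) h0

end TriangularProduct

section Rectangular

variable {A : Type*} [CommRing A] {l m r k : ℕ} {F : Matrix (Fin l) (Fin m) A} {d : A}

lemma span_minorsSet (F : Matrix (Fin l) (Fin m) A) (k : ℕ) :
    Ideal.span (minorsSet F k) = minorIdeal F k := by
  refine le_antisymm (Ideal.span_le.2 ?_) (minorIdeal_le fun f g => ?_)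
  · rintro _ ⟨f, g, rfl⟩
    exact det_submatrix_mem_minorIdeal F f g
  · by_cases hf : Function.Injective f
    · by_cases hg : Function.Injective g
      · exact Ideal.subset_span ⟨⟨f, hf⟩, ⟨g, hg⟩, rfl⟩
      · obtain ⟨i, j, hij, hne⟩ := Function.not_injective_iff.1 hg
        rw [det_zero_of_column_eq hne fun x => by simp [hij]]
        exact zero_mem _
    · obtain ⟨i, j, hij, hne⟩ := Function.not_injective_iff.1 hf
      rw [det_zero_of_row_eq hne (by ext x; simp [hij])]
      exact zero_mem _

lemma isGcdMinors_of_minorIdeal_eq_span (h : minorIdeal F k = Ideal.span {d}) :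
    IsGcdMinors F k d := by
  rw [← span_minorsSet] at h
  refine ⟨fun p hp => ?_, fun e he => ?_⟩
  · rw [← Ideal.mem_span_singleton, ← h]
    exact Ideal.subset_span hp
  · rw [← Ideal.span_singleton_le_span_singleton, ← h, Ideal.span_le]
    exact fun p hp => Ideal.mem_span_singleton.2 (he p hp)

lemma minorIdeal_le_span_of_isGcdMinors (h : IsGcdMinors F k d) :
    minorIdeal F k ≤ Ideal.span {d} := by
  rw [← span_minorsSet, Ideal.span_le]
  exact fun p hp => Ideal.mem_span_singleton.2 (h.1 p hp)

lemma span_mul_reducedIdeal (h : IsGcdMinors F k d) :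
    Ideal.span {d} * reducedIdeal F k d = minorIdeal F k := by
  rw [reducedIdeal, Ideal.span_mul_span', Set.singleton_mul, ← span_minorsSet]
  congr 1
  ext p
  constructor
  · rintro ⟨v, hv, rfl⟩
    exact hv
  · intro hp
    obtain ⟨v, rfl⟩ := h.1 p hp
    exact ⟨v, hp, rfl⟩

lemma minorIdeal_eq_span_of_isGcdMinors (h : IsGcdMinors F k d)
    (hF : ∃ e, minorIdeal F k = Ideal.span {e}) : minorIdeal F k = Ideal.span {d} := by
  obtain ⟨e, he⟩ := hF
  refine le_antisymm (minorIdeal_le_span_of_isGcdMinors h) ?_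
  rw [he, Ideal.span_singleton_le_span_singleton]
  exact h.2 e (isGcdMinors_of_minorIdeal_eq_span he).1

lemma exists_minorIdeal_eq_span_of_jkUnit (h : JkUnit F k) :
    ∃ d, minorIdeal F k = Ideal.span {d} := by
  obtain ⟨d, hd, htop⟩ := h
  exact ⟨d, by rw [← span_mul_reducedIdeal hd, htop, Ideal.mul_top]⟩

lemma jkUnit_of_minorIdeal_eq_span [IsDomain A] (h : minorIdeal F k = Ideal.span {d})
    (hd : d ≠ 0) : JkUnit F k := by
  have hgcd := isGcdMinors_of_minorIdeal_eq_span h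
  refine ⟨d, hgcd, ?_⟩
  have hmul := span_mul_reducedIdeal hgcd
  rw [h] at hmul
  exact Ideal.span_singleton_mul_right_injective hd (hmul.trans (Ideal.mul_top _).symm)

lemma minorIdeal_ne_bot_of_hasRank (h : HasRank F r) (hk : k ≤ r) : minorIdeal F k ≠ ⊥ := by
  obtain ⟨⟨p, hp, hp0⟩, -⟩ := h
  refine Submodule.ne_bot_iff _ |>.2 ⟨p, minorIdeal_antitone F hk ?_, hp0⟩
  rw [← span_minorsSet]
  exact Ideal.subset_span hp

lemma minorIdeal_succ_eq_bot_of_hasRank (h : HasRank F r) : minorIdeal F (r + 1) = ⊥ := by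
  rw [← span_minorsSet, Ideal.span_eq_bot]
  exact h.2

lemma le_of_hasRank (h : HasRank F r) : r ≤ l ∧ r ≤ m := by
  obtain ⟨⟨_, ⟨f, g, -⟩, -⟩, -⟩ := h
  simpa using And.intro (Fintype.card_le_of_embedding f) (Fintype.card_le_of_embedding g)

lemma ne_zero_of_isGcdMinors_of_hasRank (hd : IsGcdMinors F r d) (hF : HasRank F r) : d ≠ 0 := by
  rintro rfl
  refine minorIdeal_ne_bot_of_hasRank hF le_rfl (eq_bot_iff.2 ?_)
  exact (minorIdeal_le_span_of_isGcdMinors hd).trans_eq Ideal.span_singleton_zero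

lemma principalMinorIdeals_of_jkUnit (hF : HasRank F r) (hJ : ∀ k, 1 ≤ k → k ≤ r → JkUnit F k) :
    PrincipalMinorIdeals F := by
  intro k
  rcases Nat.lt_or_ge r k with hk | hk
  · refine ⟨0, ?_⟩
    rw [Ideal.span_singleton_zero, eq_bot_iff, ← minorIdeal_succ_eq_bot_of_hasRank hF]
    exact minorIdeal_antitone F hk
  · rcases k.eq_zero_or_pos with rfl | hk0
    · exact ⟨1, by rw [minorIdeal_zero, Ideal.span_singleton_one]⟩
    · exact exists_minorIdeal_eq_span_of_jkUnit (hJ k hk0 hk)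

lemma prod_Iic_eq_prod_castLE {M : Type*} [CommMonoid M] (Φ : Fin l → M) (i : Fin l) :
    ∏ j ∈ Finset.Iic i, Φ j = ∏ j : Fin (i + 1), Φ (j.castLE i.2) := by
  have hprod := Fin.prod_Iic_castLE i.2 Φ (Fin.last i)
  rwa [← Fin.top_eq_last, Finset.Iic_top] at hprod

lemma prod_Iic_mem_minorIdeal_smithDiag (Φ : Fin l → A) (i : Fin l) (hi : (i : ℕ) < m) :
    ∏ j ∈ Finset.Iic i, Φ j ∈ minorIdeal (smithDiag Φ : Matrix (Fin l) (Fin m) A) (i + 1) := by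
  have hdiag : (smithDiag Φ : Matrix (Fin l) (Fin m) A).submatrix (Fin.castLE i.2)
      (Fin.castLE hi) = diagonal fun j => Φ (j.castLE i.2) := by
    ext a b
    simp [smithDiag, diagonal_apply, Fin.ext_iff]
  rw [prod_Iic_eq_prod_castLE, ← det_diagonal, ← hdiag]
  exact det_submatrix_mem_minorIdeal _ _ _

theorem jkUnit_of_smithEquivAt [IsDomain A] (hF : HasRank F r) (hS : SmithEquivAt F r)
    (hk : 1 ≤ k) (hkr : k ≤ r) : JkUnit F k := by
  obtain ⟨Φ, hgcd, -, hequiv⟩ := hS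
  replace hequiv : UnimodEquiv F (smithDiag Φ) := hequiv
  obtain ⟨i, rfl⟩ : ∃ i, k = i + 1 := ⟨k - 1, by omega⟩
  obtain ⟨hrl, hrm⟩ := le_of_hasRank hF
  have hspan : minorIdeal F (i + 1) =
      Ideal.span {∏ j ∈ Finset.Iic (⟨i, by omega⟩ : Fin l), Φ j} := by
    refine le_antisymm (minorIdeal_le_span_of_isGcdMinors (hgcd ⟨i, by omega⟩ hkr)) ?_
    rw [hequiv.minorIdeal_eq, Ideal.span_singleton_le_iff_mem]
    exact prod_Iic_mem_minorIdeal_smithDiag Φ ⟨i, by omega⟩ (by simp; omega)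
  refine jkUnit_of_minorIdeal_eq_span hspan fun h0 => minorIdeal_ne_bot_of_hasRank hF hkr ?_
  rw [hspan, h0, Ideal.span_singleton_zero]

lemma IdempotentsSplit.exists_unimodEquiv_fromBlocks_zero [IsDomain A] (hA : IdempotentsSplit A)
    (hFd : minorIdeal F r = Ideal.span {d}) (hd : d ≠ 0) (hF : minorIdeal F (r + 1) = ⊥) :
    ∃ (s s' : ℕ) (hs : r + s = l) (hs' : r + s' = m) (G : Matrix (Fin r) (Fin r) A),
      UnimodEquiv (F.submatrix (blockEquiv hs) (blockEquiv hs'))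
        (Matrix.fromBlocks G 0 0 (0 : Matrix (Fin s) (Fin s') A)) ∧
      ∀ k, minorIdeal G k = minorIdeal F k := by
  obtain ⟨s, hs, U, H, hU, hUH⟩ := hA.exists_mul_eq_fromRows_zero hFd hd hF
  have hFH : UnimodEquiv (F.submatrix (blockEquiv hs) (Equiv.refl _)) (fromRows H 0) :=
    hUH ▸ (UnimodEquiv.mul_left hU F).symm.submatrix _ (Equiv.refl _)
  have hH (k : ℕ) : minorIdeal H k = minorIdeal F k := by
    rw [← minorIdeal_fromRows_zero (ν := Fin s), ← hFH.minorIdeal_eq, minorIdeal_submatrix_equiv]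
  obtain ⟨s', hs', V, G, hV, hVG⟩ := hA.exists_mul_eq_fromCols_zero ((hH r).trans hFd) hd
    ((hH (r + 1)).trans hF)
  have hHV : UnimodEquiv (fromRows H (0 : Matrix (Fin s) _ A)) (fromRows (H * V) 0) := by
    have hmul := (UnimodEquiv.mul_right hV (fromRows H (0 : Matrix (Fin s) _ A))).symm
    rwa [fromRows_mul, Matrix.zero_mul] at hmul
  have hblocks : (fromRows (H * V) (0 : Matrix (Fin s) _ A)).submatrix (Equiv.refl _)
      (blockEquiv hs') = Matrix.fromBlocks G 0 0 0 := by
    rw [← fromRows_fromCols_eq_fromBlocks, ← hVG, fromCols_zero]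
    ext (i | i) j <;> rfl
  refine ⟨s, s', hs, hs', G, ?_, fun k => ?_⟩
  · have hsub := (hFH.trans hHV).submatrix (Equiv.refl _) (blockEquiv hs')
    rwa [hblocks] at hsub
  · rw [← hH, ← (UnimodEquiv.mul_right hV H).minorIdeal_eq,
      ← minorIdeal_fromCols_zero (ν := Fin s'), ← hVG]
    exact minorIdeal_submatrix_equiv _ (Equiv.refl _) _ k

lemma smithDiag_submatrix_blockEquiv {s s' : ℕ} (hs : r + s = l) (hs' : r + s' = m) (Φ : ℕ → A) :
    (smithDiag fun i : Fin l => if (i : ℕ) < r then Φ i else 0).submatrix (blockEquiv hs)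
      (blockEquiv hs') = Matrix.fromBlocks (diagonal fun i : Fin r => Φ i) 0 0 0 := by
  ext (i | i) (j | j)
  · simp [smithDiag, blockEquiv, diagonal_apply, Fin.ext_iff]
  · have hij : (i : ℕ) ≠ r + j := by omega
    simp [smithDiag, blockEquiv, hij]
  · simp [smithDiag, blockEquiv]
  · simp [smithDiag, blockEquiv]

theorem smithEquivAt_of_smithReducible [IsDomain A] (hA : IdempotentsSplit A) (hF : HasRank F r)
    (hFp : PrincipalMinorIdeals F) (hd : IsGcdMinors F r d) (hdred : SmithReducible d) :
    SmithEquivAt F r := by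
  have hFd := minorIdeal_eq_span_of_isGcdMinors hd (hFp r)
  obtain ⟨s, s', hs, hs', G, hFG, hG⟩ := hA.exists_unimodEquiv_fromBlocks_zero hFd
    (ne_zero_of_isGcdMinors_of_hasRank hd hF) (minorIdeal_succ_eq_bot_of_hasRank hF)
  obtain ⟨Φ, hGΦ, hΦ⟩ := hdred (fun k => by rw [hG]; exact hFp k) <| by
    rw [← Ideal.span_singleton_le_span_singleton, ← minorIdeal_eq_span_det, hG, hFd]
  have hFΦ := hFG.trans (hGΦ.fromBlocks (.refl 0))
  rw [← smithDiag_submatrix_blockEquiv hs hs'] at hFΦ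
  replace hFΦ := hFΦ.of_submatrix
  simp only [submatrix_submatrix, Equiv.self_comp_symm, submatrix_id_id] at hFΦ
  refine ⟨_, fun i hi => ?_, fun i hi => if_neg hi.not_gt, hFΦ⟩
  refine isGcdMinors_of_minorIdeal_eq_span ?_
  rw [← hG, hΦ _ hi, prod_Iic_eq_prod_castLE, ← Fin.prod_univ_eq_prod_range]
  congr 2
  refine Finset.prod_congr rfl fun j _ => (if_pos ?_).symm
  simp only [Fin.val_castLE]
  omega

end Rectangular

end SmithForm

theorem statement7_general {K : Type*} [Field K] {k l m r : ℕ} {T : Finset (Fin (k + 1))}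
    (hT : Fin.last k ∉ T) {f : Fin (k + 1) → MvPolynomial (Fin (k + 1)) K}
    (hf : ∀ t ∈ T, f t ∈ supported K (Set.Ioi t)) {h : MvPolynomial (Fin (k + 1)) K}
    (hh : h ∈ supported K {Fin.last k}) {F : Matrix (Fin l) (Fin m) (MvPolynomial (Fin (k + 1)) K)}
    (hF : HasRank F r) (hd : IsGcdMinors F r ((∏ t ∈ T, (X t - f t)) * h)) :
    SmithEquivAt F r ↔ ∀ j : ℕ, 1 ≤ j → j ≤ r → JkUnit F j := by
  have hsplit := SmithForm.idempotentsSplit_mvPolynomial K (k + 1)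
  have hh0 : h ≠ 0 := right_ne_zero_of_mul (SmithForm.ne_zero_of_isGcdMinors_of_hasRank hd hF)
  have hred := SmithForm.smithReducible_prod_X_sub_mul hh hh0 hT hf
  exact ⟨fun hS j hj hjr => SmithForm.jkUnit_of_smithEquivAt hF hS hj hjr, fun hJ =>
    SmithForm.smithEquivAt_of_smithReducible hsplit hF
      (SmithForm.principalMinorIdeals_of_jkUnit hF hJ) hd hred⟩

/-- Here `z_i` is `X ⟨i-1⟩`; the product `(z_1-f_1)⋯(z_{n-1}-f_{n-1})` is written
as a product over the indices `t : Fin n` with `(t : ℕ) < n - 1`. -/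
theorem statement7 {K : Type*} [Field K] (n : ℕ) (hn : 2 ≤ n) (l m r : ℕ) (hlm : l < m)
    (hr1 : 1 ≤ r) (hrl : r ≤ l)
    (f : ℕ → MvPolynomial (Fin n) K)
    (hfsup : ∀ i : ℕ, 1 ≤ i → i ≤ n - 1 →
      f i ∈ MvPolynomial.supported K {t : Fin n | i ≤ (t : ℕ)})
    (h : MvPolynomial (Fin n) K)
    (hh : h ∈ MvPolynomial.supported K {(⟨n - 1, by omega⟩ : Fin n)})
    (F : Matrix (Fin l) (Fin m) (MvPolynomial (Fin n) K))
    (hrank : HasRank F r)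
    (hd : IsGcdMinors F r ((∏ t ∈ Finset.univ.filter (fun t : Fin n => (t : ℕ) < n - 1),
      (MvPolynomial.X t - f ((t : ℕ) + 1))) * h)) :
    SmithEquivAt F r ↔ ∀ k : ℕ, 1 ≤ k → k ≤ r → JkUnit F k := by
  obtain ⟨k, rfl⟩ : ∃ k, n = k + 1 := ⟨n - 1, by omega⟩
  exact statement7_general (by simp)
    (fun t ht => hfsup (t + 1) (by omega) (Finset.mem_filter.1 ht).2) hh hrank hd
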